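/- Let μ be a Borel probability measure on ℝ² with upper uniform entropy dimension α. Then the set {π ∈ G(2,1) : dim_P πμ < min(1, α)} is at most countable. -/

import Mathlib

/-!
Conventions. Entropies are handled through the log-masses `lgA P B ω` of the atoms of finite-valued
variables `B`, and averages over scales through a Banach limit `lam U` (an ultrafilter limit of
Cesàro means), which is shift invariant.

*Reduction.* Suppose the projection of `μ` in direction `θ` has packing dimension below a rational
`β < min 1 a`, where `a` is admissible in the definition of the upper uniform entropy dimension. Then
the projection charges a closed set `K` which at every small scale `2⁻ⁿ` is covered by `2 ^ (n β)`
intervals (`exists_cov`), and by dyadic density (`exists_cell`) there is a dyadic cell `D` such that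
most of `μ|_D` projects into `K`. There are countably many pairs `(β, D)`, so both may be fixed
(`cell_countable`). Let `P` be the law of a `μ|_D`-random point with an independent uniform label
`g < G`, `G` odd, and translate the projection by `g / G`. The translated projection is close to any
given dyadic grid with probability at most `1 / G` (`NM_le`). Let `X k` be the generation-`k` dyadic
cell of the point together with its label and let `Y j` be the `j`-th dyadic approximation of the
translated projection. The entropy of `Y n` is at most about `n β` (`eL_of_cov`), whereas along a
suitable ultrafilter the conditional entropy of `X (k + l)` given `X k` is at least about `l a` for
most points and scales (`extract`, `lam_badX_le`).

*Lower bound.* Over `l` scales, the projection therefore has on average less conditional entropy than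
`min 1 a` allows (`IsSys.mean_deficit`). Two quantities measure this given `(X k, Y (k + p))`: `D1`,
the remaining entropy of `X (k + l)`, and `D2`, the defect from the maximum of the entropy of the
next `V` digits of `Y`. The entropy of the next digit of `Y` given `X k` is monotone in the lag
(`fq`), hence nearly constant at long lags, and the forward averages of the deficit over suitable
windows are almost invariant (`exists_stable_window`). Together these show that the mean of
`D1 * D2` stays bounded below, uniformly in `p` (`IsSys.D1_mul_D2_lower`).

*Upper bound.* Let `θ0`, `θ1` be two such directions with `|θ1 - θ0|` about `2 ^ (-Q)` and `Q` large.
Inside a cell of side `2⁻ᵏ` the two projections differ by a displacement `c` which varies by about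
`2 ^ (-k - Q)`. By a monotonicity argument (`gq`, `IsSys.exists_gap`), beyond some lag the
conditional law of the next digits of either projection hardly depends on further digits of `X`. On
a typical atom there are two cases (`pair_local`). If two typical points have well separated
displacements, the law of the digits of the `θ0`-projection is almost invariant under a translation,
so it is spread out (`translate_bound`, `pair_cells`) and `D2` is small. Otherwise the displacement
is nearly constant, so that `X (k + l)` is determined up to boundedly many values and `D1` is small.
Thus the mean of `D1 * D2` is small (`pair_lam`).

The two bounds contradict each other once `θ0` and `θ1` are close enough, where closeness depends
only on the integer parameters `(l, V, q)` at which the lower bound and the stabilization hold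
(`GoodAt`). For each value of the parameters the directions are therefore uniformly separated
(`good_pair`), and there are countably many of them in all (`core`).
-/

open MeasureTheory Set Filter
open scoped ENNReal Classical

noncomputable section

/-- The half-open dyadic cell of generation `k` containing `x`. -/
def dcell {d : ℕ} (k : ℕ) (x : Fin d → ℝ) : Set (Fin d → ℝ) :=
  {y | ∀ i, ⌊(2 : ℝ) ^ k * y i⌋ = ⌊(2 : ℝ) ^ k * x i⌋}

/-- The homothety mapping the generation-`k` dyadic cell of `x` onto `[0,1)^d`. -/
def dscale {d : ℕ} (k : ℕ) (x : Fin d → ℝ) : (Fin d → ℝ) → (Fin d → ℝ) :=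
  fun y i => (2 : ℝ) ^ k * y i - ⌊(2 : ℝ) ^ k * x i⌋

/-- The component `μ^{D_k(x)}`: normalized restriction of `μ` to the generation-`k` dyadic
cell of `x`, rescaled to the unit cube. -/
def component {d : ℕ} (μ : Measure (Fin d → ℝ)) (k : ℕ) (x : Fin d → ℝ) :
    Measure (Fin d → ℝ) :=
  (μ (dcell k x))⁻¹ • (μ.restrict (dcell k x)).map (dscale k x)

/-- The summand `-(m · log₂ m)` of base-2 Shannon entropy. -/
def negMulLog2 (m : ℝ≥0∞) : ℝ := -(m.toReal * Real.logb 2 m.toReal)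

/-- Base-2 Shannon entropy of a measure on `ℝ^d` with respect to the generation-`k`
dyadic partition. -/
def entD {d : ℕ} (μ : Measure (Fin d → ℝ)) (k : ℕ) : ℝ :=
  ∑' j : Fin d → ℤ, negMulLog2 (μ {y | ∀ i, ⌊(2 : ℝ) ^ k * y i⌋ = j i})

/-- The set of points `x` for which at least `(1-ε)n` of the scales `1 ≤ k ≤ n` have
component entropy `H(μ^{D_k(x)}, D_l)` within `lε` of `la`. -/
def uuedGood {d : ℕ} (μ : Measure (Fin d → ℝ)) (a ε : ℝ) (l n : ℕ) : Set (Fin d → ℝ) :=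
  {x | (n : ℝ) * (1 - ε) ≤
    (((Finset.Icc 1 n).filter fun k =>
      |entD (component μ k x) l - (l : ℝ) * a| ≤ (l : ℝ) * ε).card : ℝ)}

/-- `μ` has upper uniform entropy dimension `α`. -/
def HasUUED {d : ℕ} (μ : Measure (Fin d → ℝ)) (α : ℝ) : Prop :=
  α = sSup {a : ℝ | 0 ≤ a ∧
    Filter.liminf (fun ε : ℝ =>
        Filter.limsup (fun l : ℕ =>
            Filter.limsup (fun n : ℕ => (μ (uuedGood μ a ε l n)).toReal) Filter.atTop)
          Filter.atTop)
      (nhdsWithin 0 (Set.Ioi 0)) = 1}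

/-- The smallest number of sets of diameter at most `r` needed to cover `A`
(`⊤` if no finite cover exists). -/
def coverNumber {X : Type*} [PseudoMetricSpace X] (A : Set X) (r : ℝ) : ℝ≥0∞ :=
  ⨅ (S : Finset (Set X)) (_ : A ⊆ ⋃ s ∈ S, s)
    (_ : ∀ s ∈ S, EMetric.diam s ≤ ENNReal.ofReal r), (S.card : ℝ≥0∞)

/-- The upper box (Minkowski) dimension, along dyadic scales. -/
def upperBoxDim {X : Type*} [PseudoMetricSpace X] (A : Set X) : ℝ :=
  Filter.limsup (fun n : ℕ =>
    Real.logb 2 ((coverNumber A ((2 : ℝ) ^ (-(n : ℝ)))).toReal) / (n : ℝ)) Filter.atTop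

/-- The packing dimension of a set, via countable covers by bounded sets of controlled upper
box dimension. -/
def packingDimSet {X : Type*} [PseudoMetricSpace X] (A : Set X) : ℝ :=
  sInf {s : ℝ | 0 ≤ s ∧ ∃ F : ℕ → Set X, A ⊆ (⋃ k, F k) ∧
    ∀ k, Bornology.IsBounded (F k) ∧ upperBoxDim (F k) ≤ s}

/-- The (lower) packing dimension of a measure:
`inf {dim_P A : A Borel, μ(A) > 0}`. -/
def packingDimMeas {X : Type*} [PseudoMetricSpace X] [MeasurableSpace X]
    (μ : Measure X) : ℝ :=
  sInf {s : ℝ | ∃ A : Set X, MeasurableSet A ∧ 0 < μ A ∧ packingDimSet A = s}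

/-- The orthogonal projection of the plane onto the line of angle `θ`, identified with `ℝ`. -/
def projDir (θ : ℝ) (x : Fin 2 → ℝ) : ℝ := x 0 * Real.cos θ + x 1 * Real.sin θ

set_option linter.unusedSectionVars false
set_option linter.unusedVariables false

/-! ### Finite-valued variables and conditional entropy -/

namespace UUED

variable {Ω : Type*} {α β γ : Type*}

/-- `Dep A B`: the variable `A` is a function of the variable `B`. -/
def Dep (A : Ω → α) (B : Ω → β) : Prop := ∀ ω ω', B ω = B ω' → A ω = A ω'

theorem Dep.refl (A : Ω → α) : Dep A A := fun _ _ h => h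

theorem Dep.trans {A : Ω → α} {B : Ω → β} {C : Ω → γ} (h : Dep A B) (h' : Dep B C) : Dep A C :=
  fun ω ω' e => h ω ω' (h' ω ω' e)

theorem Dep.const (a : α) (B : Ω → β) : Dep (fun _ : Ω => a) B := fun _ _ _ => rfl

theorem Dep.comp {A : Ω → α} {B : Ω → β} (h : Dep A B) (F : α → γ) : Dep (fun ω => F (A ω)) B :=
  fun ω ω' e => congrArg F (h ω ω' e)

theorem Dep.comp2 {A : Ω → α} {B : Ω → β} {A' : Ω → γ} {δ : Type*} (h : Dep A B) (h' : Dep A' B)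
    (F : α → γ → δ) : Dep (fun ω => F (A ω) (A' ω)) B :=
  fun ω ω' e => by simp only [h ω ω' e, h' ω ω' e]

theorem Dep.pair {A : Ω → α} {B : Ω → β} {A' : Ω → γ} (h : Dep A B) (h' : Dep A' B) :
    Dep (fun ω => (A ω, A' ω)) B := h.comp2 h' Prod.mk

theorem Dep.fst (A : Ω → α) (B : Ω → β) : Dep A (fun ω => (A ω, B ω)) :=
  fun _ _ e => (Prod.ext_iff.1 e).1

theorem Dep.snd (A : Ω → α) (B : Ω → β) : Dep B (fun ω => (A ω, B ω)) :=
  fun _ _ e => (Prod.ext_iff.1 e).2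

theorem Dep.ind {B : Ω → β} {p : Ω → Prop} (h : Dep p B) :
    Dep (fun ω => if p ω then (1 : ℝ) else 0) B := by
  intro ω ω' e
  have := h ω ω' e
  simp only [this]

variable [MeasurableSpace Ω]

/-- A variable with finite range and measurable fibres. -/
structure FM (A : Ω → α) : Prop where
  fin : (range A).Finite
  meas : ∀ a, MeasurableSet (A ⁻¹' {a})

theorem FM.preimage {A : Ω → α} (hA : FM A) (s : Set α) : MeasurableSet (A ⁻¹' s) := by
  have : A ⁻¹' s = ⋃ a ∈ s ∩ range A, A ⁻¹' {a} := by
    ext ω; simp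
  rw [this]
  exact MeasurableSet.biUnion (hA.fin.subset inter_subset_right).countable (fun a _ => hA.meas a)

theorem FM.dep {A : Ω → α} {B : Ω → β} (hB : FM B) (h : Dep A B) : FM A := by
  have key : ∀ b, ∃ S : Set β, A ⁻¹' {b} = B ⁻¹' S := by
    intro b
    refine ⟨B '' (A ⁻¹' {b}), ?_⟩
    ext ω
    constructor
    · intro hω; exact ⟨ω, hω, rfl⟩
    · rintro ⟨ω', hω', e⟩
      exact (h _ _ e).symm.trans hω'
  refine ⟨?_, fun a => ?_⟩
  · rcases isEmpty_or_nonempty Ω with hΩ | hΩ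
    · rw [range_eq_empty]; exact finite_empty
    have : range A ⊆ (fun b => A (Function.invFun B b)) '' range B := by
      rintro _ ⟨ω, rfl⟩
      refine ⟨B ω, ⟨ω, rfl⟩, ?_⟩
      exact h _ _ (Function.invFun_eq ⟨ω, rfl⟩)
    exact (hB.fin.image _).subset this
  · obtain ⟨S, hS⟩ := key a
    rw [hS]; exact hB.preimage S

theorem FM.pair {A : Ω → α} {B : Ω → β} (hA : FM A) (hB : FM B) : FM (fun ω => (A ω, B ω)) := by
  refine ⟨(hA.fin.prod hB.fin).subset ?_, fun ⟨a, b⟩ => ?_⟩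
  · rintro _ ⟨ω, rfl⟩; exact ⟨⟨ω, rfl⟩, ⟨ω, rfl⟩⟩
  · have : (fun ω => (A ω, B ω)) ⁻¹' {(a, b)} = A ⁻¹' {a} ∩ B ⁻¹' {b} := by
      ext ω; simp
    rw [this]; exact (hA.meas a).inter (hB.meas b)

theorem FM.const (a : α) : FM (fun _ : Ω => a) := by
  refine ⟨(finite_singleton a).subset (by rintro _ ⟨ω, rfl⟩; rfl), fun b => ?_⟩
  by_cases h : a = b <;> simp [h]

theorem FM.comp2 {δ : Type*} {A : Ω → α} {B : Ω → β} (hA : FM A) (hB : FM B) (F : α → β → δ) :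
    FM (fun ω => F (A ω) (B ω)) :=
  (hA.pair hB).dep ((Dep.fst A B).comp2 (Dep.snd A B) F)

theorem FM.comp {A : Ω → α} (hA : FM A) (F : α → γ) : FM (fun ω => F (A ω)) :=
  hA.dep ((Dep.refl A).comp F)

theorem FM.add {f g : Ω → ℝ} (hf : FM f) (hg : FM g) : FM (fun ω => f ω + g ω) := hf.comp2 hg _
theorem FM.sub {f g : Ω → ℝ} (hf : FM f) (hg : FM g) : FM (fun ω => f ω - g ω) := hf.comp2 hg _
theorem FM.mul {f g : Ω → ℝ} (hf : FM f) (hg : FM g) : FM (fun ω => f ω * g ω) := hf.comp2 hg _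
theorem FM.neg {f : Ω → ℝ} (hf : FM f) : FM (fun ω => - f ω) := hf.comp _
theorem FM.cmul {f : Ω → ℝ} (hf : FM f) (c : ℝ) : FM (fun ω => c * f ω) := hf.comp _
theorem FM.divc {f : Ω → ℝ} (hf : FM f) (c : ℝ) : FM (fun ω => f ω / c) := hf.comp (fun x => x / c)
theorem FM.sq {f : Ω → ℝ} (hf : FM f) : FM (fun ω => f ω ^ 2) := hf.comp (fun x => x ^ 2)

theorem FM.sum {ι : Type*} (s : Finset ι) {f : ι → Ω → ℝ} (hf : ∀ i ∈ s, FM (f i)) :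
    FM (fun ω => ∑ i ∈ s, f i ω) := by
  induction s using Finset.induction_on with
  | empty => simpa using FM.const (0 : ℝ)
  | insert i s hi ih =>
    simp only [Finset.sum_insert hi]
    exact (hf i (by simp)).add (ih fun j hj => hf j (by simp [hj]))

theorem FM.measurable {f : Ω → ℝ} (hf : FM f) : Measurable f := fun s _ => hf.preimage s

theorem FM.bdd {f : Ω → ℝ} (hf : FM f) : ∃ C, ∀ ω, |f ω| ≤ C := by
  have h := (hf.comp (fun x => |x|)).fin
  obtain ⟨C, hC⟩ := h.bddAbove
  exact ⟨C, fun ω => hC ⟨ω, rfl⟩⟩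

variable {P : Measure Ω} [IsProbabilityMeasure P]

theorem FM.integrable {f : Ω → ℝ} (hf : FM f) : Integrable f P := by
  obtain ⟨C, hC⟩ := hf.bdd
  exact Integrable.of_bound hf.measurable.aestronglyMeasurable C
    (Eventually.of_forall fun ω => by simpa using hC ω)

/-- Sum over the fibres of a finite-valued variable. -/
theorem integral_fibres {B : Ω → β} (hB : FM B) {f : Ω → ℝ} (hf : FM f) :
    ∫ ω, f ω ∂P = ∑ b ∈ hB.fin.toFinset, ∫ ω in B ⁻¹' {b}, f ω ∂P := by
  rw [← integral_biUnion_finset]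
  · have : (⋃ b ∈ hB.fin.toFinset, B ⁻¹' {b}) = univ := by
      ext ω; simp
    rw [this, setIntegral_univ]
  · intro b _; exact hB.meas b
  · intro b _ b' _ h
    refine Disjoint.preimage B ?_
    simpa using h
  · intro b _; exact hf.integrable.integrableOn

/-- Mass of the atom of `B` through a point. -/
def pA (P : Measure Ω) (B : Ω → β) (ω : Ω) : ℝ := P.real (B ⁻¹' {B ω})

/-- Base-2 logarithm of the mass of the atom of `B` through a point. -/
def lgA (P : Measure Ω) (B : Ω → β) (ω : Ω) : ℝ := Real.logb 2 (pA P B ω)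

/-- Conditional expectation of `f` given the finite-valued variable `B` (zero on null atoms). -/
def cE (P : Measure Ω) (B : Ω → β) (f : Ω → ℝ) (ω : Ω) : ℝ :=
  (∫ x in B ⁻¹' {B ω}, f x ∂P) / pA P B ω

theorem pA_dep (B : Ω → β) : Dep (pA P B) B := by
  intro ω ω' h; simp only [pA, h]
theorem lgA_dep (B : Ω → β) : Dep (lgA P B) B := by
  intro ω ω' h; simp only [lgA, pA, h]
theorem cE_dep (B : Ω → β) (f : Ω → ℝ) : Dep (cE P B f) B := by
  intro ω ω' h; simp only [cE, pA, h]

theorem lgA_fm {B : Ω → β} (hB : FM B) : FM (lgA P B) := hB.dep (lgA_dep B)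
theorem cE_fm {B : Ω → β} (hB : FM B) (f : Ω → ℝ) : FM (cE P B f) := hB.dep (cE_dep B f)

theorem pA_nonneg (B : Ω → β) (ω : Ω) : 0 ≤ pA P B ω := measureReal_nonneg

theorem pA_le_one (B : Ω → β) (ω : Ω) : pA P B ω ≤ 1 := measureReal_le_one

theorem lgA_nonpos (B : Ω → β) (ω : Ω) : lgA P B ω ≤ 0 :=
  Real.logb_nonpos (by norm_num) (pA_nonneg B ω) (pA_le_one B ω)

theorem pA_pos_ae {B : Ω → β} (hB : FM B) : ∀ᵐ ω ∂P, 0 < pA P B ω := by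
  rw [ae_iff]
  have : {ω | ¬ 0 < pA P B ω} ⊆ ⋃ b ∈ {b ∈ range B | P (B ⁻¹' {b}) = 0}, B ⁻¹' {b} := by
    intro ω hω
    have h0 : pA P B ω = 0 := le_antisymm (not_lt.1 hω) (pA_nonneg B ω)
    simp only [mem_iUnion]
    refine ⟨B ω, ⟨⟨ω, rfl⟩, ?_⟩, rfl⟩
    exact (measureReal_eq_zero_iff (measure_ne_top _ _)).1 h0
  refine measure_mono_null this ?_
  rw [measure_biUnion_null_iff ((hB.fin.subset (fun b hb => hb.1)).countable)]
  exact fun b hb => hb.2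

theorem fibre_eq {A : Ω → α} {B : Ω → β} (h : Dep A B) (h' : Dep B A) (ω : Ω) :
    A ⁻¹' {A ω} = B ⁻¹' {B ω} := by
  ext ω'; exact ⟨fun e => h' _ _ e, fun e => h _ _ e⟩

theorem fibre_subset {A : Ω → α} {B : Ω → β} (h : Dep A B) (ω : Ω) :
    B ⁻¹' {B ω} ⊆ A ⁻¹' {A ω} := fun _ e => h _ _ e

theorem lgA_congr {A : Ω → α} {B : Ω → β} (h : Dep A B) (h' : Dep B A) : lgA P A = lgA P B := by
  funext ω; simp only [lgA, pA, fibre_eq h h' ω]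

theorem cE_congr {A : Ω → α} {B : Ω → β} (h : Dep A B) (h' : Dep B A) (f : Ω → ℝ) :
    cE P A f = cE P B f := by
  funext ω; simp only [cE, pA, fibre_eq h h' ω]

theorem pA_mono {A : Ω → α} {B : Ω → β} (h : Dep A B) (ω : Ω) : pA P B ω ≤ pA P A ω :=
  measureReal_mono (fibre_subset h ω)

theorem lgA_mono {A : Ω → α} {B : Ω → β} (hB : FM B) (h : Dep A B) :
    ∀ᵐ ω ∂P, lgA P B ω ≤ lgA P A ω := by
  filter_upwards [pA_pos_ae hB] with ω hω
  exact Real.logb_le_logb_of_le (by norm_num) hω (pA_mono h ω)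

theorem setIntegral_cE {B : Ω → β} (hB : FM B) (f : Ω → ℝ) (hf : FM f) (b : β) (w : Ω → ℝ)
    (hw : Dep w B) :
    ∫ ω in B ⁻¹' {b}, w ω * cE P B f ω ∂P = ∫ ω in B ⁻¹' {b}, w ω * f ω ∂P := by
  rcases (B ⁻¹' {b}).eq_empty_or_nonempty with h | ⟨ω0, h0⟩
  · simp [h]
  have h0' : B ω0 = b := h0
  subst h0'
  have e1 : ∫ ω in B ⁻¹' {B ω0}, w ω * cE P B f ω ∂P
      = ∫ ω in B ⁻¹' {B ω0}, w ω0 * cE P B f ω0 ∂P := by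
    refine setIntegral_congr_fun (hB.meas _) fun ω hω => ?_
    have hω' : B ω = B ω0 := hω
    simp only [hw _ _ hω', cE_dep B f _ _ hω']
  have e2 : ∫ ω in B ⁻¹' {B ω0}, w ω * f ω ∂P
      = ∫ ω in B ⁻¹' {B ω0}, w ω0 * f ω ∂P := by
    refine setIntegral_congr_fun (hB.meas _) fun ω hω => ?_
    have hω' : B ω = B ω0 := hω
    simp only [hw _ _ hω']
  rw [e1, e2, setIntegral_const, integral_const_mul]
  by_cases hp : P.real (B ⁻¹' {B ω0}) = 0
  · have : P (B ⁻¹' {B ω0}) = 0 := (measureReal_eq_zero_iff (measure_ne_top _ _)).1 hp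
    simp [hp, setIntegral_measure_zero _ this]
  · simp only [cE, pA, smul_eq_mul]
    field_simp

theorem integral_cE {B : Ω → β} (hB : FM B) {f : Ω → ℝ} (hf : FM f) {w : Ω → ℝ}
    (hw : Dep w B) : ∫ ω, w ω * cE P B f ω ∂P = ∫ ω, w ω * f ω ∂P := by
  rw [integral_fibres hB ((hB.dep hw).mul (cE_fm hB f)),
    integral_fibres hB ((hB.dep hw).mul hf)]
  exact Finset.sum_congr rfl fun b _ => setIntegral_cE hB f hf b w hw

theorem integral_cE_one {B : Ω → β} (hB : FM B) {f : Ω → ℝ} (hf : FM f) :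
    ∫ ω, cE P B f ω ∂P = ∫ ω, f ω ∂P := by
  simpa using integral_cE (P := P) hB hf (Dep.const (1 : ℝ) B)

theorem atomInd_dep (B : Ω → β) (b : β) : Dep (fun ω => if B ω = b then (1 : ℝ) else 0) B := by
  intro ω ω' h; simp only [h]

theorem integral_atomInd {B : Ω → β} (hB : FM B) (f : Ω → ℝ) (b : β) :
    ∫ ω, (if B ω = b then (1 : ℝ) else 0) * f ω ∂P = ∫ ω in B ⁻¹' {b}, f ω ∂P := by
  rw [← integral_indicator (hB.meas b)]
  congr 1; funext ω
  by_cases h : B ω = b <;> simp [indicator, h]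

/-- A weighted inequality over all nonnegative `B`-weights gives a pointwise bound on the
conditional expectation. -/
theorem cE_le_of {B : Ω → β} (hB : FM B) {f : Ω → ℝ} {c : ℝ} (hc : 0 ≤ c)
    (h : ∀ w : Ω → ℝ, (∀ ω, 0 ≤ w ω) → Dep w B → ∫ ω, w ω * f ω ∂P ≤ c * ∫ ω, w ω ∂P) (ω : Ω) :
    cE P B f ω ≤ c := by
  have h1 := h _ (fun ω' => by split_ifs <;> norm_num) (atomInd_dep B (B ω))
  rw [integral_atomInd hB f] at h1
  have h2 := integral_atomInd (P := P) hB (fun _ => (1 : ℝ)) (B ω)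
  simp only [mul_one, setIntegral_const, smul_eq_mul] at h2
  rw [h2] at h1
  unfold cE
  rcases (pA_nonneg (P := P) B ω).eq_or_lt with h0 | h0
  · rw [← h0]; simpa using hc
  · rw [div_le_iff₀ h0]; exact h1

theorem cE_nonneg_of {B : Ω → β} (hB : FM B) {f : Ω → ℝ}
    (h : ∀ w : Ω → ℝ, (∀ ω, 0 ≤ w ω) → Dep w B → 0 ≤ ∫ ω, w ω * f ω ∂P) (ω : Ω) :
    0 ≤ cE P B f ω := by
  have h1 := h _ (fun ω' => by split_ifs <;> norm_num) (atomInd_dep B (B ω))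
  rw [integral_atomInd hB f] at h1
  exact div_nonneg h1 (pA_nonneg B ω)

theorem cE_sub {B : Ω → β} {f g : Ω → ℝ} (hf : FM f) (hg : FM g) (ω : Ω) :
    cE P B (fun x => f x - g x) ω = cE P B f ω - cE P B g ω := by
  simp only [cE, integral_sub hf.integrable.integrableOn hg.integrable.integrableOn, sub_div]

theorem cE_nonneg {B : Ω → β} {f : Ω → ℝ} (hf : ∀ᵐ ω ∂P, 0 ≤ f ω) (ω : Ω) : 0 ≤ cE P B f ω :=
  div_nonneg (setIntegral_nonneg_of_ae hf) (pA_nonneg B ω)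

theorem cE_mono {B : Ω → β} {f g : Ω → ℝ} (hf : FM f) (hg : FM g)
    (h : ∀ᵐ ω ∂P, f ω ≤ g ω) (ω : Ω) : cE P B f ω ≤ cE P B g ω := by
  refine div_le_div_of_nonneg_right ?_ (pA_nonneg B ω)
  exact setIntegral_mono_ae hf.integrable.integrableOn hg.integrable.integrableOn h

/-- Pythagoras for nested conditional expectations. -/
theorem cE_pythagoras {B : Ω → β} {B' : Ω → γ} (hB : FM B) (h : Dep B' B) {f : Ω → ℝ} (hf : FM f) :
    ∫ ω, (cE P B f ω - cE P B' f ω) ^ 2 ∂P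
      = ∫ ω, cE P B f ω ^ 2 ∂P - ∫ ω, cE P B' f ω ^ 2 ∂P := by
  have hB' : FM B' := hB.dep h
  have fB := cE_fm (P := P) hB f
  have fB' := cE_fm (P := P) hB' f
  have e1 : ∫ ω, cE P B' f ω * cE P B f ω ∂P = ∫ ω, cE P B' f ω * f ω ∂P :=
    integral_cE hB hf ((cE_dep B' f).trans h)
  have e2 : ∫ ω, cE P B' f ω * cE P B' f ω ∂P = ∫ ω, cE P B' f ω * f ω ∂P :=
    integral_cE hB' hf (cE_dep B' f)
  have : ∀ ω, (cE P B f ω - cE P B' f ω) ^ 2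
      = cE P B f ω ^ 2 - 2 * (cE P B' f ω * cE P B f ω) + cE P B' f ω * cE P B' f ω := by
    intro ω; ring
  simp only [this]
  rw [integral_add ((fB.sq.sub ((fB'.mul fB).cmul 2)).integrable) (fB'.mul fB').integrable,
    integral_sub fB.sq.integrable ((fB'.mul fB).cmul 2).integrable, integral_const_mul, e1, e2]
  simp only [pow_two, e2]
  ring

/-- Gibbs' inequality, conditional and weighted: the conditional entropy of `A` given `B` is at
most the cross entropy against any sub-probability kernel `R`. -/
theorem gibbs {A : Ω → α} {B : Ω → β} (hA : FM A) (hB : FM B) {w : Ω → ℝ} (hw0 : ∀ ω, 0 ≤ w ω)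
    (hw : Dep w B) (R : α → β → ℝ) (hR0 : ∀ a b, 0 ≤ R a b)
    (hRp : ∀ᵐ ω ∂P, 0 < R (A ω) (B ω))
    (hRs : ∀ b ∈ range B, ∑ a ∈ hA.fin.toFinset, R a b ≤ 1) :
    ∫ ω, w ω * (lgA P B ω - lgA P (fun x => (A x, B x)) ω) ∂P
      ≤ ∫ ω, w ω * (- Real.logb 2 (R (A ω) (B ω))) ∂P := by
  set C : Ω → α × β := fun x => (A x, B x) with hC
  have hCf : FM C := hA.pair hB
  have wf : FM w := hB.dep hw
  have Rf : FM (fun ω => R (A ω) (B ω)) := hA.comp2 hB R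
  have lB := lgA_fm (P := P) hB
  have lC := lgA_fm (P := P) hCf
  have pB : FM (pA P B) := hB.dep (pA_dep B)
  have pC : FM (pA P C) := hCf.dep (pA_dep C)
  set ρ : Ω → ℝ := fun ω => pA P B ω * R (A ω) (B ω) / pA P C ω with hρ
  have ρf : FM ρ := (pB.mul Rf).comp2 pC (fun x y => x / y)
  -- the total mass of the weighted likelihood ratio
  have key : ∫ ω, w ω * ρ ω ∂P ≤ ∫ ω, w ω ∂P := by
    rw [integral_fibres hB (wf.mul ρf), integral_fibres hB wf]
    refine Finset.sum_le_sum fun b hb => ?_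
    have hb' : b ∈ range B := by simpa using hb
    obtain ⟨ω0, h0⟩ := hb'
    subst h0
    have hm := hB.meas (B ω0)
    have e1 : ∫ ω in B ⁻¹' {B ω0}, w ω ∂P = w ω0 * P.real (B ⁻¹' {B ω0}) := by
      rw [setIntegral_congr_fun (g := fun _ => w ω0) hm fun ω hω => hw _ _ hω]
      simp [mul_comm]
    rw [e1]
    have e2 : ∫ ω in B ⁻¹' {B ω0}, w ω * ρ ω ∂P
        = ∑ a ∈ hA.fin.toFinset, ∫ ω in A ⁻¹' {a} ∩ B ⁻¹' {B ω0}, w ω * ρ ω ∂P := by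
      have h1 := integral_fibres (P := P) hA
        (((hB.dep (atomInd_dep B (B ω0)))).mul (wf.mul ρf))
      rw [integral_atomInd hB] at h1
      rw [h1]
      refine Finset.sum_congr rfl fun a _ => ?_
      rw [← setIntegral_indicator (s := A ⁻¹' {a}) hm]
      congr 1; funext ω
      by_cases h : B ω = B ω0 <;> simp [indicator, h]
    rw [e2]
    have e3 : ∀ a ∈ hA.fin.toFinset, ∫ ω in A ⁻¹' {a} ∩ B ⁻¹' {B ω0}, w ω * ρ ω ∂P
        ≤ w ω0 * P.real (B ⁻¹' {B ω0}) * R a (B ω0) := by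
      intro a _
      have hms := (hA.meas a).inter hm
      rw [setIntegral_congr_fun (g := fun _ => w ω0 * (P.real (B ⁻¹' {B ω0}) * R a (B ω0) /
          P.real (A ⁻¹' {a} ∩ B ⁻¹' {B ω0}))) hms]
      · rw [setIntegral_const, smul_eq_mul]
        by_cases hz : P.real (A ⁻¹' {a} ∩ B ⁻¹' {B ω0}) = 0
        · rw [hz, zero_mul]
          exact mul_nonneg (mul_nonneg (hw0 _) measureReal_nonneg) (hR0 _ _)
        · apply le_of_eq; field_simp
      · rintro ω ⟨ha, hb⟩
        have ha' : A ω = a := ha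
        have hb' : B ω = B ω0 := hb
        have : C ⁻¹' {C ω} = A ⁻¹' {a} ∩ B ⁻¹' {B ω0} := by
          ext x; simp [hC, ha', hb']
        simp only [hρ, pA, hb', ha', hw _ _ hb', this]
    refine (Finset.sum_le_sum e3).trans ?_
    rw [← Finset.mul_sum]
    exact mul_le_of_le_one_right (mul_nonneg (hw0 _) measureReal_nonneg) (hRs _ ⟨ω0, rfl⟩)
  have hln : 0 < Real.log 2 := Real.log_pos (by norm_num)
  have pt : ∀ᵐ ω ∂P, w ω * (lgA P B ω - lgA P C ω) ≤
      w ω * (- Real.logb 2 (R (A ω) (B ω))) + (w ω * ρ ω - w ω) / Real.log 2 := by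
    filter_upwards [pA_pos_ae hB, pA_pos_ae hCf, hRp] with ω h1 h2 h3
    have h4 : Real.log (ρ ω) ≤ ρ ω - 1 :=
      Real.log_le_sub_one_of_pos (div_pos (mul_pos h1 h3) h2)
    have h5 : Real.log (ρ ω) = Real.log (pA P B ω) + Real.log (R (A ω) (B ω))
        - Real.log (pA P C ω) := by
      rw [hρ]
      simp only
      rw [Real.log_div (mul_pos h1 h3).ne' h2.ne', Real.log_mul h1.ne' h3.ne']
    have h6 : lgA P B ω - lgA P C ω
        ≤ - Real.logb 2 (R (A ω) (B ω)) + (ρ ω - 1) / Real.log 2 := by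
      simp only [lgA, Real.logb]
      rw [← sub_div, ← neg_div, ← add_div, div_le_div_iff_of_pos_right hln]
      linarith
    calc _ ≤ w ω * (- Real.logb 2 (R (A ω) (B ω)) + (ρ ω - 1) / Real.log 2) :=
          mul_le_mul_of_nonneg_left h6 (hw0 ω)
      _ = _ := by ring
  have lR : FM (fun ω => - Real.logb 2 (R (A ω) (B ω))) := Rf.comp (fun x => - Real.logb 2 x)
  have := integral_mono_ae (wf.mul (lB.sub lC)).integrable
    ((wf.mul lR).add (((wf.mul ρf).sub wf).divc (Real.log 2))).integrable pt
  rw [integral_add (wf.mul lR).integrable (((wf.mul ρf).sub wf).divc (Real.log 2)).integrable,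
    integral_div, integral_sub (wf.mul ρf).integrable wf.integrable] at this
  have h7 : (∫ ω, w ω * ρ ω ∂P - ∫ ω, w ω ∂P) / Real.log 2 ≤ 0 :=
    div_nonpos_of_nonpos_of_nonneg (by linarith) hln.le
  linarith

/-- Submodularity: conditioning on a finer variable decreases entropy. -/
theorem submod {A : Ω → α} {B : Ω → β} {B' : Ω → γ} (hA : FM A) (hB : FM B) (h : Dep B' B)
    {w : Ω → ℝ} (hw0 : ∀ ω, 0 ≤ w ω) (hw : Dep w B) :
    ∫ ω, w ω * (lgA P B ω - lgA P (fun x => (A x, B x)) ω) ∂P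
      ≤ ∫ ω, w ω * (lgA P B' ω - lgA P (fun x => (A x, B' x)) ω) ∂P := by
  have hΩ : Nonempty Ω := nonempty_of_isProbabilityMeasure P
  have hB' : FM B' := hB.dep h
  set R : α → β → ℝ := fun a b =>
    P.real (A ⁻¹' {a} ∩ B' ⁻¹' {B' (Function.invFun B b)}) /
      P.real (B' ⁻¹' {B' (Function.invFun B b)}) with hR
  have hRv : ∀ ω, R (A ω) (B ω) = pA P (fun x => (A x, B' x)) ω / pA P B' ω := by
    intro ω
    have : B' (Function.invFun B (B ω)) = B' ω := h _ _ (Function.invFun_eq ⟨ω, rfl⟩)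
    simp only [hR, this, pA]
    congr 2
    ext x; simp
  refine (gibbs hA hB hw0 hw R (fun a b => div_nonneg measureReal_nonneg measureReal_nonneg)
    ?_ ?_).trans (le_of_eq ?_)
  · filter_upwards [pA_pos_ae hB', pA_pos_ae (hA.pair hB')] with ω h1 h2
    rw [hRv]; exact div_pos h2 h1
  · intro b _
    rw [hR, ← Finset.sum_div]
    refine div_le_one_of_le₀ ?_ measureReal_nonneg
    rw [← measureReal_biUnion_finset]
    · refine measureReal_mono ?_
      intro x hx
      simp only [mem_iUnion] at hx
      obtain ⟨_, _, hx⟩ := hx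
      exact hx.2
    · intro a _ a' _ hne
      refine Disjoint.mono inter_subset_left inter_subset_left ?_
      exact Disjoint.preimage A (by simpa using hne)
    · intro a _; exact (hA.meas a).inter (hB'.meas _)
  · refine integral_congr_ae ?_
    filter_upwards [pA_pos_ae hB', pA_pos_ae (hA.pair hB')] with ω h1 h2
    rw [hRv, Real.logb_div h2.ne' h1.ne']
    simp only [lgA]; ring

/-- Maximal entropy: if `A` takes at most `N` values given `B`, its conditional entropy is at most
`log₂ N`. -/
theorem maxent {A : Ω → α} {B : Ω → β} (hA : FM A) (hB : FM B) (N : ℕ)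
    (hN : ∀ b, (A '' (B ⁻¹' {b})).ncard ≤ N) {w : Ω → ℝ} (hw0 : ∀ ω, 0 ≤ w ω) (hw : Dep w B) :
    ∫ ω, w ω * (lgA P B ω - lgA P (fun x => (A x, B x)) ω) ∂P
      ≤ Real.logb 2 N * ∫ ω, w ω ∂P := by
  set R : α → β → ℝ := fun a b => if a ∈ A '' (B ⁻¹' {b}) then (N : ℝ)⁻¹ else 0 with hR
  have hRv : ∀ ω, R (A ω) (B ω) = (N : ℝ)⁻¹ := fun ω => if_pos ⟨ω, rfl, rfl⟩
  have hfin : ∀ b, (A '' (B ⁻¹' {b})).Finite := fun b => hA.fin.subset (image_subset_range _ _)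
  have hNpos : ∀ ω : Ω, 0 < N := by
    intro ω
    refine lt_of_lt_of_le ?_ (hN (B ω))
    rw [Set.ncard_pos (hfin _)]
    exact ⟨A ω, ω, rfl, rfl⟩
  refine (gibbs hA hB hw0 hw R ?_ ?_ ?_).trans (le_of_eq ?_)
  · intro a b; simp only [hR]; split_ifs <;> positivity
  · refine Eventually.of_forall fun ω => ?_
    rw [hRv]; have := hNpos ω; positivity
  · rintro _ ⟨ω, rfl⟩
    have h0 := hNpos ω
    simp only [hR]
    rw [← Finset.sum_filter, Finset.sum_const, nsmul_eq_mul]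
    have : ((hA.fin.toFinset.filter fun a => a ∈ A '' (B ⁻¹' {B ω})).card) ≤ N := by
      refine le_trans ?_ (hN (B ω))
      rw [← Set.ncard_coe_finset]
      refine Set.ncard_le_ncard ?_ (hfin _)
      intro a ha
      simp only [Finset.coe_filter, mem_ofPred_eq] at ha
      exact ha.2
    have h0' : (0 : ℝ) < N := by exact_mod_cast h0
    rw [← div_eq_mul_inv, div_le_one h0']
    exact_mod_cast this
  · simp only [hRv, Real.logb_inv, neg_neg]
    rw [integral_mul_const, mul_comm]

end UUED

/-! ### Banach limits -/

namespace UUED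

/-- Cesàro means. -/
def avg (a : ℕ → ℝ) (n : ℕ) : ℝ := (∑ k ∈ Finset.range n, a k) / n

/-- The Banach limit along an ultrafilter: the ultrafilter limit of the Cesàro means. -/
def lam (U : Ultrafilter ℕ) (a : ℕ → ℝ) : ℝ := limUnder (U : Filter ℕ) (avg a)

/-- Bounded real sequences. -/
def Bd (a : ℕ → ℝ) : Prop := ∃ C, ∀ k, |a k| ≤ C

theorem Bd.of {a : ℕ → ℝ} {c d : ℝ} (h : ∀ k, c ≤ a k ∧ a k ≤ d) : Bd a :=
  ⟨max |c| |d|, fun k => abs_le_max_abs_abs (h k).1 (h k).2⟩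

theorem Bd.const (c : ℝ) : Bd (fun _ => c) := ⟨|c|, fun _ => le_rfl⟩

theorem Bd.add {a b : ℕ → ℝ} (ha : Bd a) (hb : Bd b) : Bd (fun k => a k + b k) := by
  obtain ⟨C, hC⟩ := ha; obtain ⟨D, hD⟩ := hb
  exact ⟨C + D, fun k => (abs_add_le _ _).trans (add_le_add (hC k) (hD k))⟩

theorem Bd.cmul {a : ℕ → ℝ} (ha : Bd a) (c : ℝ) : Bd (fun k => c * a k) := by
  obtain ⟨C, hC⟩ := ha
  exact ⟨|c| * C, fun k => by rw [abs_mul]; exact mul_le_mul_of_nonneg_left (hC k) (abs_nonneg c)⟩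

theorem Bd.sub {a b : ℕ → ℝ} (ha : Bd a) (hb : Bd b) : Bd (fun k => a k - b k) := by
  have := ha.add (hb.cmul (-1))
  simpa [sub_eq_add_neg] using this

theorem Bd.shift {a : ℕ → ℝ} (ha : Bd a) (p : ℕ) : Bd (fun k => a (k + p)) := by
  obtain ⟨C, hC⟩ := ha; exact ⟨C, fun k => hC _⟩

theorem Bd.sum {ι : Type*} (s : Finset ι) {a : ι → ℕ → ℝ} (h : ∀ i ∈ s, Bd (a i)) :
    Bd (fun k => ∑ i ∈ s, a i k) := by
  induction s using Finset.induction_on with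
  | empty => simpa using Bd.const (0 : ℝ)
  | insert i s hi ih =>
    simp only [Finset.sum_insert hi]
    exact (h i (by simp)).add (ih fun j hj => h j (by simp [hj]))

theorem avg_bound {a : ℕ → ℝ} {C : ℝ} (h : ∀ k, |a k| ≤ C) (n : ℕ) : |avg a n| ≤ C := by
  have hC : 0 ≤ C := (abs_nonneg _).trans (h 0)
  rcases Nat.eq_zero_or_pos n with h0 | h0
  · subst h0; simpa [avg] using hC
  have h0' : (0 : ℝ) < n := by exact_mod_cast h0
  rw [avg, abs_div, Nat.abs_cast, div_le_iff₀ h0']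
  refine (Finset.abs_sum_le_sum_abs _ _).trans ((Finset.sum_le_sum fun k _ => h k).trans ?_)
  simp [mul_comm]

variable {U : Ultrafilter ℕ}

theorem lam_tendsto {a : ℕ → ℝ} (ha : Bd a) : Tendsto (avg a) U (nhds (lam U a)) := by
  obtain ⟨C, hC⟩ := ha
  have h1 : (Icc (-C) C) ∈ (U.map (avg a) : Ultrafilter ℝ) := by
    have : ∀ᶠ n in (U : Filter ℕ), avg a n ∈ Icc (-C) C :=
      Filter.Eventually.of_forall fun n => abs_le.1 (avg_bound hC n)
    exact this
  obtain ⟨x, -, hx⟩ := isCompact_Icc.ultrafilter_le_nhds (U.map (avg a))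
    (le_principal_iff.2 h1)
  have hx' : Tendsto (avg a) U (nhds x) := hx
  have : lam U a = x := hx'.limUnder_eq
  rw [this]; exact hx'

theorem lam_eq {a : ℕ → ℝ} {x : ℝ} (h : Tendsto (avg a) U (nhds x)) : lam U a = x := h.limUnder_eq

theorem lam_add {a b : ℕ → ℝ} (ha : Bd a) (hb : Bd b) :
    lam U (fun k => a k + b k) = lam U a + lam U b := by
  refine lam_eq (((lam_tendsto ha).add (lam_tendsto hb)).congr fun n => ?_)
  simp [avg, Finset.sum_add_distrib, add_div]

theorem lam_cmul {a : ℕ → ℝ} (ha : Bd a) (c : ℝ) : lam U (fun k => c * a k) = c * lam U a := by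
  refine lam_eq (((lam_tendsto ha).const_mul c).congr fun n => ?_)
  simp [avg, ← Finset.mul_sum, mul_div_assoc]

theorem lam_sub {a b : ℕ → ℝ} (ha : Bd a) (hb : Bd b) :
    lam U (fun k => a k - b k) = lam U a - lam U b := by
  refine lam_eq (((lam_tendsto ha).sub (lam_tendsto hb)).congr fun n => ?_)
  simp [avg, Finset.sum_sub_distrib, sub_div]

theorem lam_const (hU : (U : Filter ℕ) ≤ atTop) (c : ℝ) : lam U (fun _ => c) = c := by
  refine lam_eq ((tendsto_const_nhds (x := c)).congr' ?_)
  filter_upwards [hU (eventually_gt_atTop 0)] with n hn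
  have hn' : (n : ℝ) ≠ 0 := by
    have : 0 < n := hn
    exact_mod_cast this.ne'
  simp [avg]
  field_simp

theorem lam_mono {a b : ℕ → ℝ} (ha : Bd a) (hb : Bd b) (h : ∀ k, a k ≤ b k) :
    lam U a ≤ lam U b := by
  refine le_of_tendsto_of_tendsto' (lam_tendsto ha) (lam_tendsto hb) fun n => ?_
  exact div_le_div_of_nonneg_right (Finset.sum_le_sum fun k _ => h k) (Nat.cast_nonneg n)

theorem lam_le {a : ℕ → ℝ} (ha : Bd a) {c : ℝ} (h : ∀ᶠ n in (U : Filter ℕ), avg a n ≤ c) :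
    lam U a ≤ c := le_of_tendsto (lam_tendsto ha) h

theorem lam_shift (hU : (U : Filter ℕ) ≤ atTop) {a : ℕ → ℝ} (ha : Bd a) (p : ℕ) :
    lam U (fun k => a (k + p)) = lam U a := by
  have key : ∀ b : ℕ → ℝ, Bd b → lam U (fun k => b (k + 1)) = lam U b := by
    intro b hb
    obtain ⟨C, hC⟩ := id hb
    refine lam_eq ?_
    have h0 : Tendsto (fun n : ℕ => (b n - b 0) / n) U (nhds 0) := by
      refine Tendsto.mono_left ?_ hU
      refine squeeze_zero_norm (a := fun n : ℕ => (2 * C) / n) ?_ ?_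
      · intro n
        rw [Real.norm_eq_abs, abs_div, Nat.abs_cast]
        refine div_le_div_of_nonneg_right ?_ (Nat.cast_nonneg n)
        have := abs_sub (b n) (b 0)
        linarith [hC n, hC 0]
      · exact tendsto_const_div_atTop_nhds_zero_nat _
    have h1 := (lam_tendsto (U := U) hb).add h0
    rw [add_zero] at h1
    refine h1.congr fun n => ?_
    simp only [avg]
    rw [← add_div, ← Finset.sum_range_succ_sub_sum (f := b) (n := n),
      Finset.sum_range_succ' b n]
    congr 1
    ring
  induction p with
  | zero => rfl
  | succ p ih =>
    rw [← ih, ← key _ (ha.shift p)]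
    congr 1; funext k; congr 1; ring

theorem lam_sum {ι : Type*} (s : Finset ι) {a : ι → ℕ → ℝ} (h : ∀ i ∈ s, Bd (a i))
    (hU : (U : Filter ℕ) ≤ atTop) :
    lam U (fun k => ∑ i ∈ s, a i k) = ∑ i ∈ s, lam U (a i) := by
  induction s using Finset.induction_on with
  | empty => simpa using lam_const hU 0
  | insert i s hi ih =>
    simp only [Finset.sum_insert hi]
    rw [lam_add (h i (by simp)) (Bd.sum s fun j hj => h j (by simp [hj])),
      ih fun j hj => h j (by simp [hj])]

end UUED

/-! ### Refining pairs of partitions -/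

namespace UUED

variable {Ω τ : Type*} [MeasurableSpace Ω]

/-- Two refining sequences of finite-valued variables: `X k` has at most four children per atom,
`Y j` at most two. -/
structure IsSys (X : ℕ → Ω → τ) (Y : ℕ → Ω → ℤ) : Prop where
  fX : ∀ k, FM (X k)
  fY : ∀ k, FM (Y k)
  dX : ∀ k, Dep (X k) (X (k + 1))
  dY : ∀ k, Dep (Y k) (Y (k + 1))
  cX : ∀ k t, (X (k + 1) '' (X k ⁻¹' {t})).ncard ≤ 4
  cY : ∀ k t, (Y (k + 1) '' (Y k ⁻¹' {t})).ncard ≤ 2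

/-- The joint variable `(X k, Y j)`. -/
def Sv (X : ℕ → Ω → τ) (Y : ℕ → Ω → ℤ) (k j : ℕ) (ω : Ω) : τ × ℤ := (X k ω, Y j ω)

/-- Log-mass of the atom of `(X k, Y j)`. -/
def Lg (P : Measure Ω) (X : ℕ → Ω → τ) (Y : ℕ → Ω → ℤ) (k j : ℕ) : Ω → ℝ := lgA P (Sv X Y k j)

variable {P : Measure Ω} [IsProbabilityMeasure P] {X : ℕ → Ω → τ} {Y : ℕ → Ω → ℤ}

theorem IsSys.dXle (h : IsSys X Y) {k k' : ℕ} (hk : k ≤ k') : Dep (X k) (X k') := by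
  induction k', hk using Nat.le_induction with
  | base => exact Dep.refl _
  | succ n _ ih => exact ih.trans (h.dX n)

theorem IsSys.dYle (h : IsSys X Y) {k k' : ℕ} (hk : k ≤ k') : Dep (Y k) (Y k') := by
  induction k', hk using Nat.le_induction with
  | base => exact Dep.refl _
  | succ n _ ih => exact ih.trans (h.dY n)

theorem IsSys.fS (h : IsSys X Y) (k j : ℕ) : FM (Sv X Y k j) := (h.fX k).pair (h.fY j)

theorem IsSys.dS (h : IsSys X Y) {k k' j j' : ℕ} (hk : k ≤ k') (hj : j ≤ j') :
    Dep (Sv X Y k j) (Sv X Y k' j') :=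
  ((h.dXle hk).trans (Dep.fst _ _)).pair ((h.dYle hj).trans (Dep.snd _ _))

theorem IsSys.fL (h : IsSys X Y) (k j : ℕ) : FM (Lg P X Y k j) := lgA_fm (h.fS k j)

theorem IsSys.Lanti (h : IsSys X Y) {k k' j j' : ℕ} (hk : k ≤ k') (hj : j ≤ j') :
    ∀ᵐ ω ∂P, Lg P X Y k' j' ω ≤ Lg P X Y k j ω :=
  lgA_mono (h.fS k' j') (h.dS hk hj)

theorem IsSys.Lpair_Y (h : IsSys X Y) {k i j : ℕ} (hij : i ≤ j) :
    lgA P (fun ω => (Y j ω, Sv X Y k i ω)) = Lg P X Y k j := by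
  refine lgA_congr ?_ ?_
  · exact (Dep.snd _ _).pair (h.dS le_rfl hij)
  · exact ((Dep.fst (X k) (Y i)).trans (Dep.snd _ _)).pair (Dep.fst _ _)

theorem IsSys.Lpair_X (h : IsSys X Y) {k k' j : ℕ} (hk : k ≤ k') :
    lgA P (fun ω => (X k' ω, Sv X Y k j ω)) = Lg P X Y k' j := by
  refine lgA_congr ?_ ?_
  · exact (Dep.fst _ _).pair (h.dS hk le_rfl)
  · exact (Dep.fst _ _).pair ((Dep.snd (X k) (Y j)).trans (Dep.snd _ _))

/-- Weighted submodularity: knowing more digits of `X` decreases the conditional entropy of the digits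
of `Y`. -/
theorem IsSys.e1 (h : IsSys X Y) {k k' i j : ℕ} (hk : k ≤ k') (hij : i ≤ j) {w : Ω → ℝ}
    (hw0 : ∀ ω, 0 ≤ w ω) (hw : Dep w (Sv X Y k' i)) :
    ∫ ω, w ω * (Lg P X Y k' i ω - Lg P X Y k' j ω) ∂P
      ≤ ∫ ω, w ω * (Lg P X Y k i ω - Lg P X Y k j ω) ∂P := by
  have := submod (P := P) (A := Y j) (h.fY j) (h.fS k' i) (h.dS hk (le_refl i)) hw0 hw
  rwa [h.Lpair_Y hij, h.Lpair_Y hij] at this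

theorem IsSys.nonneg (h : IsSys X Y) {k k' j j' : ℕ} (hk : k ≤ k') (hj : j ≤ j') {w : Ω → ℝ}
    (hw0 : ∀ ω, 0 ≤ w ω) :
    0 ≤ ∫ ω, w ω * (Lg P X Y k j ω - Lg P X Y k' j' ω) ∂P := by
  refine integral_nonneg_of_ae ?_
  filter_upwards [h.Lanti (P := P) hk hj] with ω hω
  exact mul_nonneg (hw0 ω) (sub_nonneg.2 hω)

/-- Each digit of `Y` carries at most one bit. -/
theorem IsSys.e3 (h : IsSys X Y) (k i d : ℕ) {w : Ω → ℝ}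
    (hw0 : ∀ ω, 0 ≤ w ω) (hw : Dep w (Sv X Y k i)) :
    ∫ ω, w ω * (Lg P X Y k i ω - Lg P X Y k (i + d) ω) ∂P ≤ d * ∫ ω, w ω ∂P := by
  have wf : FM w := (h.fS k i).dep hw
  induction d with
  | zero => simp
  | succ d ih =>
    have h1 := maxent (P := P) (A := Y (i + d + 1)) (B := Sv X Y k (i + d)) (h.fY _) (h.fS _ _) 2
      (fun b => ?_) hw0 (hw.trans (h.dS le_rfl (Nat.le_add_right i d)))
    · rw [h.Lpair_Y (Nat.le_succ _)] at h1
      have e : ∀ ω, w ω * (Lg P X Y k i ω - Lg P X Y k (i + (d + 1)) ω)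
          = w ω * (Lg P X Y k i ω - Lg P X Y k (i + d) ω)
          + w ω * (lgA P (Sv X Y k (i + d)) ω - Lg P X Y k (i + d + 1) ω) := by
        intro ω; rw [← add_assoc]; simp only [Lg]; ring
      simp only [e]
      rw [integral_add (wf.mul ((h.fL _ _).sub (h.fL _ _))).integrable
        (wf.mul ((lgA_fm (h.fS _ _)).sub (h.fL _ _))).integrable]
      push_cast
      rw [Nat.cast_ofNat, Real.logb_self_eq_one (by norm_num)] at h1
      linarith
    · refine le_trans (Set.ncard_le_ncard (image_mono ?_) ?_) (h.cY (i + d) b.2)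
      · intro ω hω
        have : Sv X Y k (i + d) ω = b := hω
        rw [← this]; rfl
      · exact (h.fY _).fin.subset (image_subset_range _ _)

/-- Each digit of `X` carries at most two bits. -/
theorem IsSys.e4 (h : IsSys X Y) (k u d : ℕ) {w : Ω → ℝ}
    (hw0 : ∀ ω, 0 ≤ w ω) (hw : Dep w (Sv X Y k u)) :
    ∫ ω, w ω * (Lg P X Y k u ω - Lg P X Y (k + d) u ω) ∂P ≤ 2 * d * ∫ ω, w ω ∂P := by
  have wf : FM w := (h.fS k u).dep hw
  induction d with
  | zero => simp
  | succ d ih =>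
    have h1 := maxent (P := P) (A := X (k + d + 1)) (B := Sv X Y (k + d) u) (h.fX _) (h.fS _ _) 4
      (fun b => ?_) hw0 (hw.trans (h.dS (Nat.le_add_right k d) le_rfl))
    · rw [h.Lpair_X (Nat.le_succ _)] at h1
      have e : ∀ ω, w ω * (Lg P X Y k u ω - Lg P X Y (k + (d + 1)) u ω)
          = w ω * (Lg P X Y k u ω - Lg P X Y (k + d) u ω)
          + w ω * (lgA P (Sv X Y (k + d) u) ω - Lg P X Y (k + d + 1) u ω) := by
        intro ω; rw [← add_assoc]; simp only [Lg]; ring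
      simp only [e]
      rw [integral_add (wf.mul ((h.fL _ _).sub (h.fL _ _))).integrable
        (wf.mul ((lgA_fm (h.fS _ _)).sub (h.fL _ _))).integrable]
      push_cast
      have e4 : Real.logb 2 ((4 : ℕ) : ℝ) = 2 := by
        rw [show ((4 : ℕ) : ℝ) = (2 : ℝ) ^ (2 : ℝ) by norm_num]
        exact Real.logb_rpow (by norm_num) (by norm_num)
      rw [e4] at h1
      linarith
    · refine le_trans (Set.ncard_le_ncard (image_mono ?_) ?_) (h.cX (k + d) b.1)
      · intro ω hω
        have : Sv X Y (k + d) u ω = b := hω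
        rw [← this]; rfl
      · exact (h.fX _).fin.subset (image_subset_range _ _)

/-- Mean log-mass (minus the entropy) of `(X k, Y j)`. -/
def eL (P : Measure Ω) (X : ℕ → Ω → τ) (Y : ℕ → Ω → ℤ) (k j : ℕ) : ℝ := ∫ ω, Lg P X Y k j ω ∂P

theorem IsSys.eL_sub (h : IsSys X Y) (k j k' j' : ℕ) :
    eL P X Y k j - eL P X Y k' j' = ∫ ω, (1 : ℝ) * (Lg P X Y k j ω - Lg P X Y k' j' ω) ∂P := by
  simp only [one_mul]
  rw [integral_sub (h.fL _ _).integrable (h.fL _ _).integrable]; rfl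

theorem IsSys.eL_e1 (h : IsSys X Y) {k k' i j : ℕ} (hk : k ≤ k') (hij : i ≤ j) :
    eL P X Y k' i - eL P X Y k' j ≤ eL P X Y k i - eL P X Y k j := by
  rw [h.eL_sub, h.eL_sub]
  exact h.e1 hk hij (fun _ => zero_le_one) (Dep.const 1 _)

theorem IsSys.eL_nonneg (h : IsSys X Y) {k k' j j' : ℕ} (hk : k ≤ k') (hj : j ≤ j') :
    0 ≤ eL P X Y k j - eL P X Y k' j' := by
  rw [h.eL_sub]
  exact h.nonneg hk hj (fun _ => zero_le_one)

theorem IsSys.eL_e3 (h : IsSys X Y) (k i d : ℕ) :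
    eL P X Y k i - eL P X Y k (i + d) ≤ d := by
  rw [h.eL_sub]
  simpa using h.e3 (P := P) k i d (w := fun _ => 1) (fun _ => zero_le_one) (Dep.const 1 _)

theorem IsSys.eL_e4 (h : IsSys X Y) (k u d : ℕ) :
    eL P X Y k u - eL P X Y (k + d) u ≤ 2 * d := by
  rw [h.eL_sub]
  simpa using h.e4 (P := P) k u d (w := fun _ => 1) (fun _ => zero_le_one) (Dep.const 1 _)

/-- Mean conditional entropy of the next digit of `Y` at depth `q` below the scale of `X`. -/
def fq (U : Ultrafilter ℕ) (P : Measure Ω) (X : ℕ → Ω → τ) (Y : ℕ → Ω → ℤ) (q : ℕ) : ℝ :=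
  lam U (fun k => eL P X Y k (k + q) - eL P X Y k (k + q + 1))

variable {U : Ultrafilter ℕ}

theorem IsSys.bd1 (h : IsSys X Y) (q : ℕ) :
    Bd (fun k => eL P X Y k (k + q) - eL P X Y k (k + q + 1)) :=
  Bd.of (c := 0) (d := 1) fun k =>
    ⟨h.eL_nonneg le_rfl (Nat.le_succ _), by simpa using h.eL_e3 (P := P) k (k + q) 1⟩

theorem IsSys.bd_range (h : IsSys X Y) (q d : ℕ) :
    Bd (fun k => eL P X Y k (k + q) - eL P X Y k (k + q + d)) :=
  Bd.of (c := 0) (d := d) fun k =>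
    ⟨h.eL_nonneg le_rfl (Nat.le_add_right _ _), h.eL_e3 (P := P) k (k + q) d⟩

theorem IsSys.fq_mono (h : IsSys X Y) (hU : (U : Filter ℕ) ≤ atTop) {q q' : ℕ} (hq : q ≤ q') :
    fq U P X Y q ≤ fq U P X Y q' := by
  obtain ⟨d, rfl⟩ := Nat.exists_eq_add_of_le hq
  unfold fq
  rw [← lam_shift hU (h.bd1 q) d]
  refine lam_mono ((h.bd1 q).shift d) (h.bd1 _) fun k => ?_
  have := h.eL_e1 (P := P) (k := k) (k' := k + d) (i := k + d + q) (j := k + d + q + 1)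
    (Nat.le_add_right _ _) (Nat.le_succ _)
  rwa [show k + (q + d) = k + d + q by ring]

theorem IsSys.fq_nonneg (h : IsSys X Y) (hU : (U : Filter ℕ) ≤ atTop) (q : ℕ) :
    0 ≤ fq U P X Y q := by
  rw [← lam_const hU 0]
  exact lam_mono (Bd.const 0) (h.bd1 q) fun k => h.eL_nonneg le_rfl (Nat.le_succ _)

theorem IsSys.lam_range (h : IsSys X Y) (hU : (U : Filter ℕ) ≤ atTop) (q d : ℕ) :
    lam U (fun k => eL P X Y k (k + q) - eL P X Y k (k + q + d))
      = ∑ i ∈ Finset.range d, fq U P X Y (q + i) := by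
  unfold fq
  rw [← lam_sum _ (fun i _ => h.bd1 _) hU]
  congr 1; funext k
  refine (Finset.sum_range_sub' (fun i => eL P X Y k (k + q + i)) d).symm.trans ?_
  refine Finset.sum_congr rfl fun i _ => ?_
  rw [show k + (q + i) = k + q + i by ring]; rfl

/-- The digit entropies `fq` are bounded by the growth rate of the entropy of `Y`. -/
theorem IsSys.fq_le (h : IsSys X Y) (hU : (U : Filter ℕ) ≤ atTop) {b : ℝ}
    (hb : ∀ᶠ n : ℕ in atTop, - eL P X Y 0 n ≤ b * n) (q : ℕ) : fq U P X Y q ≤ b := by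
  have hbd : Bd (fun k => eL P X Y 0 k - eL P X Y 0 (k + 1)) :=
    Bd.of (c := 0) (d := 1) fun k =>
      ⟨h.eL_nonneg le_rfl (Nat.le_succ _), by simpa using h.eL_e3 (P := P) 0 k 1⟩
  calc fq U P X Y q ≤ lam U (fun k => eL P X Y 0 (k + q) - eL P X Y 0 (k + q + 1)) :=
        lam_mono (h.bd1 q) (hbd.shift q) fun k => h.eL_e1 (Nat.zero_le _) (Nat.le_succ _)
    _ = lam U (fun k => eL P X Y 0 k - eL P X Y 0 (k + 1)) := lam_shift hU hbd q
    _ ≤ b := by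
      refine lam_le hbd ?_
      filter_upwards [hU hb, hU (eventually_gt_atTop 0)] with n h1 h2
      have h2' : (0 : ℝ) < n := by
        have : 0 < n := h2
        exact_mod_cast this
      have h1' : - eL P X Y 0 n ≤ b * n := h1
      rw [avg, Finset.sum_range_sub' (fun i => eL P X Y 0 i) n, div_le_iff₀ h2']
      have : eL P X Y 0 0 ≤ 0 := integral_nonpos fun ω => lgA_nonpos _ ω
      linarith

end UUED

/-! ### Normalized entropies and the entropy deficit -/

namespace UUED

variable {Ω τ : Type*} [MeasurableSpace Ω]
variable {P : Measure Ω} [IsProbabilityMeasure P] {X : ℕ → Ω → τ} {Y : ℕ → Ω → ℤ}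
variable {U : Ultrafilter ℕ}

/-- Normalized conditional entropy of `(X, Y)` over `l` scales. -/
def aL (P : Measure Ω) (X : ℕ → Ω → τ) (Y : ℕ → Ω → ℤ) (l k : ℕ) (ω : Ω) : ℝ :=
  cE P (Sv X Y k k) (fun x => Lg P X Y k k x - Lg P X Y (k + l) (k + l) x) ω / l

/-- Normalized conditional entropy of `Y` over `l` scales. -/
def bL (P : Measure Ω) (X : ℕ → Ω → τ) (Y : ℕ → Ω → ℤ) (l k : ℕ) (ω : Ω) : ℝ :=
  cE P (Sv X Y k k) (fun x => Lg P X Y k k x - Lg P X Y k (k + l) x) ω / l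

/-- The entropy deficit of the projection over `l` scales. -/
def Mv (P : Measure Ω) (X : ℕ → Ω → τ) (Y : ℕ → Ω → ℤ) (l k : ℕ) (ω : Ω) : ℝ :=
  min 1 (aL P X Y l k ω) - bL P X Y l k ω

theorem aL_dep (l k : ℕ) : Dep (aL P X Y l k) (Sv X Y k k) := (cE_dep _ _).comp (fun x => x / l)
theorem bL_dep (l k : ℕ) : Dep (bL P X Y l k) (Sv X Y k k) := (cE_dep _ _).comp (fun x => x / l)
theorem Mv_dep (l k : ℕ) : Dep (Mv P X Y l k) (Sv X Y k k) :=
  (aL_dep l k).comp2 (bL_dep l k) (fun x y => min 1 x - y)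

theorem IsSys.aL_fm (h : IsSys X Y) (l k : ℕ) : FM (aL P X Y l k) := (h.fS k k).dep (aL_dep l k)
theorem IsSys.bL_fm (h : IsSys X Y) (l k : ℕ) : FM (bL P X Y l k) := (h.fS k k).dep (bL_dep l k)
theorem IsSys.Mv_fm (h : IsSys X Y) (l k : ℕ) : FM (Mv P X Y l k) := (h.fS k k).dep (Mv_dep l k)

theorem IsSys.bL_nonneg (h : IsSys X Y) (l k : ℕ) (ω : Ω) : 0 ≤ bL P X Y l k ω := by
  refine div_nonneg (cE_nonneg ?_ ω) (Nat.cast_nonneg l)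
  filter_upwards [h.Lanti (P := P) (le_refl k) (Nat.le_add_right k l)] with x hx
  exact sub_nonneg.2 hx

theorem IsSys.bL_le_aL (h : IsSys X Y) (l k : ℕ) (ω : Ω) : bL P X Y l k ω ≤ aL P X Y l k ω := by
  refine div_le_div_of_nonneg_right
    (cE_mono ((h.fL _ _).sub (h.fL _ _)) ((h.fL _ _).sub (h.fL _ _)) ?_ ω) (Nat.cast_nonneg l)
  filter_upwards [h.Lanti (P := P) (Nat.le_add_right k l) (le_refl (k + l))] with x hx
  linarith

theorem IsSys.bL_le_one (h : IsSys X Y) (l k : ℕ) (ω : Ω) : bL P X Y l k ω ≤ 1 := by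
  refine div_le_one_of_le₀ (cE_le_of (h.fS k k) (Nat.cast_nonneg l) (fun w hw0 hw => ?_) ω)
    (Nat.cast_nonneg l)
  exact h.e3 k k l hw0 hw

theorem IsSys.Mv_nonneg (h : IsSys X Y) (l k : ℕ) (ω : Ω) : 0 ≤ Mv P X Y l k ω :=
  sub_nonneg.2 (le_min (h.bL_le_one l k ω) (h.bL_le_aL l k ω))

theorem Mv_le (l k : ℕ) (ω : Ω) : Mv P X Y l k ω ≤ 1 - bL P X Y l k ω :=
  sub_le_sub_right (min_le_left _ _) _

theorem IsSys.Mv_le_one (h : IsSys X Y) (l k : ℕ) (ω : Ω) : Mv P X Y l k ω ≤ 1 :=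
  (Mv_le l k ω).trans (by linarith [h.bL_nonneg (P := P) l k ω])

/-- The points at which the conditional entropy of `X` over the `l0` scales after `k` is less than
`l0 * a`. -/
def badX (P : Measure Ω) (X : ℕ → Ω → τ) (l0 : ℕ) (a : ℝ) (k : ℕ) : Set Ω :=
  {ω | cE P (X k) (fun x => lgA P (X k) x - lgA P (X (k + l0)) x) ω < l0 * a}

/-- Points whose `X (k + l0)`-atom meets several `Y k`-cells. -/
def strad (X : ℕ → Ω → τ) (Y : ℕ → Ω → ℤ) (l0 k : ℕ) : Set Ω :=
  {ω | ∃ ω', X (k + l0) ω' = X (k + l0) ω ∧ Y k ω' ≠ Y k ω}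

theorem IsSys.badX_meas (h : IsSys X Y) (l0 : ℕ) (a : ℝ) (k : ℕ) :
    MeasurableSet (badX P X l0 a k) := by
  have := (cE_fm (P := P) (h.fX k) (fun x => lgA P (X k) x - lgA P (X (k + l0)) x)).preimage
    (Iio (l0 * a))
  exact this

theorem IsSys.strad_meas (h : IsSys X Y) (l0 k : ℕ) : MeasurableSet (strad X Y l0 k) := by
  have hd : Dep (fun ω => ω ∈ strad X Y l0 k) (Sv X Y (k + l0) k) := by
    intro ω ω' e
    have e1 : X (k + l0) ω = X (k + l0) ω' := congrArg Prod.fst e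
    have e2 : Y k ω = Y k ω' := congrArg Prod.snd e
    simp only [strad, Set.mem_ofPred_eq, e1, e2]
  have := ((h.fS (k + l0) k).dep hd).preimage {True}
  convert this using 1
  ext ω; simp

/-- If `X K` already determines `Y k` off the straddling set, knowing `Y k` does not reduce the
conditional entropy of `X (K + l0)`, which is at least `l0 * a` off the bad set. -/
theorem IsSys.entropy_step (h : IsSys X Y) {l0 k K : ℕ} (hK : k + l0 ≤ K) {a : ℝ} (ha : 0 ≤ a)
    {w : Ω → ℝ} (hw0 : ∀ ω, 0 ≤ w ω) (hw1 : ∀ ω, w ω ≤ 1) (hw : Dep w (Sv X Y k k)) :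
    l0 * a * (∫ ω, w ω ∂P - P.real (strad X Y l0 k) - P.real (badX P X l0 a K))
      ≤ ∫ ω, w ω * (Lg P X Y K k ω - Lg P X Y (K + l0) k ω) ∂P := by
  have hkK : k ≤ K := le_trans (Nat.le_add_right _ _) hK
  have wf : FM w := (h.fS _ _).dep hw
  set T : Set Ω := {ω | ∀ ω', X K ω' = X K ω → Y k ω' = Y k ω} with hT
  have hTs : ∀ ω, ω ∉ strad X Y l0 k → ω ∈ T := by
    intro ω hω ω' e
    by_contra hne
    exact hω ⟨ω', h.dXle hK _ _ e, hne⟩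
  set v : Ω → ℝ := fun ω => if ω ∈ T then w ω else 0 with hv
  have hvd : Dep v (X K) := by
    intro ω ω' e
    by_cases h1 : ω ∈ T
    · have hy : Y k ω' = Y k ω := h1 ω' e.symm
      have h2 : ω' ∈ T := by
        intro ω'' e'
        rw [h1 ω'' (e'.trans e.symm), hy]
      have : w ω = w ω' := hw _ _ (Prod.ext (h.dXle hkK _ _ e) hy.symm)
      simp [hv, h1, h2, this]
    · have h2 : ω' ∉ T := by
        intro h2
        have hy : Y k ω = Y k ω' := h2 ω e
        exact h1 fun ω'' e' => by rw [h2 ω'' (e'.trans e), hy]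
      simp [hv, h1, h2]
  have vf : FM v := (h.fX K).dep hvd
  have lf : FM (fun x => lgA P (X K) x - lgA P (X (K + l0)) x) :=
    (lgA_fm (h.fX _)).sub (lgA_fm (h.fX _))
  have hv0 : ∀ ω, 0 ≤ v ω := fun ω => by simp only [hv]; split_ifs; exacts [hw0 ω, le_rfl]
  -- on `T` the atoms of `(X K, Y k)` are atoms of `X K`
  have hat : ∀ K', K ≤ K' → ∀ ω ∈ T, Lg P X Y K' k ω = lgA P (X K') ω := by
    intro K' hK' ω hω
    simp only [Lg, lgA, pA]
    congr 2
    ext ω'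
    refine ⟨fun e => congrArg Prod.fst e, fun e => Prod.ext e ?_⟩
    exact hω ω' (h.dXle hK' _ _ e)
  have e1 : ∫ ω, v ω * (lgA P (X K) ω - lgA P (X (K + l0)) ω) ∂P
      ≤ ∫ ω, w ω * (Lg P X Y K k ω - Lg P X Y (K + l0) k ω) ∂P := by
    refine integral_mono_ae (vf.mul lf).integrable
      (wf.mul ((h.fL _ _).sub (h.fL _ _))).integrable ?_
    filter_upwards [h.Lanti (P := P) (Nat.le_add_right K l0) (le_refl k)] with ω hω
    by_cases h1 : ω ∈ T
    · rw [hat K le_rfl ω h1, hat (K + l0) (Nat.le_add_right _ _) ω h1]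
      simp [hv, h1]
    · simp only [hv, h1, if_false, zero_mul]
      exact mul_nonneg (hw0 ω) (sub_nonneg.2 hω)
  refine le_trans ?_ e1
  rw [← integral_cE (h.fX K) lf hvd]
  have hbm := h.badX_meas (P := P) l0 a K
  have hsm := h.strad_meas l0 k
  have e2 : l0 * a * (∫ ω, w ω ∂P - P.real (strad X Y l0 k) - P.real (badX P X l0 a K))
      = ∫ ω, l0 * a * (w ω - (strad X Y l0 k).indicator 1 ω - (badX P X l0 a K).indicator 1 ω) ∂P := by
    rw [integral_const_mul, integral_sub, integral_sub, integral_indicator_one hsm,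
      integral_indicator_one hbm]
    · exact wf.integrable
    · exact (integrable_const (1 : ℝ)).indicator hsm
    · exact wf.integrable.sub ((integrable_const (1 : ℝ)).indicator hsm)
    · exact (integrable_const (1 : ℝ)).indicator hbm
  rw [e2]
  refine integral_mono ?_ (vf.mul (cE_fm (h.fX K) _)).integrable fun ω => ?_
  · exact ((wf.integrable.sub ((integrable_const (1 : ℝ)).indicator hsm)).sub
      ((integrable_const (1 : ℝ)).indicator hbm)).const_mul _
  have hla : (0 : ℝ) ≤ l0 * a := mul_nonneg (Nat.cast_nonneg _) ha
  have hc0 : 0 ≤ cE P (X K) (fun x => lgA P (X K) x - lgA P (X (K + l0)) x) ω := by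
    refine cE_nonneg ?_ ω
    filter_upwards [lgA_mono (P := P) (h.fX (K + l0)) (h.dXle (Nat.le_add_right K l0))] with x hx
    exact sub_nonneg.2 hx
  have hi1 : 0 ≤ (strad X Y l0 k).indicator (1 : Ω → ℝ) ω :=
    indicator_nonneg (fun _ _ => zero_le_one) ω
  have hi2 : 0 ≤ (badX P X l0 a K).indicator (1 : Ω → ℝ) ω :=
    indicator_nonneg (fun _ _ => zero_le_one) ω
  by_cases hs : ω ∈ strad X Y l0 k
  · refine le_trans ?_ (mul_nonneg (hv0 ω) hc0)
    refine mul_nonpos_of_nonneg_of_nonpos hla ?_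
    rw [indicator_of_mem hs]
    have := hw1 ω
    simp only [Pi.one_apply]; linarith
  by_cases hb : ω ∈ badX P X l0 a K
  · refine le_trans ?_ (mul_nonneg (hv0 ω) hc0)
    refine mul_nonpos_of_nonneg_of_nonpos hla ?_
    rw [indicator_of_mem hb]
    have := hw1 ω
    simp only [Pi.one_apply]; linarith
  · have h1 : v ω = w ω := by simp only [hv, hTs ω hs, if_true]
    have h2 : (l0 : ℝ) * a ≤ cE P (X K) (fun x => lgA P (X K) x - lgA P (X (K + l0)) x) ω := by
      simpa [badX] using hb
    rw [indicator_of_notMem hs, indicator_of_notMem hb, h1]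
    simp only [sub_zero]
    rw [mul_comm]
    exact mul_le_mul_of_nonneg_left h2 (hw0 ω)

/-- Summation of the single steps over `m` blocks of `l0` scales; the first block, in which `X` need
not determine `Y k`, accounts for the loss `1 / m`. -/
theorem IsSys.mean_min_aL (h : IsSys X Y) {l0 m : ℕ} (hl0 : 0 < l0) (hm : 0 < m) {a : ℝ} (ha : 0 ≤ a)
    (ha1 : a ≤ 1) {g : ℝ} (k : ℕ) (hg : P.real (strad X Y l0 k) ≤ g) :
    a - 1 / m - g - (1 / m) * ∑ j ∈ Finset.range m, P.real (badX P X l0 a (k + j * l0))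
      ≤ ∫ ω, min 1 (aL P X Y (m * l0) k ω) ∂P := by
  have hm' : (0 : ℝ) < m := by exact_mod_cast hm
  have hl0' : (0 : ℝ) < l0 := by exact_mod_cast hl0
  set A := aL P X Y (m * l0) k with hA
  have Af : FM A := h.aL_fm _ _
  set w : Ω → ℝ := fun ω => if A ω < 1 then 1 else 0 with hw
  have hwd : Dep w (Sv X Y k k) := (aL_dep (m * l0) k).comp (fun x => if x < 1 then (1 : ℝ) else 0)
  have wf : FM w := (h.fS _ _).dep hwd
  have hw0 : ∀ ω, 0 ≤ w ω := fun ω => by simp only [hw]; split_ifs <;> norm_num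
  have hw1 : ∀ ω, w ω ≤ 1 := fun ω => by simp only [hw]; split_ifs <;> norm_num
  have e0 : ∫ ω, min 1 (A ω) ∂P = 1 - ∫ ω, w ω ∂P + ∫ ω, w ω * A ω ∂P := by
    have : ∀ ω, min 1 (A ω) = (1 - w ω) + w ω * A ω := by
      intro ω
      by_cases h1 : A ω < 1
      · simp [hw, h1, min_eq_right h1.le]
      · simp [hw, h1, min_eq_left (not_lt.1 h1)]
    simp only [this]
    rw [integral_add ((FM.const (1 : ℝ)).sub wf).integrable (wf.mul Af).integrable,
      integral_sub (integrable_const _) wf.integrable]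
    simp
  have e1 : ∫ ω, w ω * A ω ∂P
      = (∫ ω, w ω * (Lg P X Y k k ω - Lg P X Y (k + m * l0) (k + m * l0) ω) ∂P) / (m * l0) := by
    rw [← integral_cE (h.fS k k) ((h.fL _ _).sub (h.fL _ _)) hwd, ← integral_div]
    congr 1; funext ω
    simp only [hA, aL, Nat.cast_mul]; ring
  have e2 : ∑ j ∈ Finset.range m,
      ∫ ω, w ω * (Lg P X Y (k + j * l0) k ω - Lg P X Y (k + j * l0 + l0) k ω) ∂P
      ≤ ∫ ω, w ω * (Lg P X Y k k ω - Lg P X Y (k + m * l0) (k + m * l0) ω) ∂P := by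
    rw [← integral_finsetSum _
      (fun j _ => (wf.mul ((h.fL (k + j * l0) k).sub (h.fL _ k))).integrable)]
    refine integral_mono_ae (FM.sum _ fun j _ => wf.mul ((h.fL _ k).sub (h.fL _ k))).integrable
      (wf.mul ((h.fL _ _).sub (h.fL _ _))).integrable ?_
    filter_upwards [h.Lanti (P := P) (le_refl (k + m * l0)) (Nat.le_add_right k (m * l0))] with ω hω
    rw [← Finset.mul_sum]
    refine mul_le_mul_of_nonneg_left ?_ (hw0 ω)
    have := Finset.sum_range_sub' (fun j => Lg P X Y (k + j * l0) k ω) m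
    have e3 : ∀ j, k + j * l0 + l0 = k + (j + 1) * l0 := fun j => by ring
    simp only [e3]
    rw [this]
    simp only [zero_mul, add_zero]
    linarith
  have e3 : ∀ j ∈ Finset.range m, l0 * a * (∫ ω, w ω ∂P - g - P.real (badX P X l0 a (k + j * l0)))
      - (if j = 0 then l0 * a else 0)
      ≤ ∫ ω, w ω * (Lg P X Y (k + j * l0) k ω - Lg P X Y (k + j * l0 + l0) k ω) ∂P := by
    intro j _
    have hla : (0 : ℝ) ≤ l0 * a := mul_nonneg (Nat.cast_nonneg _) ha
    by_cases hj : j = 0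
    · have h1 := h.nonneg (P := P) (Nat.le_add_right (k + j * l0) l0) (le_refl k) hw0
      have h2 : ∫ ω, w ω ∂P ≤ 1 := by
        have := integral_mono wf.integrable (integrable_const (1 : ℝ) (μ := P)) hw1
        simpa using this
      have h3 : 0 ≤ g := measureReal_nonneg.trans hg
      have h4 : 0 ≤ P.real (badX P X l0 a (k + j * l0)) := measureReal_nonneg
      refine le_trans ?_ h1
      rw [if_pos hj]
      nlinarith
    · have h1 := h.entropy_step (P := P) (l0 := l0) (k := k) (K := k + j * l0) (a := a) ?_ ha hw0 hw1 hwd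
      · rw [if_neg hj, sub_zero]
        refine le_trans (mul_le_mul_of_nonneg_left ?_ hla) h1
        linarith
      · have : 1 ≤ j := Nat.one_le_iff_ne_zero.2 hj
        nlinarith
  have e4 := (Finset.sum_le_sum e3).trans e2
  rw [Finset.sum_sub_distrib, ← Finset.mul_sum, Finset.sum_sub_distrib,
    Finset.sum_ite_eq' (Finset.range m) 0 (fun _ => (l0 : ℝ) * a)] at e4
  simp only [Finset.mem_range, hm, if_true, Finset.sum_const, Finset.card_range, nsmul_eq_mul] at e4
  rw [e0, e1]
  set W := ∫ ω, w ω ∂P with hWd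
  set Sb := ∑ j ∈ Finset.range m, P.real (badX P X l0 a (k + j * l0)) with hSb
  set Q := ∫ ω, w ω * (Lg P X Y k k ω - Lg P X Y (k + m * l0) (k + m * l0) ω) ∂P
  have hW1 : W ≤ 1 := by
    have := integral_mono wf.integrable (integrable_const (1 : ℝ) (μ := P)) hw1
    simpa using this
  have hW0 : 0 ≤ W := integral_nonneg hw0
  have hS0 : 0 ≤ Sb := Finset.sum_nonneg fun j _ => measureReal_nonneg
  have hg0 : 0 ≤ g := measureReal_nonneg.trans hg
  have e5 : a * (W - g) - a * (1 / m * Sb) - a * (1 / m) ≤ Q / (m * l0) := by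
    rw [le_div_iff₀ (by positivity)]
    refine le_trans (le_of_eq ?_) e4
    field_simp
  have h6 : 0 ≤ 1 / (m : ℝ) * Sb := by positivity
  have h7 : 0 ≤ 1 / (m : ℝ) := by positivity
  nlinarith [mul_nonneg (sub_nonneg.2 ha1) h6, mul_nonneg (sub_nonneg.2 ha1) h7,
    mul_nonneg (sub_nonneg.2 ha1) hg0, mul_nonneg (sub_nonneg.2 ha1) (sub_nonneg.2 hW1)]

theorem bd_prob (s : ℕ → Set Ω) : Bd (fun k => P.real (s k)) :=
  Bd.of (c := 0) (d := 1) fun _ => ⟨measureReal_nonneg, measureReal_le_one⟩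

theorem bd_int {f : ℕ → Ω → ℝ} {c d : ℝ} (hf : ∀ k, FM (f k)) (h : ∀ k ω, c ≤ f k ω ∧ f k ω ≤ d) :
    Bd (fun k => ∫ ω, f k ω ∂P) := by
  refine Bd.of (c := c) (d := d) fun k => ⟨?_, ?_⟩
  · have := integral_mono (integrable_const c (μ := P)) (hf k).integrable (fun ω => (h k ω).1)
    simpa using this
  · have := integral_mono (hf k).integrable (integrable_const d (μ := P)) (fun ω => (h k ω).2)
    simpa using this

theorem IsSys.lam_bL (h : IsSys X Y) (hU : (U : Filter ℕ) ≤ atTop) (l : ℕ) :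
    lam U (fun k => ∫ ω, bL P X Y l k ω ∂P)
      = (1 / l) * ∑ i ∈ Finset.range l, fq U P X Y i := by
  have e := h.lam_range (P := P) hU 0 l
  simp only [add_zero, zero_add] at e
  have hb := h.bd_range (P := P) 0 l
  simp only [add_zero] at hb
  rw [← e, ← lam_cmul hb]
  congr 1; funext k
  simp only [bL]
  rw [integral_div, integral_cE_one (h.fS k k) ((h.fL _ _).sub (h.fL _ _)),
    integral_sub (h.fL _ _).integrable (h.fL _ _).integrable]
  simp only [eL]
  ring

/-- If `X` has entropy rate `a` at most scales and `Y` only has entropy rate `b < a`, then the deficit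
is at least about `a - b` on average. -/
theorem IsSys.mean_deficit (h : IsSys X Y) (hU : (U : Filter ℕ) ≤ atTop) {l0 m : ℕ} (hl0 : 0 < l0)
    (hm : 0 < m) {a : ℝ} (ha : 0 ≤ a) (ha1 : a ≤ 1) {g ε b : ℝ}
    (hg : ∀ k, P.real (strad X Y l0 k) ≤ g)
    (hbad : lam U (fun k => P.real (badX P X l0 a k)) ≤ ε)
    (hb : ∀ᶠ n : ℕ in atTop, - eL P X Y 0 n ≤ b * n) :
    a - b - 1 / m - g - ε ≤ lam U (fun k => ∫ ω, Mv P X Y (m * l0) k ω ∂P) := by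
  have hm' : (0 : ℝ) < m := by exact_mod_cast hm
  have hl0' : (0 : ℝ) < l0 := by exact_mod_cast hl0
  have minf : ∀ k, FM (fun ω => min 1 (aL P X Y (m * l0) k ω)) := fun k =>
    (h.aL_fm (m * l0) k).comp (fun x => min 1 x)
  have bdmin : Bd (fun k => ∫ ω, min 1 (aL P X Y (m * l0) k ω) ∂P) :=
    bd_int (c := 0) (d := 1) minf fun k ω =>
      ⟨le_min zero_le_one ((h.bL_nonneg _ k ω).trans (h.bL_le_aL _ k ω)), min_le_left _ _⟩
  have bdb : Bd (fun k => ∫ ω, bL P X Y (m * l0) k ω ∂P) :=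
    bd_int (c := 0) (d := 1) (fun k => h.bL_fm _ k) fun k ω =>
      ⟨h.bL_nonneg _ k ω, h.bL_le_one _ k ω⟩
  have e0 : lam U (fun k => ∫ ω, Mv P X Y (m * l0) k ω ∂P)
      = lam U (fun k => ∫ ω, min 1 (aL P X Y (m * l0) k ω) ∂P)
        - lam U (fun k => ∫ ω, bL P X Y (m * l0) k ω ∂P) := by
    rw [← lam_sub bdmin bdb]
    congr 1; funext k
    rw [← integral_sub (minf k).integrable (h.bL_fm _ k).integrable]
    rfl
  have e1 : lam U (fun k => ∫ ω, bL P X Y (m * l0) k ω ∂P) ≤ b := by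
    rw [h.lam_bL hU]
    have : ∑ i ∈ Finset.range (m * l0), fq U P X Y i ≤ (m * l0 : ℕ) * b := by
      refine (Finset.sum_le_sum fun i _ => h.fq_le hU hb i).trans ?_
      simp
    have hp : (0 : ℝ) < (m * l0 : ℕ) := by push_cast; positivity
    rw [one_div, inv_mul_le_iff₀ hp]; exact this
  have hpb := bd_prob (P := P) (badX P X l0 a)
  have hbs : Bd (fun k => ∑ j ∈ Finset.range m, P.real (badX P X l0 a (k + j * l0))) :=
    Bd.sum _ fun j _ => hpb.shift (j * l0)
  have e2 : a - 1 / m - g - ε ≤ lam U (fun k => ∫ ω, min 1 (aL P X Y (m * l0) k ω) ∂P) := by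
    have h1 : lam U (fun k => (a - 1 / m - g) - (1 / m) *
        ∑ j ∈ Finset.range m, P.real (badX P X l0 a (k + j * l0)))
        ≤ lam U (fun k => ∫ ω, min 1 (aL P X Y (m * l0) k ω) ∂P) :=
      lam_mono ((Bd.const _).sub (hbs.cmul _)) bdmin
        fun k => h.mean_min_aL hl0 hm ha ha1 k (hg k)
    rw [lam_sub (Bd.const _) (hbs.cmul _), lam_const hU, lam_cmul hbs,
      lam_sum _ (fun j _ => hpb.shift (j * l0)) hU] at h1
    have h2 : ∑ j ∈ Finset.range m, lam U (fun k => P.real (badX P X l0 a (k + j * l0)))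
        ≤ m * ε := by
      refine (Finset.sum_le_sum (g := fun _ => ε) fun j _ => ?_).trans (by simp)
      rw [lam_shift hU hpb (j * l0)]; exact hbad
    have h3 : 1 / (m : ℝ) * ∑ j ∈ Finset.range m,
        lam U (fun k => P.real (badX P X l0 a (k + j * l0))) ≤ ε := by
      rw [one_div, inv_mul_le_iff₀ hm']; exact h2
    linarith
  rw [e0]; linarith

end UUED

/-! ### Forward averages -/

namespace UUED

variable {Ω τ : Type*} [MeasurableSpace Ω]
variable {P : Measure Ω} [IsProbabilityMeasure P]
variable {U : Ultrafilter ℕ}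

/-- Forward averages of a sequence of functions. -/
def AV (M : ℕ → Ω → ℝ) (V k : ℕ) (ω : Ω) : ℝ := (∑ v ∈ Finset.range V, M (k + v) ω) / V

theorem AV_fm {M : ℕ → Ω → ℝ} (hf : ∀ k, FM (M k)) (V k : ℕ) : FM (AV M V k) :=
  (FM.sum _ fun v _ => hf (k + v)).divc V

theorem AV_nonneg {M : ℕ → Ω → ℝ} (h0 : ∀ k ω, 0 ≤ M k ω) (V k : ℕ) (ω : Ω) : 0 ≤ AV M V k ω :=
  div_nonneg (Finset.sum_nonneg fun v _ => h0 _ _) (Nat.cast_nonneg _)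

theorem AV_le_one {M : ℕ → Ω → ℝ} (h1 : ∀ k ω, M k ω ≤ 1) (V k : ℕ) (ω : Ω) : AV M V k ω ≤ 1 := by
  refine div_le_one_of_le₀ ?_ (Nat.cast_nonneg _)
  refine (Finset.sum_le_sum fun v _ => h1 _ _).trans ?_
  simp

theorem sum_shift_le {x : ℕ → ℝ} (h0 : ∀ k, 0 ≤ x k) (h1 : ∀ k, x k ≤ 1) (R v : ℕ) :
    |∑ r ∈ Finset.range R, x (v + r) - ∑ r ∈ Finset.range R, x r| ≤ v := by
  induction v with
  | zero => simp
  | succ v ih =>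
    have e : ∑ r ∈ Finset.range R, x (v + 1 + r) - ∑ r ∈ Finset.range R, x (v + r)
        = x (v + R) - x v := by
      have a1 := Finset.sum_range_succ (fun r => x (v + r)) R
      have a2 := Finset.sum_range_succ' (fun r => x (v + r)) R
      have a3 : ∑ r ∈ Finset.range R, x (v + 1 + r) = ∑ r ∈ Finset.range R, x (v + (r + 1)) :=
        Finset.sum_congr rfl fun r _ => by congr 1; ring
      simp only [add_zero] at a2
      rw [a3]; linarith
    have hb : |x (v + R) - x v| ≤ 1 := by
      rw [abs_le]; constructor <;> linarith [h0 (v + R), h1 (v + R), h0 v, h1 v]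
    push_cast
    calc _ = |(∑ r ∈ Finset.range R, x (v + 1 + r) - ∑ r ∈ Finset.range R, x (v + r))
          + (∑ r ∈ Finset.range R, x (v + r) - ∑ r ∈ Finset.range R, x r)| := by congr 1; ring
      _ ≤ _ := abs_add_le _ _
      _ ≤ v + 1 := by rw [e]; linarith

theorem AV_shift {M : ℕ → Ω → ℝ} (h0 : ∀ k ω, 0 ≤ M k ω) (h1 : ∀ k ω, M k ω ≤ 1) {R : ℕ}
    (k v : ℕ) (ω : Ω) : |AV M R (k + v) ω - AV M R k ω| ≤ v / R := by
  have := sum_shift_le (x := fun r => M (k + r) ω) (fun _ => h0 _ _) (fun _ => h1 _ _) R v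
  simp only [AV, ← sub_div, abs_div, Nat.abs_cast]
  refine div_le_div_of_nonneg_right ?_ (Nat.cast_nonneg R)
  refine le_trans (le_of_eq ?_) this
  simp only [add_assoc]

/-- Averaging the averages: the `R`-average of `AV M V` is close to `AV M R` for large `R`. -/
theorem AV_AV {M : ℕ → Ω → ℝ} (h0 : ∀ k ω, 0 ≤ M k ω) (h1 : ∀ k ω, M k ω ≤ 1) {R V : ℕ}
    (hV : 0 < V) (k p : ℕ) (ω : Ω) :
    |(∑ r ∈ Finset.range R, AV M V (k + p + r) ω) / R - AV M R k ω| ≤ ((V + p : ℕ) : ℝ) / R := by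
  have hV' : (0 : ℝ) < V := by exact_mod_cast hV
  have e : (∑ r ∈ Finset.range R, AV M V (k + p + r) ω) / R
      = (∑ v ∈ Finset.range V, AV M R (k + (p + v)) ω) / V := by
    simp only [AV]
    rw [← Finset.sum_div, ← Finset.sum_div, Finset.sum_comm, div_div, div_div, mul_comm (V : ℝ)]
    congr 1
    refine Finset.sum_congr rfl fun v _ => Finset.sum_congr rfl fun r _ => ?_
    congr 1; ring
  have e2 : (∑ v ∈ Finset.range V, AV M R (k + (p + v)) ω) / V - AV M R k ω
      = (∑ v ∈ Finset.range V, (AV M R (k + (p + v)) ω - AV M R k ω)) / V := by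
    rw [Finset.sum_sub_distrib, sub_div]
    congr 1
    simp; field_simp
  rw [e, e2, abs_div, Nat.abs_cast, div_le_iff₀ hV']
  refine (Finset.abs_sum_le_sum_abs _ _).trans ?_
  refine (Finset.sum_le_sum (g := fun _ => ((V + p : ℕ) : ℝ) / R) fun v hv => ?_).trans ?_
  · refine (AV_shift h0 h1 k (p + v) ω).trans
      (div_le_div_of_nonneg_right ?_ (Nat.cast_nonneg R))
    have := Finset.mem_range.1 hv
    exact_mod_cast (by omega : p + v ≤ V + p)
  · simp [mul_comm]

/-- There are arbitrarily long windows over which the forward averages are almost shift invariant in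
mean square: the mean squares of the averages can be brought close to their infimum over the window
length, and then the parallelogram law applies, as in von Neumann's ergodic theorem. -/
theorem exists_stable_window (hU : (U : Filter ℕ) ≤ atTop) {M : ℕ → Ω → ℝ} (hf : ∀ k, FM (M k))
    (h0 : ∀ k ω, 0 ≤ M k ω) (h1 : ∀ k ω, M k ω ≤ 1) {η : ℝ} (hη : 0 < η) (V1 : ℕ) :
    ∃ V, V1 ≤ V ∧ 0 < V ∧
      ∀ p, lam U (fun k => ∫ ω, (AV M V k ω - AV M V (k + p) ω) ^ 2 ∂P) ≤ η := by
  have Af := fun V k => AV_fm hf V k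
  have A0 := fun V k ω => AV_nonneg h0 V k ω
  have A1 := fun V k ω => AV_le_one h1 V k ω
  set N : ℕ → ℝ := fun V => lam U (fun k => ∫ ω, AV M V k ω ^ 2 ∂P) with hN
  have bdN : ∀ V, Bd (fun k => ∫ ω, AV M V k ω ^ 2 ∂P) := fun V =>
    bd_int (c := 0) (d := 1) (fun k => (Af V k).sq) fun k ω =>
      ⟨sq_nonneg _, by nlinarith [A0 V k ω, A1 V k ω]⟩
  have N0 : ∀ V, 0 ≤ N V := by
    intro V
    rw [← lam_const hU 0]
    exact lam_mono (Bd.const 0) (bdN V) fun k => integral_nonneg fun ω => sq_nonneg _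
  set s : Set ℝ := N '' {V | V1 ≤ V ∧ 0 < V} with hs
  have hsb : BddBelow s := ⟨0, by rintro _ ⟨V, _, rfl⟩; exact N0 V⟩
  have hsn : s.Nonempty := ⟨_, V1 + 1, ⟨Nat.le_succ _, Nat.succ_pos _⟩, rfl⟩
  obtain ⟨_, ⟨V, ⟨hV1, hV0⟩, rfl⟩, hV⟩ := Real.lt_sInf_add_pos hsn (show 0 < η / 4 by positivity)
  refine ⟨V, hV1, hV0, fun p => ?_⟩
  set Q : ℕ → Ω → ℝ := fun k ω => (AV M V k ω + AV M V (k + p) ω) / 2 with hQ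
  have Qf : ∀ k, FM (Q k) := fun k => ((Af V k).add (Af V (k + p))).divc 2
  have bdQ : Bd (fun k => ∫ ω, Q k ω ^ 2 ∂P) :=
    bd_int (c := 0) (d := 1) (fun k => (Qf k).sq) fun k ω =>
      ⟨sq_nonneg _, by
        have := A0 V k ω; have := A1 V k ω; have := A0 V (k + p) ω; have := A1 V (k + p) ω
        simp only [hQ]; nlinarith⟩
  -- the midpoint is not shorter than the infimum
  have key : ∀ R : ℕ, V1 ≤ R → 0 < R →
      sInf s ≤ lam U (fun k => ∫ ω, Q k ω ^ 2 ∂P) + 2 * ((V + p : ℕ) : ℝ) / R := by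
    intro R hR1 hR0
    have hR' : (0 : ℝ) < R := by exact_mod_cast hR0
    refine (csInf_le hsb ⟨R, ⟨hR1, hR0⟩, rfl⟩).trans ?_
    have pt : ∀ k ω, AV M R k ω ^ 2
        ≤ (∑ r ∈ Finset.range R, Q (k + r) ω ^ 2) / R + 2 * ((V + p : ℕ) : ℝ) / R := by
      intro k ω
      set B := (∑ r ∈ Finset.range R, Q (k + r) ω) / R with hB
      have hBA : |B - AV M R k ω| ≤ ((V + p : ℕ) : ℝ) / R := by
        have a1 := AV_AV h0 h1 hV0 (R := R) k 0 ω
        have a2 := AV_AV h0 h1 hV0 (R := R) k p ω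
        have e : B = ((∑ r ∈ Finset.range R, AV M V (k + 0 + r) ω) / R
            + (∑ r ∈ Finset.range R, AV M V (k + p + r) ω) / R) / 2 := by
          have es : ∑ r ∈ Finset.range R, AV M V (k + r + p) ω
              = ∑ r ∈ Finset.range R, AV M V (k + p + r) ω :=
            Finset.sum_congr rfl fun r _ => by rw [show k + r + p = k + p + r by ring]
          simp only [hB, hQ, add_zero]
          rw [← Finset.sum_div, Finset.sum_add_distrib, es]
          ring
        have a3 : ((V + 0 : ℕ) : ℝ) / R ≤ ((V + p : ℕ) : ℝ) / R :=
          div_le_div_of_nonneg_right (by exact_mod_cast Nat.add_le_add_left (Nat.zero_le _) _)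
            hR'.le
        rw [abs_le] at a1 a2 ⊢
        rw [e]
        constructor <;> linarith [a1.1, a1.2, a2.1, a2.2]
      have hB2 : B ^ 2 ≤ (∑ r ∈ Finset.range R, Q (k + r) ω ^ 2) / R := by
        have := sq_sum_le_card_mul_sum_sq (s := Finset.range R) (f := fun r => Q (k + r) ω)
        rw [Finset.card_range] at this
        rw [hB, div_pow, div_le_div_iff₀ (by positivity) hR']
        nlinarith
      have hB0 : 0 ≤ B := div_nonneg (Finset.sum_nonneg fun r _ => by
        simp only [hQ]; have := A0 V (k + r) ω; have := A0 V (k + r + p) ω; positivity) hR'.le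
      have hB1 : B ≤ 1 := by
        refine div_le_one_of_le₀ ((Finset.sum_le_sum (g := fun _ => (1 : ℝ)) fun r _ => ?_).trans
          (by simp)) hR'.le
        simp only [hQ]; have := A1 V (k + r) ω; have := A1 V (k + r + p) ω; linarith
      have : AV M R k ω ^ 2 ≤ B ^ 2 + 2 * |B - AV M R k ω| := by
        have := A0 R k ω; have := A1 R k ω
        rcases abs_cases (B - AV M R k ω) with ⟨e, _⟩ | ⟨e, _⟩ <;> rw [e] <;> nlinarith
      have e2 : 2 * ((V + p : ℕ) : ℝ) / R = 2 * (((V + p : ℕ) : ℝ) / R) := by ring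
      linarith
    have bdS : ∀ r ∈ Finset.range R, Bd (fun k => ∫ ω, Q (k + r) ω ^ 2 ∂P) :=
      fun r _ => bdQ.shift r
    have h2 : N R ≤ lam U (fun k => (1 / R) * (∑ r ∈ Finset.range R, ∫ ω, Q (k + r) ω ^ 2 ∂P)
        + 2 * ((V + p : ℕ) : ℝ) / R) := by
      refine lam_mono (bdN R) (((Bd.sum _ bdS).cmul _).add (Bd.const _)) fun k => ?_
      have := integral_mono (μ := P) (Af R k).sq.integrable
        (((FM.sum (Finset.range R) fun r _ => (Qf (k + r)).sq).divc R).add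
          (FM.const (2 * ((V + p : ℕ) : ℝ) / R))).integrable (fun ω => pt k ω)
      rw [integral_add ((FM.sum (Finset.range R) fun r _ => (Qf (k + r)).sq).divc R).integrable
        (integrable_const _), integral_div,
        integral_finsetSum _ (fun r _ => (Qf (k + r)).sq.integrable)] at this
      refine this.trans (le_of_eq ?_)
      simp; ring
    rw [lam_add ((Bd.sum _ bdS).cmul _) (Bd.const _), lam_const hU, lam_cmul (Bd.sum _ bdS),
      lam_sum _ bdS hU] at h2
    refine h2.trans (le_of_eq ?_)
    congr 1
    rw [Finset.sum_congr rfl fun r _ => lam_shift hU bdQ r]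
    simp; field_simp
  have key2 : sInf s ≤ lam U (fun k => ∫ ω, Q k ω ^ 2 ∂P) := by
    have ht : Tendsto (fun R : ℕ => lam U (fun k => ∫ ω, Q k ω ^ 2 ∂P)
        + 2 * ((V + p : ℕ) : ℝ) / R) atTop
        (nhds (lam U (fun k => ∫ ω, Q k ω ^ 2 ∂P) + 0)) :=
      tendsto_const_nhds.add (tendsto_const_div_atTop_nhds_zero_nat _)
    rw [add_zero] at ht
    refine ge_of_tendsto ht ?_
    filter_upwards [eventually_ge_atTop V1, eventually_gt_atTop 0] with R a b using key R a b
  -- parallelogram law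
  have e : (fun k => ∫ ω, (AV M V k ω - AV M V (k + p) ω) ^ 2 ∂P)
      = fun k => 2 * ∫ ω, AV M V k ω ^ 2 ∂P + 2 * ∫ ω, AV M V (k + p) ω ^ 2 ∂P
        - 4 * ∫ ω, Q k ω ^ 2 ∂P := by
    funext k
    rw [← integral_const_mul, ← integral_const_mul, ← integral_const_mul,
      ← integral_add ((Af V k).sq.cmul 2).integrable ((Af V (k + p)).sq.cmul 2).integrable,
      ← integral_sub (((Af V k).sq.cmul 2).add ((Af V (k + p)).sq.cmul 2)).integrable
        ((Qf k).sq.cmul 4).integrable]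
    congr 1; funext ω
    simp only [hQ]; ring
  have bN' : Bd (fun k => ∫ ω, AV M V (k + p) ω ^ 2 ∂P) := (bdN V).shift p
  rw [e, lam_sub (((bdN V).cmul 2).add (bN'.cmul 2)) (bdQ.cmul 4),
    lam_add ((bdN V).cmul 2) (bN'.cmul 2), lam_cmul (bdN V), lam_cmul bN', lam_cmul bdQ,
    lam_shift hU (bdN V) p]
  have : lam U (fun k => ∫ ω, AV M V k ω ^ 2 ∂P) < sInf s + η / 4 := hV
  linarith

end UUED

/-! ### Lower bound for the mean of `D1 * D2` -/

namespace UUED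

variable {Ω τ : Type*} [MeasurableSpace Ω]
variable {P : Measure Ω} [IsProbabilityMeasure P] {X : ℕ → Ω → τ} {Y : ℕ → Ω → ℤ}
variable {U : Ultrafilter ℕ}

/-- Normalized conditional entropy of `X` over `l` scales, given that `Y` is known to depth `p`. -/
def D1 (P : Measure Ω) (X : ℕ → Ω → τ) (Y : ℕ → Ω → ℤ) (l p k : ℕ) (ω : Ω) : ℝ :=
  cE P (Sv X Y k (k + p)) (fun x => Lg P X Y k (k + p) x - Lg P X Y (k + l) (k + p) x) ω / l

/-- Normalized entropy defect of the next `V` digits of `Y` beyond depth `p`. -/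
def D2 (P : Measure Ω) (X : ℕ → Ω → τ) (Y : ℕ → Ω → ℤ) (V p k : ℕ) (ω : Ω) : ℝ :=
  1 - cE P (Sv X Y k (k + p)) (fun x => Lg P X Y k (k + p) x - Lg P X Y k (k + p + V) x) ω / V

theorem D1_dep (l p k : ℕ) : Dep (D1 P X Y l p k) (Sv X Y k (k + p)) :=
  (cE_dep _ _).comp (fun x => x / l)
theorem D2_dep (V p k : ℕ) : Dep (D2 P X Y V p k) (Sv X Y k (k + p)) :=
  (cE_dep _ _).comp (fun x => 1 - x / V)

theorem IsSys.D1_fm (h : IsSys X Y) (l p k : ℕ) : FM (D1 P X Y l p k) :=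
  (h.fS _ _).dep (D1_dep l p k)
theorem IsSys.D2_fm (h : IsSys X Y) (V p k : ℕ) : FM (D2 P X Y V p k) :=
  (h.fS _ _).dep (D2_dep V p k)

theorem IsSys.D1_nonneg (h : IsSys X Y) (l p k : ℕ) (ω : Ω) : 0 ≤ D1 P X Y l p k ω := by
  refine div_nonneg (cE_nonneg ?_ ω) (Nat.cast_nonneg l)
  filter_upwards [h.Lanti (P := P) (Nat.le_add_right k l) (le_refl (k + p))] with x hx
  exact sub_nonneg.2 hx

theorem IsSys.D1_le (h : IsSys X Y) (l p k : ℕ) (ω : Ω) : D1 P X Y l p k ω ≤ 2 := by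
  refine div_le_of_le_mul₀ (Nat.cast_nonneg l) (by norm_num)
    (cE_le_of (h.fS _ _) (by positivity) (fun w hw0 hw => ?_) ω)
  exact h.e4 k (k + p) l hw0 hw

theorem IsSys.D2_le (h : IsSys X Y) (V p k : ℕ) (ω : Ω) : D2 P X Y V p k ω ≤ 1 := by
  have : 0 ≤ cE P (Sv X Y k (k + p))
      (fun x => Lg P X Y k (k + p) x - Lg P X Y k (k + p + V) x) ω / V := by
    refine div_nonneg (cE_nonneg ?_ ω) (Nat.cast_nonneg V)
    filter_upwards [h.Lanti (P := P) (le_refl k) (Nat.le_add_right (k + p) V)] with x hx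
    exact sub_nonneg.2 hx
  unfold D2; linarith

theorem IsSys.D2_nonneg (h : IsSys X Y) (V p k : ℕ) (ω : Ω) : 0 ≤ D2 P X Y V p k ω := by
  have : cE P (Sv X Y k (k + p))
      (fun x => Lg P X Y k (k + p) x - Lg P X Y k (k + p + V) x) ω / V ≤ 1 := by
    refine div_le_one_of_le₀ (cE_le_of (h.fS _ _) (Nat.cast_nonneg V) (fun w hw0 hw => ?_) ω)
      (Nat.cast_nonneg V)
    exact h.e3 k (k + p) V hw0 hw
  unfold D2; linarith

theorem IsSys.int_D1 (h : IsSys X Y) {l : ℕ} (hl : 0 < l) (p k : ℕ) {w : Ω → ℝ}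
    (hw : Dep w (Sv X Y k (k + p))) :
    l * ∫ ω, w ω * D1 P X Y l p k ω ∂P
      = ∫ ω, w ω * (Lg P X Y k (k + p) ω - Lg P X Y (k + l) (k + p) ω) ∂P := by
  have hl' : (l : ℝ) ≠ 0 := by exact_mod_cast hl.ne'
  rw [← integral_cE (h.fS _ _) ((h.fL _ _).sub (h.fL _ _)) hw, ← integral_const_mul]
  congr 1; funext ω
  simp only [D1]; field_simp

theorem IsSys.int_bL (h : IsSys X Y) {l : ℕ} (hl : 0 < l) (k : ℕ) {w : Ω → ℝ}
    (hw : Dep w (Sv X Y k k)) :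
    l * ∫ ω, w ω * bL P X Y l k ω ∂P
      = ∫ ω, w ω * (Lg P X Y k k ω - Lg P X Y k (k + l) ω) ∂P := by
  have hl' : (l : ℝ) ≠ 0 := by exact_mod_cast hl.ne'
  rw [← integral_cE (h.fS _ _) ((h.fL _ _).sub (h.fL _ _)) hw, ← integral_const_mul]
  congr 1; funext ω
  simp only [bL]; field_simp

theorem IsSys.int_aL (h : IsSys X Y) {l : ℕ} (hl : 0 < l) (k : ℕ) {w : Ω → ℝ}
    (hw : Dep w (Sv X Y k k)) :
    l * ∫ ω, w ω * aL P X Y l k ω ∂P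
      = ∫ ω, w ω * (Lg P X Y k k ω - Lg P X Y (k + l) (k + l) ω) ∂P := by
  have hl' : (l : ℝ) ≠ 0 := by exact_mod_cast hl.ne'
  rw [← integral_cE (h.fS _ _) ((h.fL _ _).sub (h.fL _ _)) hw, ← integral_const_mul]
  congr 1; funext ω
  simp only [aL]; field_simp

theorem IsSys.int_D2 (h : IsSys X Y) {V : ℕ} (hV : 0 < V) (p k : ℕ) {w : Ω → ℝ}
    (hw : Dep w (Sv X Y k (k + p))) :
    V * ∫ ω, w ω * (1 - D2 P X Y V p k ω) ∂P
      = ∫ ω, w ω * (Lg P X Y k (k + p) ω - Lg P X Y k (k + p + V) ω) ∂P := by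
  have hl' : (V : ℝ) ≠ 0 := by exact_mod_cast hV.ne'
  rw [← integral_cE (h.fS _ _) ((h.fL _ _).sub (h.fL _ _)) hw, ← integral_const_mul]
  congr 1; funext ω
  simp only [D2]; field_simp; ring

/-- Chain rule comparison over a window of `V` scales. -/
theorem IsSys.Delta (h : IsSys X Y) {l : ℕ} (hl : 0 < l) (k u V : ℕ) (hku : k ≤ u) {w : Ω → ℝ}
    (hw0 : ∀ ω, 0 ≤ w ω) (hw : Dep w (Sv X Y k u)) :
    ∑ i ∈ Finset.range V, ∫ ω, w ω * bL P X Y l (u + i) ω ∂P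
      ≤ ∫ ω, w ω * (Lg P X Y k u ω - Lg P X Y k (u + V) ω) ∂P + l * ∫ ω, w ω ∂P := by
  have wf : FM w := (h.fS k u).dep hw
  have hl' : (0 : ℝ) < l := by exact_mod_cast hl
  have s1 : l * ∑ i ∈ Finset.range V, ∫ ω, w ω * bL P X Y l (u + i) ω ∂P
      ≤ ∑ i ∈ Finset.range V,
        ∫ ω, w ω * (Lg P X Y k (u + i) ω - Lg P X Y k (u + i + l) ω) ∂P := by
    rw [Finset.mul_sum]
    refine Finset.sum_le_sum fun i _ => ?_
    have hd : Dep w (Sv X Y (u + i) (u + i)) :=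
      hw.trans (h.dS (hku.trans (Nat.le_add_right _ _)) (Nat.le_add_right _ _))
    rw [h.int_bL hl (u + i) hd]
    exact h.e1 (hku.trans (Nat.le_add_right _ _)) (Nat.le_add_right _ _) hw0 hd
  have s2 : ∑ i ∈ Finset.range V,
        ∫ ω, w ω * (Lg P X Y k (u + i) ω - Lg P X Y k (u + i + l) ω) ∂P
      ≤ l * ∫ ω, w ω * (Lg P X Y k u ω - Lg P X Y k (u + V + l) ω) ∂P := by
    rw [← integral_finsetSum _ (fun i _ => (wf.mul ((h.fL _ _).sub (h.fL _ _))).integrable),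
      ← integral_const_mul]
    refine integral_mono_ae (FM.sum _ fun i _ => wf.mul ((h.fL _ _).sub (h.fL _ _))).integrable
      ((wf.mul ((h.fL _ _).sub (h.fL _ _))).cmul l).integrable ?_
    have a1 : ∀ᵐ ω ∂P, ∀ j ∈ Finset.range l, Lg P X Y k (u + j) ω ≤ Lg P X Y k u ω := by
      rw [Finset.eventually_all]
      exact fun j _ => h.Lanti le_rfl (Nat.le_add_right _ _)
    have a2 : ∀ᵐ ω ∂P, ∀ j ∈ Finset.range l,
        Lg P X Y k (u + V + l) ω ≤ Lg P X Y k (u + V + j) ω := by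
      rw [Finset.eventually_all]
      exact fun j hj => h.Lanti le_rfl (Nat.add_le_add_left (Finset.mem_range.1 hj).le _)
    filter_upwards [a1, a2] with ω h1 h2
    rw [← Finset.mul_sum]
    have e : ∑ i ∈ Finset.range V, (Lg P X Y k (u + i) ω - Lg P X Y k (u + i + l) ω)
        = ∑ j ∈ Finset.range l, (Lg P X Y k (u + j) ω - Lg P X Y k (u + V + j) ω) := by
      have b1 := Finset.sum_range_add (fun i => Lg P X Y k (u + i) ω) V l
      have b2 := Finset.sum_range_add (fun i => Lg P X Y k (u + i) ω) l V
      rw [add_comm l V, b1] at b2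
      rw [Finset.sum_sub_distrib, Finset.sum_sub_distrib]
      have b3 : ∑ i ∈ Finset.range V, Lg P X Y k (u + i + l) ω
          = ∑ i ∈ Finset.range V, Lg P X Y k (u + (l + i)) ω :=
        Finset.sum_congr rfl fun i _ => by rw [show u + i + l = u + (l + i) by ring]
      have b4 : ∑ i ∈ Finset.range l, Lg P X Y k (u + V + i) ω
          = ∑ i ∈ Finset.range l, Lg P X Y k (u + (V + i)) ω :=
        Finset.sum_congr rfl fun i _ => by rw [add_assoc]
      rw [b3, b4]; linarith
    rw [e]
    have : ∑ j ∈ Finset.range l, (Lg P X Y k (u + j) ω - Lg P X Y k (u + V + j) ω)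
        ≤ l * (Lg P X Y k u ω - Lg P X Y k (u + V + l) ω) := by
      refine (Finset.sum_le_sum (g := fun _ => Lg P X Y k u ω - Lg P X Y k (u + V + l) ω)
        fun j hj => ?_).trans (by rw [Finset.sum_const, Finset.card_range, nsmul_eq_mul])
      linarith [h1 j hj, h2 j hj]
    calc _ ≤ w ω * (l * (Lg P X Y k u ω - Lg P X Y k (u + V + l) ω)) :=
          mul_le_mul_of_nonneg_left this (hw0 ω)
      _ = _ := by ring
  have s3 : ∫ ω, w ω * (Lg P X Y k u ω - Lg P X Y k (u + V + l) ω) ∂P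
      ≤ ∫ ω, w ω * (Lg P X Y k u ω - Lg P X Y k (u + V) ω) ∂P + l * ∫ ω, w ω ∂P := by
    have h1 := h.e3 (P := P) k (u + V) l hw0 (hw.trans (h.dS le_rfl (Nat.le_add_right u V)))
    have e : ∫ ω, w ω * (Lg P X Y k u ω - Lg P X Y k (u + V + l) ω) ∂P
        = ∫ ω, w ω * (Lg P X Y k u ω - Lg P X Y k (u + V) ω) ∂P
        + ∫ ω, w ω * (Lg P X Y k (u + V) ω - Lg P X Y k (u + V + l) ω) ∂P := by
      rw [← integral_add (wf.mul ((h.fL _ _).sub (h.fL _ _))).integrable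
        (wf.mul ((h.fL _ _).sub (h.fL _ _))).integrable]
      congr 1; funext ω; ring
    linarith
  have := (s1.trans s2).trans (mul_le_mul_of_nonneg_left s3 hl'.le)
  exact le_of_mul_le_mul_left this hl'

/-- `D2` dominates the forward average of the deficit, up to the variation of the digit entropies of
`Y`. -/
theorem IsSys.stepB (h : IsSys X Y) {l V : ℕ} (hl : 0 < l) (hV : 0 < V) (p k : ℕ) :
    ∫ ω, D1 P X Y l p k ω * AV (Mv P X Y l) V (k + p) ω ∂P
      - (2 * ((eL P X Y k (k + p) - eL P X Y k (k + p + V))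
          - ∑ i ∈ Finset.range V, ∫ ω, bL P X Y l (k + p + i) ω ∂P) + 2 * l) / V
      ≤ ∫ ω, D1 P X Y l p k ω * D2 P X Y V p k ω ∂P := by
  have hV' : (0 : ℝ) < V := by exact_mod_cast hV
  have d1 := h.D1_fm (P := P) l p k
  have d2 := h.D2_fm (P := P) V p k
  have Lf := fun i j => h.fL (P := P) i j
  set u := k + p with hu
  set d : Ω → ℝ := D1 P X Y l p k with hd
  set r : Ω → ℝ := fun ω => Lg P X Y k u ω - Lg P X Y k (u + V) ω with hr
  have rf : FM r := (Lf _ _).sub (Lf _ _)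
  have h1 := h.Delta (P := P) hl k u V (Nat.le_add_right _ _) (w := fun ω => 2 - d ω)
    (fun ω => sub_nonneg.2 (h.D1_le l p k ω)) ((D1_dep l p k).comp (fun x => 2 - x))
  have bf := fun i => h.bL_fm (P := P) l (u + i)
  have e1 : ∀ i, ∫ ω, (2 - d ω) * bL P X Y l (u + i) ω ∂P
      = 2 * ∫ ω, bL P X Y l (u + i) ω ∂P - ∫ ω, d ω * bL P X Y l (u + i) ω ∂P := by
    intro i
    rw [← integral_const_mul, ← integral_sub ((bf i).cmul 2).integrable (d1.mul (bf i)).integrable]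
    congr 1; funext ω; ring
  have e2 : ∫ ω, (2 - d ω) * r ω ∂P = 2 * ∫ ω, r ω ∂P - ∫ ω, d ω * r ω ∂P := by
    rw [← integral_const_mul, ← integral_sub (rf.cmul 2).integrable (d1.mul rf).integrable]
    congr 1; funext ω; ring
  have e3 : ∫ ω, (2 - d ω) ∂P ≤ 2 := by
    rw [integral_sub (integrable_const _) d1.integrable]
    have : 0 ≤ ∫ ω, d ω ∂P := integral_nonneg fun ω => h.D1_nonneg l p k ω
    simpa using this
  have e4 : ∫ ω, r ω ∂P = eL P X Y k u - eL P X Y k (u + V) := by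
    rw [h.eL_sub]; simp [hr]
  have e5 : ∫ ω, d ω * r ω ∂P = V * ∫ ω, d ω * (1 - D2 P X Y V p k ω) ∂P :=
    (h.int_D2 hV p k (D1_dep l p k)).symm
  have e6 : ∫ ω, d ω * (1 - D2 P X Y V p k ω) ∂P
      = ∫ ω, d ω ∂P - ∫ ω, d ω * D2 P X Y V p k ω ∂P := by
    rw [← integral_sub d1.integrable (d1.mul d2).integrable]
    congr 1; funext ω; ring
  have Mf := fun i => h.Mv_fm (P := P) l (u + i)
  have e7 : ∑ i ∈ Finset.range V, ∫ ω, d ω * bL P X Y l (u + i) ω ∂P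
      ≤ V * ∫ ω, d ω ∂P - V * ∫ ω, d ω * AV (Mv P X Y l) V u ω ∂P := by
    have a1 : ∀ i ∈ Finset.range V, ∫ ω, d ω * bL P X Y l (u + i) ω ∂P
        ≤ ∫ ω, d ω ∂P - ∫ ω, d ω * Mv P X Y l (u + i) ω ∂P := by
      intro i _
      rw [← integral_sub d1.integrable (d1.mul (Mf i)).integrable]
      refine integral_mono (d1.mul (bf i)).integrable (d1.sub (d1.mul (Mf i))).integrable fun ω => ?_
      have := Mv_le (P := P) (X := X) (Y := Y) l (u + i) ω
      have h0 := h.D1_nonneg (P := P) l p k ω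
      have : d ω * bL P X Y l (u + i) ω ≤ d ω * (1 - Mv P X Y l (u + i) ω) :=
        mul_le_mul_of_nonneg_left (by linarith) h0
      simp only; linarith
    refine (Finset.sum_le_sum a1).trans (le_of_eq ?_)
    rw [Finset.sum_sub_distrib, ← integral_finsetSum _ (fun i _ => (d1.mul (Mf i)).integrable)]
    congr 1
    · simp
    · rw [← integral_const_mul]
      congr 1; funext ω
      simp only [AV]
      rw [Finset.sum_div, Finset.mul_sum, Finset.mul_sum]
      refine Finset.sum_congr rfl fun i _ => ?_
      field_simp
  rw [e2] at h1
  simp only [e1] at h1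
  rw [Finset.sum_sub_distrib, ← Finset.mul_sum, e4, e5, e6] at h1
  have h2 : (l : ℝ) * ∫ ω, (2 - d ω) ∂P ≤ l * 2 :=
    mul_le_mul_of_nonneg_left e3 (Nat.cast_nonneg _)
  rw [sub_le_comm, div_eq_mul_inv, ← sub_nonneg]
  have : 0 ≤ V * ((2 * ((eL P X Y k u - eL P X Y k (u + V))
          - ∑ i ∈ Finset.range V, ∫ ω, bL P X Y l (u + i) ω ∂P) + 2 * l) * (V : ℝ)⁻¹ -
      (∫ ω, d ω * AV (Mv P X Y l) V u ω ∂P - ∫ ω, d ω * D2 P X Y V p k ω ∂P)) := by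
    rw [mul_sub, mul_comm _ (V : ℝ)⁻¹, mul_inv_cancel_left₀ hV'.ne']
    linarith
  exact nonneg_of_mul_nonneg_right this hV'

/-- `D1` dominates the deficit, up to the variation of the digit entropies of `Y`. -/
theorem IsSys.stepC (h : IsSys X Y) {l p : ℕ} (hl : 0 < l) (hp : l ≤ p) (k : ℕ) {w : Ω → ℝ}
    (hw0 : ∀ ω, 0 ≤ w ω) (hw1 : ∀ ω, w ω ≤ 1) (hw : Dep w (Sv X Y k k)) :
    ∫ ω, w ω * Mv P X Y l k ω ∂P
      - ((eL P X Y k (k + l) - eL P X Y k (k + p))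
        - (eL P X Y (k + l) (k + l) - eL P X Y (k + l) (k + p))) / l
      ≤ ∫ ω, w ω * D1 P X Y l p k ω ∂P := by
  have hl' : (0 : ℝ) < l := by exact_mod_cast hl
  have wf : FM w := (h.fS k k).dep hw
  have Lf := fun i j => h.fL (P := P) i j
  have hdk : Dep w (Sv X Y k (k + p)) := hw.trans (h.dS le_rfl (Nat.le_add_right _ _))
  have hdl : Dep w (Sv X Y (k + l) (k + l)) :=
    hw.trans (h.dS (Nat.le_add_right _ _) (Nat.le_add_right _ _))
  have g1 := h.e1 (P := P) (k := k) (k' := k + l) (i := k + l) (j := k + p) (Nat.le_add_right _ _)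
    (Nat.add_le_add_left hp k) (w := fun ω => 1 - w ω) (fun ω => sub_nonneg.2 (hw1 ω))
    (hdl.comp (fun x => 1 - x))
  have e1 : ∀ i j i' j', ∫ ω, (1 - w ω) * (Lg P X Y i j ω - Lg P X Y i' j' ω) ∂P
      = (eL P X Y i j - eL P X Y i' j') - ∫ ω, w ω * (Lg P X Y i j ω - Lg P X Y i' j' ω) ∂P := by
    intro i j i' j'
    rw [h.eL_sub, ← integral_sub (((Lf i j).sub (Lf i' j')).cmul 1).integrable
      (wf.mul ((Lf i j).sub (Lf i' j'))).integrable]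
    congr 1; funext ω; ring
  rw [e1, e1] at g1
  have e2 := h.int_D1 (P := P) hl p k hdk
  have e3 : l * ∫ ω, w ω * Mv P X Y l k ω ∂P
      ≤ ∫ ω, w ω * (Lg P X Y k (k + l) ω - Lg P X Y (k + l) (k + l) ω) ∂P := by
    have a1 : ∫ ω, w ω * Mv P X Y l k ω ∂P
        ≤ ∫ ω, w ω * aL P X Y l k ω ∂P - ∫ ω, w ω * bL P X Y l k ω ∂P := by
      rw [← integral_sub (wf.mul (h.aL_fm l k)).integrable (wf.mul (h.bL_fm l k)).integrable]
      refine integral_mono (wf.mul (h.Mv_fm l k)).integrable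
        ((wf.mul (h.aL_fm l k)).sub (wf.mul (h.bL_fm l k))).integrable fun ω => ?_
      simp only
      rw [← mul_sub]
      exact mul_le_mul_of_nonneg_left (sub_le_sub_right (min_le_right _ _) _) (hw0 ω)
    have a2 := h.int_aL (P := P) hl k hw
    have a3 := h.int_bL (P := P) hl k hw
    have a4 : ∫ ω, w ω * (Lg P X Y k (k + l) ω - Lg P X Y (k + l) (k + l) ω) ∂P
        = ∫ ω, w ω * (Lg P X Y k k ω - Lg P X Y (k + l) (k + l) ω) ∂P
        - ∫ ω, w ω * (Lg P X Y k k ω - Lg P X Y k (k + l) ω) ∂P := by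
      rw [← integral_sub (wf.mul ((Lf _ _).sub (Lf _ _))).integrable
        (wf.mul ((Lf _ _).sub (Lf _ _))).integrable]
      congr 1; funext ω; ring
    rw [a4, ← a2, ← a3, ← mul_sub]
    exact mul_le_mul_of_nonneg_left a1 hl'.le
  have e4 : ∫ ω, w ω * (Lg P X Y k (k + l) ω - Lg P X Y (k + l) (k + l) ω) ∂P
      + ∫ ω, w ω * (Lg P X Y (k + l) (k + l) ω - Lg P X Y (k + l) (k + p) ω) ∂P
      = ∫ ω, w ω * (Lg P X Y k (k + l) ω - Lg P X Y k (k + p) ω) ∂P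
      + ∫ ω, w ω * (Lg P X Y k (k + p) ω - Lg P X Y (k + l) (k + p) ω) ∂P := by
    rw [← integral_add (wf.mul ((Lf _ _).sub (Lf _ _))).integrable
        (wf.mul ((Lf _ _).sub (Lf _ _))).integrable,
      ← integral_add (wf.mul ((Lf _ _).sub (Lf _ _))).integrable
        (wf.mul ((Lf _ _).sub (Lf _ _))).integrable]
    congr 1; funext ω; ring
  refine le_of_mul_le_mul_left ?_ hl'
  rw [mul_sub, mul_div_cancel₀ _ hl'.ne', e2]
  linarith

/-- Lower bound for the mean of `D1 * D2`. -/
theorem IsSys.D1_mul_D2_lower (h : IsSys X Y) (hU : (U : Filter ℕ) ≤ atTop) {l V p : ℕ} (hl : 0 < l)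
    (hV : 0 < V) (hp : l ≤ p) {η : ℝ} (hη : 0 < η)
    (hf : ∀ q, fq U P X Y q - η ≤ (1 / l) * ∑ i ∈ Finset.range l, fq U P X Y i)
    (herg : ∀ q, lam U (fun k => ∫ ω, (AV (Mv P X Y l) V k ω - AV (Mv P X Y l) V (k + q) ω) ^ 2 ∂P)
      ≤ η ^ 2) :
    (lam U (fun k => ∫ ω, Mv P X Y l k ω ∂P)) ^ 2 - 6 * η - 2 * l / V
      ≤ lam U (fun k => ∫ ω, D1 P X Y l p k ω * D2 P X Y V p k ω ∂P) := by
  have hl' : (0 : ℝ) < l := by exact_mod_cast hl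
  have hV' : (0 : ℝ) < V := by exact_mod_cast hV
  set M := Mv P X Y l with hM
  set A := AV M V with hA
  set c := lam U (fun k => ∫ ω, M k ω ∂P) with hc
  set F := (1 / (l : ℝ)) * ∑ i ∈ Finset.range l, fq U P X Y i with hF
  set DD := D1 P X Y l p with hDD
  have Mf : ∀ k, FM (M k) := fun k => h.Mv_fm l k
  have M0 : ∀ k ω, 0 ≤ M k ω := fun k ω => h.Mv_nonneg l k ω
  have M1 : ∀ k ω, M k ω ≤ 1 := fun k ω => h.Mv_le_one l k ω
  have Af : ∀ k, FM (A k) := fun k => AV_fm Mf V k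
  have A0 : ∀ k ω, 0 ≤ A k ω := fun k ω => AV_nonneg M0 V k ω
  have A1 : ∀ k ω, A k ω ≤ 1 := fun k ω => AV_le_one M1 V k ω
  have Df : ∀ k, FM (DD k) := fun k => h.D1_fm l p k
  have D0 : ∀ k ω, 0 ≤ DD k ω := fun k ω => h.D1_nonneg l p k ω
  have D1' : ∀ k ω, DD k ω ≤ 2 := fun k ω => h.D1_le l p k ω
  have D2f : ∀ k, FM (D2 P X Y V p k) := fun k => h.D2_fm V p k
  have bdDD2 : Bd (fun k => ∫ ω, DD k ω * D2 P X Y V p k ω ∂P) :=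
    bd_int (c := 0) (d := 2) (fun k => (Df k).mul (D2f k)) fun k ω =>
      ⟨mul_nonneg (D0 k ω) (h.D2_nonneg V p k ω), by
        nlinarith [D0 k ω, D1' k ω, h.D2_nonneg (P := P) V p k ω, h.D2_le (P := P) V p k ω]⟩
  have bdDA : ∀ i j, Bd (fun k => ∫ ω, DD (k + i) ω * A (k + j) ω ∂P) := fun i j =>
    bd_int (c := 0) (d := 2) (fun k => (Df _).mul (Af _)) fun k ω =>
      ⟨mul_nonneg (D0 _ ω) (A0 _ ω), by
        nlinarith [D0 (k + i) ω, D1' (k + i) ω, A0 (k + j) ω, A1 (k + j) ω]⟩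
  have bdMA : ∀ i j, Bd (fun k => ∫ ω, M (k + i) ω * A (k + j) ω ∂P) := fun i j =>
    bd_int (c := 0) (d := 1) (fun k => (Mf _).mul (Af _)) fun k ω =>
      ⟨mul_nonneg (M0 _ ω) (A0 _ ω), by
        nlinarith [M0 (k + i) ω, M1 (k + i) ω, A0 (k + j) ω, A1 (k + j) ω]⟩
  have bdE : ∀ q, Bd (fun k => ∫ ω, (A k ω - A (k + q) ω) ^ 2 ∂P) := fun q =>
    bd_int (c := 0) (d := 1) (fun k => ((Af _).sub (Af _)).sq) fun k ω =>
      ⟨sq_nonneg _, by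
        nlinarith [A0 k ω, A1 k ω, A0 (k + q) ω, A1 (k + q) ω]⟩
  have bdb : Bd (fun k => ∫ ω, bL P X Y l k ω ∂P) :=
    bd_int (c := 0) (d := 1) (fun k => h.bL_fm _ k) fun k ω =>
      ⟨h.bL_nonneg _ k ω, h.bL_le_one _ k ω⟩
  -- the bounds of `stepB`, averaged over the scales
  have sB : lam U (fun k => ∫ ω, DD k ω * A (k + p) ω ∂P) - 2 * η - 2 * l / V
      ≤ lam U (fun k => ∫ ω, DD k ω * D2 P X Y V p k ω ∂P) := by
    have bd1 := h.bd_range (P := P) p V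
    have bd2' : ∀ i ∈ Finset.range V, Bd (fun k => ∫ ω, bL P X Y l (k + p + i) ω ∂P) := fun i _ => by
      simpa only [add_assoc] using bdb.shift (p + i)
    have bd2 := Bd.sum (Finset.range V) bd2'
    have bdDA0 : Bd (fun k => ∫ ω, DD k ω * A (k + p) ω ∂P) := bdDA 0 p
    have h1 := lam_mono (U := U) (bdDA0.sub ((((bd1.sub bd2).cmul 2).add
      (Bd.const (2 * (l : ℝ)))).cmul (1 / V))) bdDD2 (fun k => by
        have := h.stepB (P := P) hl hV p k
        rw [div_eq_mul_one_div, mul_comm _ (1 / (V : ℝ))] at this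
        exact this)
    rw [lam_sub bdDA0 ((((bd1.sub bd2).cmul 2).add (Bd.const (2 * (l : ℝ)))).cmul (1 / V)),
      lam_cmul (((bd1.sub bd2).cmul 2).add (Bd.const (2 * (l : ℝ)))),
      lam_add ((bd1.sub bd2).cmul 2) (Bd.const _), lam_const hU, lam_cmul (bd1.sub bd2),
      lam_sub bd1 bd2, h.lam_range hU, lam_sum _ bd2' hU] at h1
    have h2 : ∑ i ∈ Finset.range V, lam U (fun k => ∫ ω, bL P X Y l (k + p + i) ω ∂P) = V * F := by
      have : ∀ i ∈ Finset.range V, lam U (fun k => ∫ ω, bL P X Y l (k + p + i) ω ∂P) = F := by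
        intro i _
        have := lam_shift hU bdb (p + i)
        simp only [← add_assoc] at this
        rw [this, h.lam_bL hU]
      rw [Finset.sum_congr rfl this]; simp
    have h3 : ∑ i ∈ Finset.range V, fq U P X Y (p + i) ≤ V * (F + η) := by
      refine (Finset.sum_le_sum (g := fun _ => F + η) fun i _ => ?_).trans (by rw [Finset.sum_const, Finset.card_range, nsmul_eq_mul])
      linarith [hf (p + i)]
    rw [h2] at h1
    refine le_trans ?_ h1
    have h4 : 1 / (V : ℝ) * (2 * (∑ i ∈ Finset.range V, fq U P X Y (p + i) - V * F) + 2 * l)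
        ≤ 1 / (V : ℝ) * (2 * (V * η) + 2 * l) :=
      mul_le_mul_of_nonneg_left (by linarith) (by positivity)
    have h5 : 1 / (V : ℝ) * (2 * (V * η) + 2 * l) = 2 * η + 2 * l / V := by field_simp
    linarith
  -- ergodic comparison: replacing `A (k + j)` by `A (k + i)`, `i ≤ j`, against a bounded weight
  have cmp : ∀ (G : ℕ → Ω → ℝ) (B : ℝ), 0 < B → (∀ k, FM (G k)) → (∀ k ω, 0 ≤ G k ω) →
      (∀ k ω, G k ω ≤ B) → ∀ q,
      lam U (fun k => ∫ ω, G k ω * A k ω ∂P) - B * η ≤ lam U (fun k => ∫ ω, G k ω * A (k + q) ω ∂P)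
      ∧ lam U (fun k => ∫ ω, G k ω * A (k + q) ω ∂P) - B * η
        ≤ lam U (fun k => ∫ ω, G k ω * A k ω ∂P) := by
    intro G B hB Gf G0 G1 q
    have b1 : ∀ j, Bd (fun k => ∫ ω, G k ω * A (k + j) ω ∂P) := fun j =>
      bd_int (c := 0) (d := B) (fun k => (Gf _).mul (Af _)) fun k ω =>
        ⟨mul_nonneg (G0 _ ω) (A0 _ ω), by
          nlinarith [G0 k ω, G1 k ω, A0 (k + j) ω, A1 (k + j) ω]⟩
    have pt : ∀ k ω, |G k ω * A k ω - G k ω * A (k + q) ω|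
        ≤ B / 2 * η + B / (2 * η) * (A k ω - A (k + q) ω) ^ 2 := by
      intro k ω
      set t := A k ω - A (k + q) ω with ht
      have e : G k ω * A k ω - G k ω * A (k + q) ω = G k ω * t := by rw [ht]; ring
      rw [e, abs_mul, abs_of_nonneg (G0 k ω)]
      have h1 : G k ω * |t| ≤ B * |t| := mul_le_mul_of_nonneg_right (G1 k ω) (abs_nonneg t)
      have h2 : |t| ≤ η / 2 + t ^ 2 / (2 * η) := by
        have : t ^ 2 / (2 * η) = |t| ^ 2 / (2 * η) := by rw [sq_abs]
        rw [this, div_add_div _ _ (by norm_num) (by positivity), le_div_iff₀ (by positivity)]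
        nlinarith [sq_nonneg (|t| - η)]
      have h3 := mul_le_mul_of_nonneg_left h2 hB.le
      have e3 : B * (η / 2 + t ^ 2 / (2 * η)) = B / 2 * η + B / (2 * η) * t ^ 2 := by ring
      linarith
    have bE : Bd (fun k => B / 2 * η + B / (2 * η) * ∫ ω, (A k ω - A (k + q) ω) ^ 2 ∂P) :=
      (Bd.const _).add ((bdE q).cmul _)
    have lE : lam U (fun k => B / 2 * η + B / (2 * η) * ∫ ω, (A k ω - A (k + q) ω) ^ 2 ∂P)
        ≤ B * η := by
      rw [lam_add (Bd.const _) ((bdE q).cmul _), lam_const hU, lam_cmul (bdE q)]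
      have := mul_le_mul_of_nonneg_left (herg q) (show 0 ≤ B / (2 * η) by positivity)
      have e : B / (2 * η) * η ^ 2 = B / 2 * η := by field_simp
      linarith
    have ik : ∀ k, |∫ ω, G k ω * A k ω ∂P - ∫ ω, G k ω * A (k + q) ω ∂P|
        ≤ B / 2 * η + B / (2 * η) * ∫ ω, (A k ω - A (k + q) ω) ^ 2 ∂P := by
      intro k
      rw [← integral_sub ((Gf k).mul (Af k)).integrable ((Gf k).mul (Af (k + q))).integrable]
      refine (abs_integral_le_integral_abs).trans ?_
      have e : B / 2 * η + B / (2 * η) * ∫ ω, (A k ω - A (k + q) ω) ^ 2 ∂P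
          = ∫ ω, (B / 2 * η + B / (2 * η) * (A k ω - A (k + q) ω) ^ 2) ∂P := by
        rw [integral_add (integrable_const _)
          ((((Af k).sub (Af (k + q))).sq).cmul _).integrable]
        simp [integral_const_mul]
      rw [e]
      exact integral_mono
        ((((Gf k).mul (Af k)).sub ((Gf k).mul (Af (k + q)))).comp (fun x => |x|)).integrable
        ((FM.const _).add ((((Af k).sub (Af (k + q))).sq).cmul _)).integrable (pt k)
    have b10 : Bd (fun k => ∫ ω, G k ω * A k ω ∂P) := b1 0
    constructor
    · have := lam_mono (U := U) (b10.sub (b1 q)) bE fun k => (le_abs_self _).trans (ik k)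
      rw [lam_sub b10 (b1 q)] at this; linarith
    · have := lam_mono (U := U) ((b1 q).sub b10) bE fun k => by
        have := (neg_le_abs _).trans (ik k); linarith
      rw [lam_sub (b1 q) b10] at this; linarith
  -- move `A` to the past of the base point
  have s1 : lam U (fun k => ∫ ω, DD (k + V) ω * A k ω ∂P) - 2 * η
      ≤ lam U (fun k => ∫ ω, DD k ω * A (k + p) ω ∂P) := by
    have h1 := (cmp (fun k => DD (k + V)) 2 (by norm_num) (fun k => Df _) (fun k => D0 _)
      (fun k => D1' _) (V + p)).1
    have h2 := lam_shift hU (bdDA 0 p) V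
    simp only [add_zero] at h2
    simp only [← add_assoc] at h1
    rw [h2] at h1
    exact h1
  -- the bounds of `stepC`, averaged over the scales
  have s2 : lam U (fun k => ∫ ω, M (k + V) ω * A k ω ∂P) - η
      ≤ lam U (fun k => ∫ ω, DD (k + V) ω * A k ω ∂P) := by
    obtain ⟨d, rfl⟩ := Nat.exists_eq_add_of_le hp
    have bg1 : Bd (fun k => eL P X Y k (k + l) - eL P X Y k (k + (l + d))) := by
      simpa only [add_assoc] using h.bd_range (P := P) l d
    have bg2' : Bd (fun k => eL P X Y k k - eL P X Y k (k + d)) := h.bd_range (P := P) 0 d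
    have bg2 : Bd (fun k => eL P X Y (k + l) (k + l) - eL P X Y (k + l) (k + (l + d))) := by
      simpa only [add_assoc] using bg2'.shift l
    have bMA0 : Bd (fun k => ∫ ω, M (k + V) ω * A k ω ∂P) := bdMA V 0
    have bDA0 : Bd (fun k => ∫ ω, DD (k + V) ω * A k ω ∂P) := bdDA V 0
    have bg := (bg1.sub bg2).cmul (1 / (l : ℝ))
    have h1 := lam_mono (U := U) (bMA0.sub (bg.shift V)) bDA0 (fun k => by
      have hdep : Dep (A k) (Sv X Y (k + V) (k + V)) := by
        intro ω ω' e
        simp only [hA, AV]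
        congr 1
        refine Finset.sum_congr rfl fun v hv => ?_
        have hv' := (Finset.mem_range.1 hv).le
        exact ((Mv_dep l (k + v)).trans (h.dS (Nat.add_le_add_left hv' k)
          (Nat.add_le_add_left hv' k))) ω ω' e
      have := h.stepC (P := P) hl hp (k + V) (A0 k) (A1 k) hdep
      rw [div_eq_mul_one_div, mul_comm _ (1 / (l : ℝ))] at this
      simp only [mul_comm (A k _)] at this
      exact this)
    rw [lam_sub bMA0 (bg.shift V), lam_shift hU bg V, lam_cmul (bg1.sub bg2), lam_sub bg1 bg2] at h1
    have h2 := h.lam_range (P := P) hU l d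
    simp only [add_assoc] at h2
    have h3 : lam U (fun k => eL P X Y (k + l) (k + l) - eL P X Y (k + l) (k + (l + d)))
        = ∑ i ∈ Finset.range d, fq U P X Y i := by
      have e1 := lam_shift hU bg2' l
      have e2 := h.lam_range (P := P) hU 0 d
      simp only [add_assoc, zero_add, add_zero] at e1 e2
      rw [e1, e2]
    rw [h2, h3] at h1
    have h4 : ∑ i ∈ Finset.range d, fq U P X Y (l + i) - ∑ i ∈ Finset.range d, fq U P X Y i
        ≤ l * η := by
      have b1 := Finset.sum_range_add (fun i => fq U P X Y i) l d
      have b2 := Finset.sum_range_add (fun i => fq U P X Y i) d l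
      rw [add_comm d l, b1] at b2
      have b3 : ∑ i ∈ Finset.range l, fq U P X Y (d + i) ≤ l * (F + η) := by
        refine (Finset.sum_le_sum (g := fun _ => F + η) fun i _ => ?_).trans (by
          rw [Finset.sum_const, Finset.card_range, nsmul_eq_mul])
        linarith [hf (d + i)]
      have b4 : l * F = ∑ i ∈ Finset.range l, fq U P X Y i := by rw [hF]; field_simp
      linarith
    have h5 : 1 / (l : ℝ) * (∑ i ∈ Finset.range d, fq U P X Y (l + i)
        - ∑ i ∈ Finset.range d, fq U P X Y i) ≤ η := by
      rw [one_div, inv_mul_le_iff₀ hl']; exact h4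
    linarith
  -- average over the position of `M` inside the window
  have s3 : lam U (fun k => ∫ ω, A k ω ^ 2 ∂P) - η
      ≤ lam U (fun k => ∫ ω, M (k + V) ω * A k ω ∂P) := by
    have h1 : ∀ v ∈ Finset.range V, lam U (fun k => ∫ ω, M (k + v) ω * A k ω ∂P)
        ≤ lam U (fun k => ∫ ω, M (k + V) ω * A k ω ∂P) + η := by
      intro v hv
      have hv' := (Finset.mem_range.1 hv).le
      have a1 := (cmp (fun k => M (k + V)) 1 one_pos (fun k => Mf _) (fun k => M0 _)
        (fun k => M1 _) (V - v)).2
      have a2 := lam_shift hU (bdMA v 0) (V - v)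
      have e : ∀ k, k + (V - v) + v = k + V := fun k => by omega
      simp only [e, add_zero] at a2
      rw [a2] at a1
      linarith
    have h2 := Finset.sum_le_sum h1
    simp only [Finset.sum_const, Finset.card_range, nsmul_eq_mul] at h2
    have bMA : ∀ v ∈ Finset.range V, Bd (fun k => ∫ ω, M (k + v) ω * A k ω ∂P) :=
      fun v _ => bdMA v 0
    rw [← lam_sum _ bMA hU] at h2
    have bdA2 : Bd (fun k => ∫ ω, A k ω ^ 2 ∂P) :=
      bd_int (c := 0) (d := 1) (fun k => (Af k).sq) fun k ω =>
        ⟨sq_nonneg _, by nlinarith [A0 k ω, A1 k ω]⟩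
    have h3 : (fun k => ∑ v ∈ Finset.range V, ∫ ω, M (k + v) ω * A k ω ∂P)
        = fun k => V * ∫ ω, A k ω ^ 2 ∂P := by
      funext k
      rw [← integral_finsetSum _ (fun v _ => ((Mf _).mul (Af _)).integrable), ← integral_const_mul]
      congr 1; funext ω
      rw [← Finset.sum_mul]
      have : ∑ v ∈ Finset.range V, M (k + v) ω = V * A k ω := by
        simp only [hA, AV]; field_simp
      rw [this]; ring
    rw [h3, lam_cmul bdA2] at h2
    have := le_of_mul_le_mul_left h2 hV'
    linarith
  have s4 : c ^ 2 ≤ lam U (fun k => ∫ ω, A k ω ^ 2 ∂P) := by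
    have bdA2 : Bd (fun k => ∫ ω, A k ω ^ 2 ∂P) :=
      bd_int (c := 0) (d := 1) (fun k => (Af k).sq) fun k ω =>
        ⟨sq_nonneg _, by nlinarith [A0 k ω, A1 k ω]⟩
    have bdA : Bd (fun k => ∫ ω, A k ω ∂P) :=
      bd_int (c := 0) (d := 1) (fun k => (Af k)) fun k ω => ⟨A0 k ω, A1 k ω⟩
    have bdM : Bd (fun k => ∫ ω, M k ω ∂P) :=
      bd_int (c := 0) (d := 1) (fun k => (Mf k)) fun k ω => ⟨M0 k ω, M1 k ω⟩
    have eA : lam U (fun k => ∫ ω, A k ω ∂P) = c := by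
      have : (fun k => ∫ ω, A k ω ∂P)
          = fun k => (1 / (V : ℝ)) * ∑ v ∈ Finset.range V, ∫ ω, M (k + v) ω ∂P := by
        funext k
        simp only [hA, AV]
        rw [integral_div, integral_finsetSum _ (fun v _ => (Mf _).integrable)]
        ring
      rw [this, lam_cmul (Bd.sum _ fun v _ => bdM.shift v), lam_sum _ (fun v _ => bdM.shift v) hU,
        Finset.sum_congr rfl fun v _ => lam_shift hU bdM v]
      simp [← hc]
      field_simp
    have h1 := lam_mono (U := U) ((bdA.cmul (2 * c)).sub (Bd.const (c ^ 2))) bdA2 (fun k => by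
      have := integral_mono (μ := P) (((Af k).cmul (2 * c)).sub (FM.const (c ^ 2))).integrable
        (Af k).sq.integrable (fun ω => by
          have := sq_nonneg (A k ω - c)
          simp only; nlinarith)
      rw [integral_sub ((Af k).cmul (2 * c)).integrable (integrable_const _),
        integral_const_mul] at this
      simpa using this)
    rw [lam_sub (bdA.cmul (2 * c)) (Bd.const (c ^ 2)), lam_cmul bdA, lam_const hU, eA] at h1
    nlinarith
  linarith

end UUED

/-! ### Almost translation-invariant laws on the integers -/

namespace UUED

variable {Ω τ : Type*} [MeasurableSpace Ω]

/-- A law on the integers which is almost increased by the translation `A ↦ A - d` (with an error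
of `6` units and of `ζ` in mass) cannot give an interval of length `N` much more mass than `1 / J`,
because the translates by `s d, 2 s d, …` are disjoint. -/
theorem translate_bound (ν : Measure Ω) [IsProbabilityMeasure ν] {W : Ω → ℤ}
    (hW : FM W) {I0 I1 d N a : ℤ} {s J : ℕ} {ζ : ℝ} (hζ : 0 ≤ ζ) (hJ : 0 < J)
    (step : ∀ a b : ℤ, I0 ≤ a - d - 6 → b - d + 6 < I1 →
      ν.real (W ⁻¹' Icc a b) ≤ ν.real (W ⁻¹' Icc (a - d - 6) (b - d + 6)) + ζ)
    (h3 : 3 * N ≤ s * |d|) (h6 : 6 * s * J ≤ N)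
    (hr0 : I0 ≤ a - (J * s * |d| + N)) (hr1 : a + N - 1 + (J * s * |d| + N) < I1) :
    ν.real (W ⁻¹' Icc a (a + N - 1)) ≤ 1 / J + s * J * ζ := by
  have room : ∀ n : ℕ, n ≤ s * J → |(n : ℤ) * d| + 6 * n ≤ J * s * |d| + N := by
    intro n hn
    have hn' : (n : ℤ) ≤ s * J := by exact_mod_cast hn
    rw [abs_mul, Nat.abs_cast]
    have := mul_le_mul_of_nonneg_right hn' (abs_nonneg d)
    nlinarith
  have iter : ∀ n : ℕ, n ≤ s * J → ν.real (W ⁻¹' Icc a (a + N - 1))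
      ≤ ν.real (W ⁻¹' Icc (a - n * d - 6 * n) (a + N - 1 - n * d + 6 * n)) + n * ζ := by
    intro n
    induction n with
    | zero => intro _; simp
    | succ n ih =>
      intro hn
      have h1 := ih (by omega)
      have hr := room (n + 1) hn
      have hab := abs_le.1 (le_refl |((n + 1 : ℕ) : ℤ) * d|)
      push_cast at hr hab
      have h2 := step (a - n * d - 6 * n) (a + N - 1 - n * d + 6 * n)
        (by nlinarith) (by nlinarith)
      have e1 : a - n * d - 6 * n - d - 6 = a - ((n + 1 : ℕ) : ℤ) * d - 6 * ((n + 1 : ℕ) : ℤ) := by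
        push_cast; ring
      have e2 : a + N - 1 - n * d + 6 * n - d + 6
          = a + N - 1 - ((n + 1 : ℕ) : ℤ) * d + 6 * ((n + 1 : ℕ) : ℤ) := by
        push_cast; ring
      rw [e1, e2] at h2
      push_cast at h2 ⊢
      linarith
  set B : ℕ → Set Ω := fun i =>
    W ⁻¹' Icc (a - (s * i : ℕ) * d - N) (a + N - 1 - (s * i : ℕ) * d + N) with hB
  have hdisj : (↑(Finset.range J) : Set ℕ).PairwiseDisjoint B := by
    intro i _ j _ hij
    refine Disjoint.preimage _ ?_
    rw [Set.disjoint_left]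
    rintro x ⟨hx1, hx2⟩ ⟨hx3, hx4⟩
    have hij' : (1 : ℤ) ≤ |(i : ℤ) - j| := Int.one_le_abs (by
      intro h; exact hij (by omega))
    have k1 : |((s : ℤ) * d) * ((i : ℤ) - j)| < 3 * N := by
      rw [abs_lt]; push_cast at *
      constructor <;> nlinarith
    rw [abs_mul, abs_mul, Nat.abs_cast] at k1
    have k2 : (0 : ℤ) ≤ s * |d| := by positivity
    nlinarith
  have hmeas : ∀ i ∈ Finset.range J, MeasurableSet (B i) := fun i _ => hW.preimage _
  have hsum : ∑ i ∈ Finset.range J, ν.real (B i) ≤ 1 := by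
    rw [← measureReal_biUnion_finset hdisj hmeas]
    exact measureReal_le_one
  have hone : ∀ i ∈ Finset.range J,
      ν.real (W ⁻¹' Icc a (a + N - 1)) - s * J * ζ ≤ ν.real (B i) := by
    intro i hi
    have hi' := Finset.mem_range.1 hi
    have hle : s * i ≤ s * J := Nat.mul_le_mul_left _ hi'.le
    have h1 := iter (s * i) hle
    have h2 : ν.real (W ⁻¹' Icc (a - (s * i : ℕ) * d - 6 * (s * i : ℕ))
        (a + N - 1 - (s * i : ℕ) * d + 6 * (s * i : ℕ))) ≤ ν.real (B i) := by
      refine measureReal_mono (preimage_mono (Icc_subset_Icc ?_ ?_))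
      all_goals
        have : ((s * i : ℕ) : ℤ) ≤ s * J := by exact_mod_cast hle
        nlinarith
    have h3 : ((s * i : ℕ) : ℝ) * ζ ≤ s * J * ζ :=
      mul_le_mul_of_nonneg_right (by exact_mod_cast hle) hζ
    linarith
  have h4 := Finset.sum_le_sum hone
  rw [Finset.sum_const, Finset.card_range, nsmul_eq_mul] at h4
  have hJ' : (0 : ℝ) < J := by exact_mod_cast hJ
  have h5 : ν.real (W ⁻¹' Icc a (a + N - 1)) - s * J * ζ ≤ 1 / J := by
    rw [le_div_iff₀ hJ']; linarith
  linarith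

end UUED

/-! ### Stabilization of conditional laws -/

namespace UUED

variable {Ω τ : Type*} [MeasurableSpace Ω]
variable {P : Measure Ω} [IsProbabilityMeasure P] {X : ℕ → Ω → τ} {Y : ℕ → Ω → ℤ}
variable {U : Ultrafilter ℕ}

/-- The indicator of `{A ∈ s}`. -/
def ind {β : Type*} (A : Ω → β) (s : Set β) (ω : Ω) : ℝ := if A ω ∈ s then 1 else 0

/-- The range of a finite-valued variable as a `Finset` (empty if the range is infinite). -/
def rgF {β : Type*} (A : Ω → β) : Finset β := if h : (range A).Finite then h.toFinset else ∅

theorem FM.mem_rgF {β : Type*} {A : Ω → β} (hA : FM A) (ω : Ω) : A ω ∈ rgF A := by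
  simp [rgF, hA.fin]

theorem FM.ind {β : Type*} {A : Ω → β} (hA : FM A) (s : Set β) : FM (ind A s) :=
  hA.comp (fun a => if a ∈ s then (1 : ℝ) else 0)

theorem ind_nonneg {β : Type*} (A : Ω → β) (s : Set β) (ω : Ω) : 0 ≤ ind A s ω := by
  unfold ind; split_ifs <;> norm_num

theorem ind_le_one {β : Type*} (A : Ω → β) (s : Set β) (ω : Ω) : ind A s ω ≤ 1 := by
  unfold ind; split_ifs <;> norm_num

theorem sum_ind {β : Type*} (A : Ω → β) (T : Finset β) (ω : Ω) :
    ∑ w ∈ T, ind A {w} ω = if A ω ∈ T then 1 else 0 := by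
  simp [ind, Finset.sum_ite_eq]

theorem cE_ind_le_one {β γ : Type*} {B : Ω → γ} (hB : FM B) {A : Ω → β} (hA : FM A) (s : Set β)
    (ω : Ω) : cE P B (ind A s) ω ≤ 1 := by
  refine cE_le_of hB zero_le_one (fun w hw0 hw => ?_) ω
  rw [one_mul]
  refine integral_mono ((hB.dep hw).mul (hA.ind s)).integrable (hB.dep hw).integrable fun x => ?_
  exact mul_le_of_le_one_right (hw0 x) (ind_le_one A s x)

theorem cE_sum {β : Type*} {B : Ω → β} {ι : Type*} (T : Finset ι) {f : ι → Ω → ℝ}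
    (hf : ∀ i ∈ T, FM (f i)) (ω : Ω) :
    cE P B (fun x => ∑ i ∈ T, f i x) ω = ∑ i ∈ T, cE P B (f i) ω := by
  unfold cE
  rw [integral_finsetSum _ (fun i hi => (hf i hi).integrable.integrableOn), Finset.sum_div]

theorem cE_congr_on {β : Type*} {B : Ω → β} (hB : FM B) {f g : Ω → ℝ} (ω : Ω)
    (h : ∀ x, B x = B ω → f x = g x) : cE P B f ω = cE P B g ω := by
  unfold cE
  rw [setIntegral_congr_fun (hB.meas _) (fun x hx => h x hx)]

/-- Squared-norm functional measuring how much `(X k, Y j)` determines the next `L` digits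
of `Y`. -/
def gL (P : Measure Ω) (X : ℕ → Ω → τ) (Y : ℕ → Ω → ℤ) (L k j : ℕ) : ℝ :=
  ∑ w ∈ rgF (Y (j + L)), ∫ ω, cE P (Sv X Y k j) (ind (Y (j + L)) {w}) ω ^ 2 ∂P

/-- Squared distance between the conditional laws of the next `L` digits of `Y j`, given
`(X m, Y j)` and given `(X k, Y j)`. -/
def dv (P : Measure Ω) (X : ℕ → Ω → τ) (Y : ℕ → Ω → ℤ) (L k m j : ℕ) (ω : Ω) : ℝ :=
  ∑ w ∈ rgF (Y (j + L)), (cE P (Sv X Y m j) (ind (Y (j + L)) {w}) ω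
    - cE P (Sv X Y k j) (ind (Y (j + L)) {w}) ω) ^ 2

theorem IsSys.dv_fm (h : IsSys X Y) (L k m j : ℕ) : FM (dv P X Y L k m j) :=
  FM.sum _ fun w _ => ((cE_fm (h.fS m j) _).sub (cE_fm (h.fS k j) _)).sq

theorem dv_nonneg (L k m j : ℕ) (ω : Ω) : 0 ≤ dv P X Y L k m j ω :=
  Finset.sum_nonneg fun _ _ => sq_nonneg _

theorem IsSys.int_dv (h : IsSys X Y) (L : ℕ) {k m : ℕ} (hkm : k ≤ m) (j : ℕ) :
    ∫ ω, dv P X Y L k m j ω ∂P = gL P X Y L m j - gL P X Y L k j := by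
  unfold dv gL
  rw [integral_finsetSum _ fun w _ =>
    ((cE_fm (h.fS m j) _).sub (cE_fm (h.fS k j) _)).sq.integrable, ← Finset.sum_sub_distrib]
  exact Finset.sum_congr rfl fun w _ =>
    cE_pythagoras (h.fS m j) (h.dS hkm le_rfl) ((h.fY _).ind _)

theorem IsSys.gL_mono (h : IsSys X Y) (L : ℕ) {k m : ℕ} (hkm : k ≤ m) (j : ℕ) :
    gL P X Y L k j ≤ gL P X Y L m j := by
  have := h.int_dv (P := P) L hkm j
  have h2 : 0 ≤ ∫ ω, dv P X Y L k m j ω ∂P := integral_nonneg fun ω => dv_nonneg L k m j ω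
  linarith

theorem gL_nonneg (L k j : ℕ) : 0 ≤ gL P X Y L k j :=
  Finset.sum_nonneg fun _ _ => integral_nonneg fun _ => sq_nonneg _

theorem IsSys.gL_le_one (h : IsSys X Y) (L k j : ℕ) : gL P X Y L k j ≤ 1 := by
  have h1 : gL P X Y L k j ≤ ∑ w ∈ rgF (Y (j + L)), ∫ ω, ind (Y (j + L)) {w} ω ∂P := by
    refine Finset.sum_le_sum fun w _ => ?_
    rw [← integral_cE_one (h.fS k j) ((h.fY (j + L)).ind {w})]
    refine integral_mono (cE_fm (h.fS k j) _).sq.integrable (cE_fm (h.fS k j) _).integrable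
      fun ω => ?_
    have a0 : 0 ≤ cE P (Sv X Y k j) (ind (Y (j + L)) {w}) ω :=
      cE_nonneg (Eventually.of_forall fun x => ind_nonneg _ _ x) ω
    have a1 := cE_ind_le_one (P := P) (h.fS k j) (h.fY (j + L)) {w} ω
    show _ ^ 2 ≤ _
    nlinarith
  refine h1.trans ?_
  rw [← integral_finsetSum _ fun w _ => ((h.fY (j + L)).ind {w}).integrable]
  have : ∀ ω, ∑ w ∈ rgF (Y (j + L)), ind (Y (j + L)) {w} ω = 1 := fun ω => by
    rw [sum_ind, if_pos ((h.fY _).mem_rgF ω)]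
  simp [this]

/-- The scale-averaged value of `gL` at gap `q`. -/
def gq (U : Ultrafilter ℕ) (P : Measure Ω) (X : ℕ → Ω → τ) (Y : ℕ → Ω → ℤ) (L q : ℕ) : ℝ :=
  lam U (fun k => gL P X Y L k (k + q))

theorem IsSys.bd_gL (h : IsSys X Y) (L q : ℕ) : Bd (fun k => gL P X Y L k (k + q)) :=
  Bd.of fun k => ⟨gL_nonneg L k _, h.gL_le_one L k _⟩

theorem IsSys.gq_succ (h : IsSys X Y) (hU : (U : Filter ℕ) ≤ atTop) (L q : ℕ) :
    gq U P X Y L (q + 1) ≤ gq U P X Y L q := by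
  unfold gq
  rw [← lam_shift hU (h.bd_gL L q) 1]
  refine lam_mono (h.bd_gL L _) ((h.bd_gL L q).shift 1) fun k => ?_
  rw [show k + 1 + q = k + (q + 1) by ring]
  exact h.gL_mono L (Nat.le_succ k) _

theorem IsSys.gq_anti (h : IsSys X Y) (hU : (U : Filter ℕ) ≤ atTop) (L : ℕ) :
    Antitone (gq U P X Y L) := antitone_nat_of_succ_le (h.gq_succ hU L)

theorem IsSys.gq_nonneg (h : IsSys X Y) (hU : (U : Filter ℕ) ≤ atTop) (L q : ℕ) :
    0 ≤ gq U P X Y L q := by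
  have := lam_mono (U := U) (Bd.const 0) (h.bd_gL (P := P) L q) fun k => gL_nonneg L k _
  rwa [lam_const hU] at this

/-- The functional `gq` stabilizes: beyond some gap the next `L` digits of `Y` are on average
almost independent of finer information on `X`. -/
theorem IsSys.exists_gap (h : IsSys X Y) (hU : (U : Filter ℕ) ≤ atTop) (L : ℕ) {ζ : ℝ}
    (hζ : 0 < ζ) : ∃ q0, ∀ q, q0 ≤ q → ∀ q', q ≤ q' →
      gq U P X Y L q - gq U P X Y L q' ≤ ζ := by
  have hb : BddBelow (range (gq U P X Y L)) := ⟨0, by rintro _ ⟨q, rfl⟩; exact h.gq_nonneg hU L q⟩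
  have ht := tendsto_atTop_ciInf (h.gq_anti (P := P) hU L) hb
  obtain ⟨q0, hq0⟩ := eventually_atTop.1 (ht.eventually (gt_mem_nhds
    (show (⨅ i, gq U P X Y L i) < (⨅ i, gq U P X Y L i) + ζ by linarith)))
  refine ⟨q0, fun q hq q' hq' => ?_⟩
  have h1 := hq0 q hq
  have h2 := ciInf_le hb q'
  linarith

theorem IsSys.lam_dv (h : IsSys X Y) (hU : (U : Filter ℕ) ≤ atTop) (L : ℕ) {q p : ℕ}
    (hqp : q ≤ p) :
    lam U (fun k => ∫ ω, dv P X Y L k (k + (p - q)) (k + p) ω ∂P)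
      = gq U P X Y L q - gq U P X Y L p := by
  have e : (fun k => ∫ ω, dv P X Y L k (k + (p - q)) (k + p) ω ∂P)
      = fun k => (fun k => gL P X Y L k (k + q)) (k + (p - q)) - gL P X Y L k (k + p) := by
    funext k
    rw [h.int_dv L (Nat.le_add_right k _)]
    simp only
    rw [show k + (p - q) + q = k + p by omega]
  rw [e, lam_sub ((h.bd_gL L q).shift _) (h.bd_gL L p), lam_shift hU (h.bd_gL L q)]
  rfl

/-- Where `dv` is small, the two conditional laws nearly agree on every set of values. -/
theorem IsSys.dv_use (h : IsSys X Y)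
    (hdiv : ∀ j L ω, Y (j + L) ω ∈ Finset.Ico (2 ^ L * Y j ω) (2 ^ L * (Y j ω + 1)))
    {L k m j : ℕ} {ζ : ℝ} (hζ : 0 ≤ ζ) {ω : Ω} (hω : dv P X Y L k m j ω ≤ ζ ^ 2) (A : Set ℤ) :
    |cE P (Sv X Y m j) (ind (Y (j + L)) A) ω - cE P (Sv X Y k j) (ind (Y (j + L)) A) ω|
      ≤ 2 ^ L * ζ := by
  have one : ∀ w, |cE P (Sv X Y m j) (ind (Y (j + L)) {w}) ω
      - cE P (Sv X Y k j) (ind (Y (j + L)) {w}) ω| ≤ ζ := by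
    intro w
    by_cases hw : w ∈ rgF (Y (j + L))
    · refine abs_le_of_sq_le_sq ((Finset.single_le_sum
        (f := fun w => (cE P (Sv X Y m j) (ind (Y (j + L)) {w}) ω
          - cE P (Sv X Y k j) (ind (Y (j + L)) {w}) ω) ^ 2)
        (fun _ _ => sq_nonneg _) hw).trans hω) hζ
    · have : ind (Y (j + L)) {w} = fun _ => 0 := by
        funext x
        unfold ind
        rw [if_neg]
        rintro rfl
        exact hw ((h.fY _).mem_rgF x)
      rw [this]; simpa [cE] using hζ
  set T := (Finset.Ico (2 ^ L * Y j ω) (2 ^ L * (Y j ω + 1))).filter (· ∈ A) with hT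
  have hsum : ∀ k', cE P (Sv X Y k' j) (ind (Y (j + L)) A) ω
      = ∑ w ∈ T, cE P (Sv X Y k' j) (ind (Y (j + L)) {w}) ω := by
    intro k'
    rw [← cE_sum T fun w _ => (h.fY _).ind {w}]
    refine cE_congr_on (h.fS k' j) ω fun x hx => ?_
    rw [sum_ind]
    have hx2 : Y j x = Y j ω := congrArg Prod.snd hx
    have := hdiv j L x
    rw [hx2] at this
    simp only [ind, hT, Finset.mem_filter, this, true_and]
  rw [hsum, hsum, ← Finset.sum_sub_distrib]
  refine (Finset.abs_sum_le_sum_abs _ _).trans ((Finset.sum_le_sum fun w _ => one w).trans ?_)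
  rw [Finset.sum_const, nsmul_eq_mul]
  refine mul_le_mul_of_nonneg_right ?_ hζ
  have : T.card ≤ 2 ^ L := by
    refine (Finset.card_filter_le _ _).trans (le_of_eq ?_)
    rw [Int.card_Ico, show (2 : ℤ) ^ L * (Y j ω + 1) - 2 ^ L * Y j ω = ((2 ^ L : ℕ) : ℤ) by
      push_cast; ring]
    exact Int.toNat_natCast _
  exact_mod_cast this

end UUED

/-! ### Small atoms and Gibbs' inequality on an atom -/

namespace UUED

variable {Ω : Type*} [MeasurableSpace Ω] {α β : Type*}
variable {P : Measure Ω} [IsProbabilityMeasure P]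

theorem pA_pair_le {A : Ω → α} {B : Ω → β} (ω : Ω) :
    pA P (fun x => (A x, B x)) ω ≤ pA P B ω := pA_mono (Dep.snd A B) ω

/-- Points lying in an atom of `A` of small relative mass inside their atom of `B` are rare,
if each atom of `B` meets few atoms of `A`. -/
theorem small_atoms {A : Ω → α} {B : Ω → β} (hA : FM A) (hB : FM B) (N : ℕ)
    (hN : ∀ b, (A '' (B ⁻¹' {b})).ncard ≤ N) {κ : ℝ} (hκ : 0 ≤ κ) :
    P.real {ω | pA P (fun x => (A x, B x)) ω < κ * pA P B ω} ≤ κ * N := by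
  set s := {ω | pA P (fun x => (A x, B x)) ω < κ * pA P B ω} with hs
  have hAB : FM (fun x => (A x, B x)) := hA.pair hB
  have hsd : Dep (fun ω => ω ∈ s) (fun x => (A x, B x)) := by
    intro ω ω' h
    have h1 := pA_dep (P := P) (fun x => (A x, B x)) ω ω' h
    have h2 := pA_dep (P := P) B ω ω' (congrArg Prod.snd h)
    simp only [hs, mem_ofPred_eq, h1, h2]
  have hsm : MeasurableSet s := by
    have := (hAB.dep hsd).meas True
    convert this using 1
    ext ω; simp
  have hfin : ∀ b, (A '' (B ⁻¹' {b})).Finite := fun b => hA.fin.subset (image_subset_range _ _)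
  have hsub : s ⊆ ⋃ b ∈ hB.fin.toFinset, s ∩ B ⁻¹' {b} := by
    intro ω hω
    simp only [mem_iUnion]
    exact ⟨B ω, by simp, hω, rfl⟩
  have hper : ∀ b, P.real (s ∩ B ⁻¹' {b}) ≤ N * (κ * P.real (B ⁻¹' {b})) := by
    intro b
    have h1 : s ∩ B ⁻¹' {b} ⊆ ⋃ a ∈ (hfin b).toFinset, (s ∩ B ⁻¹' {b}) ∩ A ⁻¹' {a} := by
      intro ω hω
      simp only [mem_iUnion]
      exact ⟨A ω, by simpa using ⟨ω, hω.2, rfl⟩, hω, rfl⟩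
    refine (measureReal_mono h1 (measure_ne_top _ _)).trans
      ((measureReal_biUnion_finset_le _ _).trans ?_)
    have h2 : ∀ a ∈ (hfin b).toFinset, P.real ((s ∩ B ⁻¹' {b}) ∩ A ⁻¹' {a})
        ≤ κ * P.real (B ⁻¹' {b}) := by
      intro a _
      rcases ((s ∩ B ⁻¹' {b}) ∩ A ⁻¹' {a}).eq_empty_or_nonempty with he | ⟨ω, ⟨hω, hb⟩, ha⟩
      · rw [he]; simp; positivity
      · have e : (B ⁻¹' {b}) = B ⁻¹' {B ω} := by rw [show B ω = b from hb]
        have h3 : ((s ∩ B ⁻¹' {b}) ∩ A ⁻¹' {a})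
            ⊆ (fun x => (A x, B x)) ⁻¹' {(A ω, B ω)} := by
          rintro x ⟨⟨_, hx⟩, hx'⟩
          have e1 : A ω = a := ha
          have e2 : B ω = b := hb
          simp only [mem_preimage, mem_singleton_iff] at hx hx' ⊢
          rw [e1, e2, hx, hx']
        have h5 : κ * P.real (B ⁻¹' {b}) = κ * pA P B ω := by rw [e]; rfl
        rw [h5]
        exact (measureReal_mono h3 (measure_ne_top _ _)).trans (le_of_lt hω)
    refine (Finset.sum_le_sum h2).trans ?_
    rw [Finset.sum_const, nsmul_eq_mul]
    refine mul_le_mul_of_nonneg_right ?_ (by positivity)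
    rw [← Set.ncard_eq_toFinset_card _ (hfin b)]
    exact_mod_cast hN b
  refine (measureReal_mono hsub (measure_ne_top _ _)).trans
    ((measureReal_biUnion_finset_le _ _).trans ((Finset.sum_le_sum fun b _ => hper b).trans ?_))
  rw [← Finset.mul_sum, ← Finset.mul_sum]
  have h4 : ∑ b ∈ hB.fin.toFinset, P.real (B ⁻¹' {b}) ≤ 1 := by
    rw [← measureReal_biUnion_finset]
    · exact measureReal_le_one
    · intro i _ j _ hij
      exact Disjoint.preimage _ (by simpa using hij)
    · intro b _; exact hB.meas b
  have : (0 : ℝ) ≤ N * κ := by positivity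
  nlinarith

/-- Gibbs' inequality on a single atom of `B`. -/
theorem gibbs_atom {A : Ω → α} {B : Ω → β} (hA : FM A) (hB : FM B) (ω : Ω) (R : α → ℝ)
    (hR0 : ∀ a, 0 ≤ R a) (hRp : ∀ x, B x = B ω → 0 < R (A x))
    (hRs : ∑ a ∈ hA.fin.toFinset, R a ≤ 1) :
    cE P B (fun x => lgA P B x - lgA P (fun y => (A y, B y)) x) ω
      ≤ cE P B (fun x => - Real.logb 2 (R (A x))) ω := by
  have hcard : 0 < hA.fin.toFinset.card := Finset.card_pos.2 ⟨A ω, by simp⟩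
  have hcard' : (0 : ℝ) < hA.fin.toFinset.card := by exact_mod_cast hcard
  have key := gibbs (P := P) hA hB (w := fun x => if B x = B ω then (1 : ℝ) else 0)
    (fun x => by split_ifs <;> norm_num) (atomInd_dep B (B ω))
    (fun a b => if b = B ω then R a else 1 / hA.fin.toFinset.card)
    (fun a b => by
      split_ifs
      · exact hR0 a
      · positivity)
    (Eventually.of_forall fun x => by
      split_ifs with hx
      · exact hRp x hx
      · positivity)
    (fun b _ => by
      split_ifs
      · exact hRs
      · rw [Finset.sum_const, nsmul_eq_mul, mul_one_div_cancel hcard'.ne'])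
  rw [integral_atomInd hB, integral_atomInd hB] at key
  unfold cE
  refine div_le_div_of_nonneg_right (key.trans (le_of_eq ?_)) (pA_nonneg B ω)
  refine setIntegral_congr_fun (hB.meas _) fun x hx => ?_
  have hx' : B x = B ω := hx
  simp only [hx', if_true]

end UUED

/-! ### Pairs of projections -/

namespace UUED

variable {Ω τ : Type*} [MeasurableSpace Ω] {α β : Type*}
variable {P : Measure Ω} [IsProbabilityMeasure P]

/-- The index of the dyadic interval of length `2⁻ʲ` containing `f`. -/
def fl (f : Ω → ℝ) (j : ℕ) (ω : Ω) : ℤ := ⌊(2 : ℝ) ^ j * f ω⌋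

theorem fl_div (f : Ω → ℝ) (j L : ℕ) (ω : Ω) :
    fl f (j + L) ω ∈ Finset.Ico (2 ^ L * fl f j ω) (2 ^ L * (fl f j ω + 1)) := by
  have h1 := Int.floor_le ((2 : ℝ) ^ j * f ω)
  have h2 := Int.lt_floor_add_one ((2 : ℝ) ^ j * f ω)
  have hp : (0 : ℝ) < 2 ^ L := by positivity
  rw [Finset.mem_Ico]
  unfold fl
  constructor
  · rw [Int.le_floor]; push_cast; rw [pow_add]; nlinarith
  · rw [Int.floor_lt]; push_cast; rw [pow_add]; nlinarith

theorem fl_close {f : Ω → ℝ} {j : ℕ} {ω ω' : Ω} (h : fl f j ω = fl f j ω') :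
    |(2 : ℝ) ^ j * f ω - 2 ^ j * f ω'| < 1 := by
  unfold fl at h
  have h1 := Int.floor_le ((2 : ℝ) ^ j * f ω)
  have h2 := Int.lt_floor_add_one ((2 : ℝ) ^ j * f ω)
  have h3 := Int.floor_le ((2 : ℝ) ^ j * f ω')
  have h4 := Int.lt_floor_add_one ((2 : ℝ) ^ j * f ω')
  rw [h] at h1 h2
  rw [abs_lt]; constructor <;> linarith

/-- The points where `f` lies close to the boundary of the dyadic partition of level `u`. -/
def NM (f : Ω → ℝ) (G u : ℕ) : Set Ω := {ω | ∃ n : ℤ, |(2 : ℝ) ^ u * f ω - n| < 1 / (2 * G)}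

theorem NM_meas {f : Ω → ℝ} (hf : Measurable f) (G u : ℕ) : MeasurableSet (NM f G u) := by
  have : NM f G u = ⋃ n : ℤ, {ω | |(2 : ℝ) ^ u * f ω - n| < 1 / (2 * G)} := by
    ext ω; simp [NM]
  rw [this]
  exact MeasurableSet.iUnion fun n => measurableSet_lt (by fun_prop) measurable_const

/-- The second projection is `yr + c`, where `c` varies at rate about `2^{-Q}`; knowing both `yr`
and `c` to the appropriate precision determines `X` up to a bounded number of values. -/
structure IsPair (X : ℕ → Ω → τ) (yr c : Ω → ℝ) (Q : ℕ) : Prop where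
  cvar : ∀ k ω ω', X k ω = X k ω' → (2 : ℝ) ^ (k + Q) * |c ω - c ω'| ≤ 2
  count : ∀ k l ω, (X (k + l) '' {ω' | X k ω' = X k ω ∧ (2 : ℝ) ^ (k + l) * |yr ω' - yr ω| ≤ 1 ∧
    (2 : ℝ) ^ (k + Q + l) * |c ω' - c ω| ≤ 2}).ncard ≤ 2 ^ 11

theorem pA_mul_cE {B : Ω → β} {W : Ω → α} (hB : FM B) (hW : FM W) (A : Set α) (ω : Ω) :
    pA P B ω * cE P B (ind W A) ω = P.real (B ⁻¹' {B ω} ∩ W ⁻¹' A) := by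
  have e : ind W A = (W ⁻¹' A).indicator (fun _ => (1 : ℝ)) := by
    funext x; simp [ind, indicator]
  have h1 : ∫ x in B ⁻¹' {B ω}, ind W A x ∂P = P.real (B ⁻¹' {B ω} ∩ W ⁻¹' A) := by
    rw [e, setIntegral_indicator (hW.preimage A)]
    simp
  unfold cE
  rw [h1]
  rcases eq_or_ne (pA P B ω) 0 with h0 | h0
  · rw [h0]
    have : P.real (B ⁻¹' {B ω} ∩ W ⁻¹' A) ≤ pA P B ω :=
      measureReal_mono inter_subset_left (measure_ne_top _ _)
    have h3 : 0 ≤ P.real (B ⁻¹' {B ω} ∩ W ⁻¹' A) := measureReal_nonneg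
    linarith
  · field_simp

theorem cond_real {B : Ω → β} {W : Ω → α} (hB : FM B) (hW : FM W) (A : Set α) (ω : Ω) :
    (ProbabilityTheory.cond P (B ⁻¹' {B ω})).real (W ⁻¹' A) = cE P B (ind W A) ω := by
  have h1 := pA_mul_cE (P := P) hB hW A ω
  rw [measureReal_def, ProbabilityTheory.cond_apply (hB.meas _), ENNReal.toReal_mul,
    ENNReal.toReal_inv, ← measureReal_def, ← measureReal_def, ← h1]
  change (pA P B ω)⁻¹ * _ = _
  rcases eq_or_ne (pA P B ω) 0 with h0 | h0
  · rw [h0]; simp [cE, h0]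
  · field_simp

/-- Transfer of mass between the two projections through the two `X m`-cells of `ω1` and `ω2`. -/
theorem pair_step {X : ℕ → Ω → τ} {yr c : Ω → ℝ}
    (h0 : IsSys X (fl yr)) (h1 : IsSys X (fl (fun ω => yr ω + c ω)))
    {k m u u1 L0 L1 v : ℕ} (hkm : k ≤ m) (hv0 : u + L0 = v) (hv1 : u1 + L1 = v)
    (hc : ∀ ω ω', X m ω = X m ω' → (2 : ℝ) ^ v * |c ω - c ω'| ≤ 1)
    {ζ κ : ℝ} (hζ : 0 ≤ ζ) (hκ : 0 < κ) {ω0 ω1 ω2 : Ω}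
    (hJ : ∀ x, Sv X (fl yr) k u x = Sv X (fl yr) k u ω0 →
      fl (fun ω => yr ω + c ω) u1 x = fl (fun ω => yr ω + c ω) u1 ω0)
    (e1 : Sv X (fl yr) k u ω1 = Sv X (fl yr) k u ω0)
    (e2 : Sv X (fl yr) k u ω2 = Sv X (fl yr) k u ω0)
    (d01 : dv P X (fl yr) L0 k m u ω1 ≤ ζ ^ 2) (d02 : dv P X (fl yr) L0 k m u ω2 ≤ ζ ^ 2)
    (d11 : dv P X (fl (fun ω => yr ω + c ω)) L1 k m u1 ω1 ≤ ζ ^ 2)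
    (d12 : dv P X (fl (fun ω => yr ω + c ω)) L1 k m u1 ω2 ≤ ζ ^ 2)
    (p1 : 0 < pA P (Sv X (fl yr) m u) ω1) (p2 : 0 < pA P (Sv X (fl yr) m u) ω2)
    (k1 : κ * pA P (Sv X (fl (fun ω => yr ω + c ω)) m u1) ω1 ≤ pA P (Sv X (fl yr) m u) ω1)
    (ho : pA P (Sv X (fl yr) m u) ω2 * pA P (Sv X (fl (fun ω => yr ω + c ω)) m u1) ω1
      ≤ pA P (Sv X (fl yr) m u) ω1 * pA P (Sv X (fl (fun ω => yr ω + c ω)) m u1) ω2)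
    (a b : ℤ)
    (ha : 2 ^ L0 * fl yr u ω0 ≤ a - (fl c v ω2 - fl c v ω1) - 6)
    (hb : b - (fl c v ω2 - fl c v ω1) + 6 < 2 ^ L0 * (fl yr u ω0 + 1)) :
    cE P (Sv X (fl yr) k u) (ind (fl yr v) (Icc a b)) ω0
      ≤ cE P (Sv X (fl yr) k u) (ind (fl yr v)
          (Icc (a - (fl c v ω2 - fl c v ω1) - 6) (b - (fl c v ω2 - fl c v ω1) + 6))) ω0
        + (2 * (2 ^ L0 * ζ) + 2 * (2 ^ L1 * ζ) / κ) := by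
  set Y0 := fl yr with hY0
  set Y1 := fl (fun ω => yr ω + c ω) with hY1
  have hdisp : ∀ x ω, X m x = X m ω → Y0 v x + fl c v ω - 3 ≤ Y1 v x ∧
      Y1 v x ≤ Y0 v x + fl c v ω + 3 := by
    intro x ω hx
    have := hc x ω hx
    have hp : (0 : ℝ) < 2 ^ v := by positivity
    rw [← abs_of_pos hp, ← abs_mul, abs_le] at this
    simp only [hY0, hY1, fl]
    have a1 := Int.floor_le ((2 : ℝ) ^ v * yr x)
    have a2 := Int.lt_floor_add_one ((2 : ℝ) ^ v * yr x)
    have a3 := Int.floor_le ((2 : ℝ) ^ v * c ω)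
    have a4 := Int.lt_floor_add_one ((2 : ℝ) ^ v * c ω)
    have a5 := Int.floor_le ((2 : ℝ) ^ v * (yr x + c x))
    have a6 := Int.lt_floor_add_one ((2 : ℝ) ^ v * (yr x + c x))
    constructor
    · have : ((⌊(2 : ℝ) ^ v * yr x⌋ + ⌊(2 : ℝ) ^ v * c ω⌋ - 3 : ℤ) : ℝ)
          < ⌊(2 : ℝ) ^ v * (yr x + c x)⌋ := by push_cast; nlinarith
      exact le_of_lt (by exact_mod_cast this)
    · have : ((⌊(2 : ℝ) ^ v * (yr x + c x)⌋ : ℤ) : ℝ)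
          < ((⌊(2 : ℝ) ^ v * yr x⌋ + ⌊(2 : ℝ) ^ v * c ω⌋ + 3 : ℤ) : ℝ) := by push_cast; nlinarith
      exact le_of_lt (by exact_mod_cast this)
  have f0 : ∀ k' j, FM (Sv X Y0 k' j) := fun k' j => h0.fS k' j
  have f1 : ∀ k' j, FM (Sv X Y1 k' j) := fun k' j => h1.fS k' j
  have inC : ∀ x ω, Sv X Y0 k u ω = Sv X Y0 k u ω0 → Sv X Y0 m u x = Sv X Y0 m u ω →
      Sv X Y0 k u x = Sv X Y0 k u ω0 := fun x ω hω hx =>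
    (h0.dS hkm le_rfl x ω hx).trans hω
  set d := fl c v ω2 - fl c v ω1 with hd
  -- first transfer: from the atom of `Y0` into the atom of `Y1`
  have s1 : pA P (Sv X Y0 m u) ω1 * cE P (Sv X Y0 m u) (ind (Y0 v) (Icc a b)) ω1
      ≤ pA P (Sv X Y1 m u1) ω1 *
        cE P (Sv X Y1 m u1) (ind (Y1 v) (Icc (a + fl c v ω1 - 3) (b + fl c v ω1 + 3))) ω1 := by
    rw [pA_mul_cE (f0 _ _) (h0.fY v), pA_mul_cE (f1 _ _) (h1.fY v)]
    refine measureReal_mono ?_ (measure_ne_top _ _)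
    rintro x ⟨hx, hx1, hx2⟩
    have hx' : Sv X Y0 m u x = Sv X Y0 m u ω1 := hx
    have hX : X m x = X m ω1 := congrArg Prod.fst hx'
    have hd := hdisp x ω1 hX
    refine ⟨?_, by linarith [hd.1], by linarith [hd.2]⟩
    show Sv X Y1 m u1 x = Sv X Y1 m u1 ω1
    exact Prod.ext hX ((hJ x (inC x ω1 e1 hx')).trans (hJ ω1 e1).symm)
  -- second transfer: back into an atom of `Y0`, now through the cell of `ω2`
  have s2 : pA P (Sv X Y1 m u1) ω2 *
        cE P (Sv X Y1 m u1) (ind (Y1 v) (Icc (a + fl c v ω1 - 3) (b + fl c v ω1 + 3))) ω2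
      ≤ pA P (Sv X Y0 m u) ω2 *
        cE P (Sv X Y0 m u) (ind (Y0 v) (Icc (a - d - 6) (b - d + 6))) ω2 := by
    rw [pA_mul_cE (f0 _ _) (h0.fY v), pA_mul_cE (f1 _ _) (h1.fY v)]
    refine measureReal_mono ?_ (measure_ne_top _ _)
    rintro x ⟨hx, hx1, hx2⟩
    have hx' : Sv X Y1 m u1 x = Sv X Y1 m u1 ω2 := hx
    have hX : X m x = X m ω2 := congrArg Prod.fst hx'
    have hd' := hdisp x ω2 hX
    have g1 : a - d - 6 ≤ Y0 v x := by linarith [hd'.2]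
    have g2 : Y0 v x ≤ b - d + 6 := by linarith [hd'.1]
    refine ⟨?_, g1, g2⟩
    show Sv X Y0 m u x = Sv X Y0 m u ω2
    refine Prod.ext hX ?_
    have hu2 : Y0 u ω2 = Y0 u ω0 := congrArg Prod.snd e2
    show Y0 u x = Y0 u ω2
    rw [hu2]
    have hdv := fl_div yr u L0 x
    rw [hv0, Finset.mem_Ico, ← hY0] at hdv
    have hp : (0 : ℤ) < 2 ^ L0 := by positivity
    have l1 : Y0 u x < Y0 u ω0 + 1 := by
      by_contra hcon
      push Not at hcon
      have := mul_le_mul_of_nonneg_left hcon hp.le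
      linarith [hdv.1]
    have l2 : Y0 u ω0 < Y0 u x + 1 := by
      by_contra hcon
      push Not at hcon
      have := mul_le_mul_of_nonneg_left hcon hp.le
      linarith [hdv.2]
    omega
  set A0 := Icc a b
  set A1 := Icc (a + fl c v ω1 - 3) (b + fl c v ω1 + 3)
  set A2 := Icc (a - d - 6) (b - d + 6)
  have t1 := (abs_le.1 (h0.dv_use (P := P) (fl_div yr) hζ d01 A0)).1
  have t2 := (abs_le.1 (h0.dv_use (P := P) (fl_div yr) hζ d02 A2)).2
  have t3 := (abs_le.1 (h1.dv_use (P := P) (fl_div _) hζ d11 A1)).2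
  have t4 := (abs_le.1 (h1.dv_use (P := P) (fl_div _) hζ d12 A1)).1
  rw [hv0] at t1 t2
  rw [hv1] at t3 t4
  rw [cE_dep (P := P) (Sv X Y0 k u) (ind (Y0 v) A0) ω1 ω0 e1] at t1
  rw [cE_dep (P := P) (Sv X Y0 k u) (ind (Y0 v) A2) ω2 ω0 e2] at t2
  have e12 : Sv X Y1 k u1 ω1 = Sv X Y1 k u1 ω2 := by
    refine Prod.ext ((congrArg Prod.fst e1).trans (congrArg Prod.fst e2).symm) ?_
    exact (hJ ω1 e1).trans (hJ ω2 e2).symm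
  rw [cE_dep (P := P) (Sv X Y1 k u1) (ind (Y1 v) A1) ω1 ω2 e12] at t3
  set E0 := (2 : ℝ) ^ L0 * ζ
  set E1 := (2 : ℝ) ^ L1 * ζ with hE1
  have hE1' : 0 ≤ E1 := by positivity
  set q1 := cE P (Sv X Y0 m u) (ind (Y0 v) A0) ω1
  set r1 := cE P (Sv X Y1 m u1) (ind (Y1 v) A1) ω1
  set r2 := cE P (Sv X Y1 m u1) (ind (Y1 v) A1) ω2
  set q2 := cE P (Sv X Y0 m u) (ind (Y0 v) A2) ω2
  have hq2 : 0 ≤ q2 := cE_nonneg (Eventually.of_forall fun x => ind_nonneg _ _ x) _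
  have hpp : ∀ ω, Sv X Y0 k u ω = Sv X Y0 k u ω0 →
      pA P (Sv X Y0 m u) ω ≤ pA P (Sv X Y1 m u1) ω := by
    intro ω hω
    refine measureReal_mono ?_ (measure_ne_top _ _)
    intro x hx
    have hx' : Sv X Y0 m u x = Sv X Y0 m u ω := hx
    have hX : X m x = X m ω := congrArg Prod.fst hx'
    exact Prod.ext hX ((hJ x (inC x ω hω hx')).trans (hJ ω hω).symm)
  set b1 := pA P (Sv X Y0 m u) ω1
  set c1 := pA P (Sv X Y1 m u1) ω1
  set b2 := pA P (Sv X Y0 m u) ω2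
  set c2 := pA P (Sv X Y1 m u1) ω2
  have hc1 : 0 < c1 := p1.trans_le (hpp ω1 e1)
  have hc2 : 0 < c2 := p2.trans_le (hpp ω2 e2)
  have w1 : q1 ≤ (c1 / b1) * r1 := by
    rw [div_mul_eq_mul_div, le_div_iff₀ p1]; linarith
  have w2 : r2 ≤ (b2 / c2) * q2 := by
    rw [div_mul_eq_mul_div, le_div_iff₀ hc2]; linarith
  have w3 : c1 / b1 ≤ 1 / κ := by
    rw [div_le_div_iff₀ p1 hκ]; linarith
  have w4 : (c1 / b1) * (b2 / c2) ≤ 1 := by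
    rw [div_mul_div_comm, div_le_one (by positivity)]; linarith
  have hcb : 0 ≤ c1 / b1 := by positivity
  have w5 : r1 ≤ r2 + 2 * E1 := by linarith
  have w6 : q1 ≤ q2 + 2 * E1 / κ := by
    calc q1 ≤ (c1 / b1) * r1 := w1
      _ ≤ (c1 / b1) * ((b2 / c2) * q2 + 2 * E1) :=
          mul_le_mul_of_nonneg_left (by linarith) hcb
      _ = ((c1 / b1) * (b2 / c2)) * q2 + (c1 / b1) * (2 * E1) := by ring
      _ ≤ 1 * q2 + (1 / κ) * (2 * E1) := by gcongr
      _ = q2 + 2 * E1 / κ := by ring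
  linarith

end UUED

/-! ### Two typical points with separated displacements -/

namespace UUED

variable {Ω τ : Type*} [MeasurableSpace Ω] {α β : Type*}
variable {P : Measure Ω} [IsProbabilityMeasure P]

/-- Points at which the digits of both projections are nearly independent of `X m` and whose
`Y0`-atom occupies a fraction at least `κ` of the `Y1`-atom inside the `X m`-cell. -/
structure Typ (P : Measure Ω) (X : ℕ → Ω → τ) (yr c : Ω → ℝ) (k m u u1 L0 L1 : ℕ) (ζ κ : ℝ)
    (ω : Ω) : Prop where
  d0 : dv P X (fl yr) L0 k m u ω ≤ ζ ^ 2
  d1 : dv P X (fl (fun ω => yr ω + c ω)) L1 k m u1 ω ≤ ζ ^ 2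
  pos : 0 < pA P (Sv X (fl yr) m u) ω
  frac : κ * pA P (Sv X (fl (fun ω => yr ω + c ω)) m u1) ω ≤ pA P (Sv X (fl yr) m u) ω

set_option maxHeartbeats 1000000 in
/-- If two typical points of the same atom have well separated displacements `c`, then cells of
level `u + V` away from the boundary of the atom carry little conditional mass. -/
theorem pair_cells {X : ℕ → Ω → τ} {yr c : Ω → ℝ}
    (h0 : IsSys X (fl yr)) (h1 : IsSys X (fl (fun ω => yr ω + c ω)))
    {k m u u1 L1 v V l t G : ℕ} (hG : 0 < G) (ht : 32 * G ≤ 2 ^ t) (htV : t ≤ V)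
    (hkm : k ≤ m) (hv0 : u + (V + (V + l + 5)) = v) (hv1 : u1 + L1 = v)
    (hc : ∀ ω ω', X m ω = X m ω' → (2 : ℝ) ^ v * |c ω - c ω'| ≤ 1)
    (hck : ∀ ω ω', X k ω = X k ω' → (2 : ℝ) ^ (u + V) * |c ω - c ω'| ≤ 2)
    {ζ κ : ℝ} (hζ : 0 ≤ ζ) (hκ : 0 < κ)
    (hsm : (2 * (2 ^ (V + (V + l + 5)) * ζ) + 2 * (2 ^ L1 * ζ) / κ) * 2 ^ (2 * V + l + 2) ≤ 1)
    {ω0 ω1 ω2 : Ω}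
    (hpos : 0 < pA P (Sv X (fl yr) k u) ω0)
    (hJ : ∀ x, Sv X (fl yr) k u x = Sv X (fl yr) k u ω0 →
      fl (fun ω => yr ω + c ω) u1 x = fl (fun ω => yr ω + c ω) u1 ω0)
    (e1 : Sv X (fl yr) k u ω1 = Sv X (fl yr) k u ω0)
    (e2 : Sv X (fl yr) k u ω2 = Sv X (fl yr) k u ω0)
    (t1 : Typ P X yr c k m u u1 (V + (V + l + 5)) L1 ζ κ ω1)
    (t2 : Typ P X yr c k m u u1 (V + (V + l + 5)) L1 ζ κ ω2)
    (hsep : 2 ^ (V + 5) ≤ |fl c v ω2 - fl c v ω1|)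
    {x : Ω} (ex : Sv X (fl yr) k u x = Sv X (fl yr) k u ω0) (hx : x ∉ NM yr G u) :
    cE P (Sv X (fl yr) k u) (ind (fl yr (u + V)) {fl yr (u + V) x}) ω0 ≤ 2 ^ (t + 1) / 2 ^ V := by
  wlog ho : pA P (Sv X (fl yr) m u) ω2 * pA P (Sv X (fl (fun ω => yr ω + c ω)) m u1) ω1
      ≤ pA P (Sv X (fl yr) m u) ω1 * pA P (Sv X (fl (fun ω => yr ω + c ω)) m u1) ω2
      generalizing ω1 ω2
  · refine this e2 e1 t2 t1 ?_ (not_le.1 ho).le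
    rwa [abs_sub_comm]
  set L0 := V + (V + l + 5) with hL0
  set d := fl c v ω2 - fl c v ω1 with hd
  set ζ2 := 2 * (2 ^ L0 * ζ) + 2 * (2 ^ L1 * ζ) / κ with hζ2
  have hζ20 : 0 ≤ ζ2 := by positivity
  set ν := ProbabilityTheory.cond P (Sv X (fl yr) k u ⁻¹' {Sv X (fl yr) k u ω0}) with hν
  have hP0 : P (Sv X (fl yr) k u ⁻¹' {Sv X (fl yr) k u ω0}) ≠ 0 := by
    intro h
    have : pA P (Sv X (fl yr) k u) ω0 = 0 := by simp [pA, measureReal_def, h]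
    linarith
  have : IsProbabilityMeasure ν := ProbabilityTheory.cond_isProbabilityMeasure hP0
  have hcr : ∀ A, ν.real (fl yr v ⁻¹' A) = cE P (Sv X (fl yr) k u) (ind (fl yr v) A) ω0 :=
    fun A => cond_real (h0.fS k u) (h0.fY v) A ω0
  set N : ℕ := 2 ^ (V + l + 5) with hN
  set D : ℕ := d.natAbs with hD
  have hDa : (D : ℤ) = |d| := Int.natCast_natAbs d
  have hDlow : 2 ^ (V + 5) ≤ D := by
    have : ((2 ^ (V + 5) : ℕ) : ℤ) ≤ D := by rw [hDa]; exact_mod_cast hsep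
    exact_mod_cast this
  have hDpos : 0 < D := lt_of_lt_of_le (by positivity) hDlow
  -- the displacement varies by at most `2 N` units over the atom
  have hDup : D ≤ 3 * N := by
    have hX : X k ω2 = X k ω1 := (congrArg Prod.fst e2).trans (congrArg Prod.fst e1).symm
    have hcc := hck ω2 ω1 hX
    have hNr : (1 : ℝ) ≤ N := by
      have : 1 ≤ N := Nat.one_le_two_pow
      exact_mod_cast this
    have hvv : (2 : ℝ) ^ v = 2 ^ (u + V) * N := by
      rw [hN, ← hv0, hL0]; push_cast; rw [← pow_add]; congr 1; omega
    have hp : (0 : ℝ) < 2 ^ v := by positivity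
    have h3 : |(2 : ℝ) ^ v * c ω2 - 2 ^ v * c ω1| ≤ 2 * N := by
      rw [← mul_sub, abs_mul, abs_of_pos hp, hvv]
      nlinarith
    rw [abs_le] at h3
    have a1 := Int.floor_le ((2 : ℝ) ^ v * c ω1)
    have a2 := Int.lt_floor_add_one ((2 : ℝ) ^ v * c ω1)
    have a3 := Int.floor_le ((2 : ℝ) ^ v * c ω2)
    have a4 := Int.lt_floor_add_one ((2 : ℝ) ^ v * c ω2)
    have h4 : |(d : ℝ)| ≤ 3 * N := by
      simp only [hd, fl]
      push_cast
      rw [abs_le]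
      constructor <;> linarith
    have h5 : ((D : ℤ) : ℝ) ≤ 3 * N := by rw [hDa]; push_cast; exact h4
    exact_mod_cast h5
  set s : ℕ := 3 * N / D + 1 with hs
  set J : ℕ := 2 ^ (V - t) with hJd
  have hJ1 : 1 ≤ J := Nat.one_le_two_pow
  have hsD : 3 * N ≤ s * D := by
    have := Nat.lt_div_mul_add (a := 3 * N) hDpos
    rw [hs, add_mul, one_mul]; exact this.le
  have hsD6 : s * D ≤ 6 * N := by
    have := Nat.div_mul_le_self (3 * N) D
    rw [hs, add_mul, one_mul]; omega
  have hs4 : s ≤ 4 * 2 ^ l := by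
    have h2 : 3 * N / D ≤ 3 * 2 ^ l := by
      refine Nat.div_le_of_le_mul ?_
      calc 3 * N = 2 ^ (V + 5) * (3 * 2 ^ l) := by rw [hN]; ring
        _ ≤ D * (3 * 2 ^ l) := Nat.mul_le_mul_right _ hDlow
    have : 1 ≤ 2 ^ l := Nat.one_le_two_pow
    rw [hs]; omega
  have hJV : J ≤ 2 ^ V := Nat.pow_le_pow_right (by norm_num) (Nat.sub_le _ _)
  have h6 : 6 * s * J ≤ N := by
    calc 6 * s * J ≤ 6 * (4 * 2 ^ l) * 2 ^ V := by gcongr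
      _ ≤ 32 * 2 ^ l * 2 ^ V := by nlinarith [Nat.zero_le (2 ^ l * 2 ^ V)]
      _ = N := by rw [hN]; ring
  -- room on both sides of the cell
  have hJt : J * 2 ^ t = 2 ^ V := by rw [hJd, ← pow_add]; congr 1; omega
  have hGr : (0 : ℝ) < G := by exact_mod_cast hG
  have h16 : (16 : ℝ) * J ≤ 2 ^ V * (1 / (2 * G)) := by
    have e : (2 : ℝ) ^ V = J * 2 ^ t := by exact_mod_cast hJt.symm
    have ht' : (32 : ℝ) * G ≤ 2 ^ t := by exact_mod_cast ht
    rw [e, mul_one_div, le_div_iff₀ (by positivity)]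
    have : (0 : ℝ) ≤ J := Nat.cast_nonneg J
    nlinarith
  have hxu : fl yr u x = fl yr u ω0 := congrArg Prod.snd ex
  have hmid : ∀ n : ℤ, 1 / (2 * (G : ℝ)) ≤ |(2 : ℝ) ^ u * yr x - n| := by
    intro n
    by_contra hcon
    exact hx ⟨n, not_le.1 hcon⟩
  have m1 := hmid ⌊(2 : ℝ) ^ u * yr x⌋
  have m2 := hmid (⌊(2 : ℝ) ^ u * yr x⌋ + 1)
  have b1 := Int.floor_le ((2 : ℝ) ^ u * yr x)
  have b2 := Int.lt_floor_add_one ((2 : ℝ) ^ u * yr x)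
  rw [abs_of_nonneg (by linarith)] at m1
  rw [abs_of_nonpos (by push_cast; linarith)] at m2
  push_cast at m2
  have b3 := Int.floor_le ((2 : ℝ) ^ (u + V) * yr x)
  have b4 := Int.lt_floor_add_one ((2 : ℝ) ^ (u + V) * yr x)
  rw [pow_add] at b3 b4
  have hV0 : (0 : ℝ) < 2 ^ V := by positivity
  set F : ℤ := fl yr (u + V) x with hF
  set I : ℤ := fl yr u ω0 with hI
  have hFe : (⌊(2 : ℝ) ^ u * 2 ^ V * yr x⌋ : ℤ) = F := by rw [hF, fl, pow_add]
  have hIe : (⌊(2 : ℝ) ^ u * yr x⌋ : ℤ) = I := hxu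
  rw [hFe] at b3 b4
  rw [hIe] at m1 m2 b1 b2
  have c1 : 2 ^ V * I + 15 * (J : ℤ) ≤ F := by
    have : (((2 ^ V * I + 15 * (J : ℤ) : ℤ)) : ℝ) < ((F + 1 : ℤ) : ℝ) := by
      push_cast
      have hJr : (1 : ℝ) ≤ J := by exact_mod_cast hJ1
      nlinarith [mul_le_mul_of_nonneg_left m1 hV0.le]
    have := Int.cast_lt.1 this
    omega
  have c2 : F + 15 * (J : ℤ) ≤ 2 ^ V * (I + 1) := by
    have : (((F + 15 * (J : ℤ) : ℤ)) : ℝ) ≤ ((2 ^ V * (I + 1) : ℤ) : ℝ) := by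
      push_cast
      have hJr : (1 : ℝ) ≤ J := by exact_mod_cast hJ1
      nlinarith [mul_le_mul_of_nonneg_left m2 hV0.le]
    exact Int.cast_le.1 this
  have hNZ : (1 : ℤ) ≤ N := by exact_mod_cast (Nat.one_le_two_pow : 1 ≤ 2 ^ (V + l + 5))
  have hroom : (J : ℤ) * s * |d| + N ≤ 7 * J * N := by
    rw [← hDa]
    have : ((J * (s * D) + N : ℕ) : ℤ) ≤ ((7 * J * N : ℕ) : ℤ) := by
      have : J * (s * D) + N ≤ 7 * J * N := by
        have i1 := Nat.mul_le_mul_left J hsD6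
        have i2 := Nat.mul_le_mul_right N hJ1
        linarith
      exact_mod_cast this
    push_cast at this
    linarith
  have hL0e : (2 : ℤ) ^ L0 = 2 ^ V * N := by rw [hL0, hN]; push_cast; rw [← pow_add]
  have hJZ : (1 : ℤ) ≤ J := by exact_mod_cast hJ1
  have key := translate_bound ν (h0.fY v) (I0 := 2 ^ L0 * I) (I1 := 2 ^ L0 * (I + 1)) (d := d)
    (N := N) (a := N * F) (s := s) (J := J) (ζ := ζ2) hζ20 hJ1
    (fun a b ha hb => by
      rw [hcr, hcr]
      exact pair_step h0 h1 hkm hv0 hv1 hc hζ hκ hJ e1 e2 t1.d0 t2.d0 t1.d1 t2.d1 t1.pos t2.pos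
        t1.frac ho a b ha hb)
    (by rw [← hDa]; exact_mod_cast hsD) (by exact_mod_cast h6)
    (by
      rw [hL0e]
      nlinarith [mul_le_mul_of_nonneg_left c1 (by linarith : (0 : ℤ) ≤ N),
        mul_pos (by linarith : (0 : ℤ) < J) (by linarith : (0 : ℤ) < N)])
    (by
      rw [hL0e]
      nlinarith [mul_le_mul_of_nonneg_left c2 (by linarith : (0 : ℤ) ≤ N),
        mul_pos (by linarith : (0 : ℤ) < J) (by linarith : (0 : ℤ) < N)])
  rw [hcr] at key
  have hset : cE P (Sv X (fl yr) k u) (ind (fl yr (u + V)) {F}) ω0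
      ≤ cE P (Sv X (fl yr) k u) (ind (fl yr v) (Icc (N * F) (N * F + N - 1))) ω0 := by
    refine cE_mono ((h0.fY _).ind _) ((h0.fY _).ind _) (Eventually.of_forall fun y => ?_) ω0
    unfold ind
    by_cases hy : fl yr (u + V) y ∈ ({F} : Set ℤ)
    · rw [if_pos hy, if_pos]
      have hy' : fl yr (u + V) y = F := hy
      have := fl_div yr (u + V) (V + l + 5) y
      rw [hy', show u + V + (V + l + 5) = v by omega, Finset.mem_Ico] at this
      have hNe : ((N : ℕ) : ℤ) = 2 ^ (V + l + 5) := by rw [hN]; push_cast; rfl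
      rw [← hNe] at this
      constructor
      · exact this.1
      · have := this.2; rw [mul_add, mul_one] at this; omega
    · rw [if_neg hy]; split_ifs <;> norm_num
  refine hset.trans (key.trans ?_)
  have hsJ : (s : ℝ) * J * ζ2 ≤ 1 / J := by
    have hJr : (0 : ℝ) < J := by exact_mod_cast hJ1
    rw [le_div_iff₀ hJr]
    have hsr : (s : ℝ) ≤ 4 * 2 ^ l := by exact_mod_cast hs4
    have hJVr : (J : ℝ) ≤ 2 ^ V := by exact_mod_cast hJV
    calc (s : ℝ) * J * ζ2 * J ≤ (4 * 2 ^ l) * 2 ^ V * ζ2 * 2 ^ V := by gcongr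
      _ = ζ2 * 2 ^ (2 * V + l + 2) := by ring
      _ ≤ 1 := hsm
  have hJe : (1 : ℝ) / J = 2 ^ t / 2 ^ V := by
    have e : (2 : ℝ) ^ V = J * 2 ^ t := by exact_mod_cast hJt.symm
    have hJr : (0 : ℝ) < J := by exact_mod_cast hJ1
    rw [e]; field_simp
  calc (1 : ℝ) / J + s * J * ζ2 ≤ 2 ^ t / 2 ^ V + 2 ^ t / 2 ^ V := by rw [← hJe]; linarith
    _ = 2 ^ (t + 1) / 2 ^ V := by rw [pow_succ]; ring

end UUED

/-! ### Entropy bounds on a single atom -/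

namespace UUED

variable {Ω τ : Type*} [MeasurableSpace Ω] {α β : Type*}
variable {P : Measure Ω} [IsProbabilityMeasure P]

/-- Real-valued indicator function of an event. -/
def chi (N : Set Ω) (ω : Ω) : ℝ := if ω ∈ N then 1 else 0

theorem chi_fm {N : Set Ω} (hN : MeasurableSet N) : FM (chi N) := by
  refine ⟨((Set.finite_singleton (0 : ℝ)).insert 1).subset ?_, fun a => ?_⟩
  · rintro _ ⟨ω, rfl⟩
    unfold chi
    split_ifs <;> simp
  · exact (Measurable.ite hN measurable_const measurable_const) (measurableSet_singleton a)

theorem chi_nonneg (N : Set Ω) (ω : Ω) : 0 ≤ chi N ω := by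
  unfold chi; split_ifs <;> norm_num

theorem integral_chi {N : Set Ω} (hN : MeasurableSet N) : ∫ ω, chi N ω ∂P = P.real N := by
  have : chi N = N.indicator 1 := by
    funext ω
    by_cases h : ω ∈ N <;> simp [chi, h]
  rw [this, integral_indicator_one hN]

theorem cE_mono_on {B : Ω → β} (hB : FM B) {f g : Ω → ℝ} (hf : FM f) (hg : FM g) (ω : Ω)
    (h : ∀ᵐ x ∂P, B x = B ω → f x ≤ g x) : cE P B f ω ≤ cE P B g ω := by
  have i1 : FM (fun x => if B x = B ω then f x else 0) :=
    (hB.pair hf).comp (fun z => if z.1 = B ω then z.2 else 0)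
  have i2 : FM (fun x => if B x = B ω then g x else 0) :=
    (hB.pair hg).comp (fun z => if z.1 = B ω then z.2 else 0)
  rw [cE_congr_on (P := P) hB (f := f) (g := fun x => if B x = B ω then f x else 0) ω
      (fun x hx => by simp [hx]),
    cE_congr_on (P := P) hB (f := g) (g := fun x => if B x = B ω then g x else 0) ω
      (fun x hx => by simp [hx])]
  refine cE_mono i1 i2 ?_ ω
  filter_upwards [h] with x hx
  split_ifs with hb
  · exact hx hb
  · exact le_rfl

theorem cE_affine {B : Ω → β} (hB : FM B) {f : Ω → ℝ} (hf : FM f) (a b : ℝ) {ω : Ω}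
    (hp : 0 < pA P B ω) : cE P B (fun x => a + b * f x) ω = a + b * cE P B f ω := by
  have i1 : IntegrableOn (fun x => b * f x) (B ⁻¹' {B ω}) P := ((hf.cmul b).integrable).integrableOn
  have i0 : IntegrableOn (fun _ : Ω => a) (B ⁻¹' {B ω}) P := (integrable_const a).integrableOn
  unfold cE
  rw [integral_add i0 i1, integral_const_mul, setIntegral_const, add_div, smul_eq_mul,
    mul_div_assoc]
  have : P.real (B ⁻¹' {B ω}) = pA P B ω := rfl
  rw [this]
  field_simp

/-- If the atom avoids the grid of the second projection somewhere, the second projection has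
constant digits on it. -/
theorem same_digit {X : ℕ → Ω → τ} {yr c : Ω → ℝ} {k u u1 V t G : ℕ} (hG : 0 < G)
    (ht : 32 * G ≤ 2 ^ t) (hu : u1 + t = u)
    (hck : ∀ ω ω', X k ω = X k ω' → (2 : ℝ) ^ (u + V) * |c ω - c ω'| ≤ 2) {x y : Ω}
    (e : Sv X (fl yr) k u y = Sv X (fl yr) k u x) (hx : x ∉ NM (fun ω => yr ω + c ω) G u1) :
    fl (fun ω => yr ω + c ω) u1 y = fl (fun ω => yr ω + c ω) u1 x := by
  have hGr : (0 : ℝ) < G := by exact_mod_cast hG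
  have htr : (32 : ℝ) * G ≤ 2 ^ t := by exact_mod_cast ht
  have hmid : ∀ n : ℤ, 1 / (2 * (G : ℝ)) ≤ |(2 : ℝ) ^ u1 * (yr x + c x) - n| := by
    intro n
    by_contra hcon
    exact hx ⟨n, not_le.1 hcon⟩
  have m1 := hmid ⌊(2 : ℝ) ^ u1 * (yr x + c x)⌋
  have m2 := hmid (⌊(2 : ℝ) ^ u1 * (yr x + c x)⌋ + 1)
  have b1 := Int.floor_le ((2 : ℝ) ^ u1 * (yr x + c x))
  have b2 := Int.lt_floor_add_one ((2 : ℝ) ^ u1 * (yr x + c x))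
  rw [abs_of_nonneg (by linarith)] at m1
  rw [abs_of_nonpos (by push_cast; linarith)] at m2
  push_cast at m2
  have h1 := fl_close (f := yr) (congrArg Prod.snd e : fl yr u y = fl yr u x)
  have h2 := hck y x (congrArg Prod.fst e)
  have h3 : (2 : ℝ) ^ u * |c y - c x| ≤ 2 := by
    refine le_trans ?_ h2
    gcongr
    · norm_num
    · omega
  rw [← mul_sub, abs_mul, abs_of_pos (by positivity : (0 : ℝ) < 2 ^ u)] at h1
  have h4 : (2 : ℝ) ^ t * (2 ^ u1 * |(yr y + c y) - (yr x + c x)|) < 3 := by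
    have : |(yr y + c y) - (yr x + c x)| ≤ |yr y - yr x| + |c y - c x| := by
      rw [show (yr y + c y) - (yr x + c x) = (yr y - yr x) + (c y - c x) by ring]
      exact abs_add_le _ _
    have hp : (0 : ℝ) < 2 ^ u := by positivity
    calc (2 : ℝ) ^ t * (2 ^ u1 * |(yr y + c y) - (yr x + c x)|)
        = 2 ^ u * |(yr y + c y) - (yr x + c x)| := by rw [← hu, pow_add]; ring
      _ ≤ 2 ^ u * (|yr y - yr x| + |c y - c x|) := by gcongr
      _ < 3 := by linarith
  have h5 : |(2 : ℝ) ^ u1 * (yr y + c y) - 2 ^ u1 * (yr x + c x)| < 1 / (2 * G) := by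
    rw [← mul_sub, abs_mul, abs_of_pos (by positivity : (0 : ℝ) < 2 ^ u1),
      lt_div_iff₀ (by positivity)]
    set A := (2 : ℝ) ^ u1 * |(yr y + c y) - (yr x + c x)|
    have hA : 0 ≤ A := by positivity
    nlinarith
  rw [abs_lt] at h5
  unfold fl
  rw [Int.floor_eq_iff]
  constructor <;> linarith

/-- Away from the grid, little conditional mass of the cells forces almost full conditional
entropy of the digits from `u` to `u + V`. -/
theorem D2_small {X : ℕ → Ω → τ} {yr : Ω → ℝ} (h0 : IsSys X (fl yr)) (hyr : Measurable yr)
    {k p V t G : ℕ} (hV : 0 < V) (htV : t + 1 ≤ V) {κ5 : ℝ} {ω0 : Ω}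
    (hpos : 0 < pA P (Sv X (fl yr) k (k + p)) ω0)
    (hcell : ∀ x, Sv X (fl yr) k (k + p) x = Sv X (fl yr) k (k + p) ω0 → x ∉ NM yr G (k + p) →
      cE P (Sv X (fl yr) k (k + p)) (ind (fl yr (k + p + V)) {fl yr (k + p + V) x}) ω0
        ≤ 2 ^ (t + 1) / 2 ^ V)
    (hN : cE P (Sv X (fl yr) k (k + p)) (chi (NM yr G (k + p))) ω0 ≤ κ5) :
    D2 P X (fl yr) V p k ω0 ≤ κ5 + (t + 1) / V := by
  have hVr : (0 : ℝ) < V := by exact_mod_cast hV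
  have htr : (t : ℝ) + 1 ≤ V := by exact_mod_cast htV
  have hm := NM_meas hyr G (k + p)
  have hB := h0.fS k (k + p)
  have key : cE P (Sv X (fl yr) k (k + p))
      (fun x => ((V : ℝ) - (t + 1)) + (-((V : ℝ) - (t + 1))) * chi (NM yr G (k + p)) x) ω0
      ≤ cE P (Sv X (fl yr) k (k + p))
        (fun x => Lg P X (fl yr) k (k + p) x - Lg P X (fl yr) k (k + p + V) x) ω0 := by
    refine cE_mono_on hB ((chi_fm hm).comp (fun z => ((V : ℝ) - (t + 1)) + (-((V : ℝ) - (t + 1))) * z))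
      ((h0.fL _ _).sub (h0.fL _ _)) ω0 ?_
    filter_upwards [pA_pos_ae (P := P) (h0.fS k (k + p + V)),
      h0.Lanti (P := P) (le_refl k) (Nat.le_add_right (k + p) V)] with x hx hx2 ex
    by_cases hxN : x ∈ NM yr G (k + p)
    · simp only [chi, if_pos hxN]; linarith
    · simp only [chi, if_neg hxN]
      have hc := hcell x ex hxN
      have hmul := pA_mul_cE (P := P) hB (h0.fY (k + p + V)) {fl yr (k + p + V) x} ω0
      have hle : pA P (Sv X (fl yr) k (k + p + V)) x
          ≤ pA P (Sv X (fl yr) k (k + p)) ω0 * (2 ^ (t + 1) / 2 ^ V) := by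
        refine le_trans ?_ (mul_le_mul_of_nonneg_left hc hpos.le)
        rw [hmul]
        refine measureReal_mono ?_
        intro z hz
        have hz' : Sv X (fl yr) k (k + p + V) z = Sv X (fl yr) k (k + p + V) x := hz
        refine ⟨?_, congrArg Prod.snd hz'⟩
        have := h0.dS (le_refl k) (Nat.le_add_right (k + p) V) z x hz'
        exact this.trans ex
      have hpe : pA P (Sv X (fl yr) k (k + p)) x = pA P (Sv X (fl yr) k (k + p)) ω0 :=
        pA_dep (P := P) _ x ω0 ex
      have hlog : Lg P X (fl yr) k (k + p + V) x
          ≤ Lg P X (fl yr) k (k + p) x + ((t : ℝ) + 1 - V) := by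
        show Real.logb 2 _ ≤ Real.logb 2 _ + _
        rw [hpe]
        refine (Real.logb_le_logb_of_le (by norm_num) hx hle).trans ?_
        rw [Real.logb_mul hpos.ne' (by positivity),
          Real.logb_div (by positivity) (by positivity), Real.logb_pow, Real.logb_pow,
          Real.logb_self_eq_one (by norm_num)]
        push_cast
        linarith
      linarith
  rw [cE_affine hB (chi_fm hm) _ _ hpos] at key
  have hD2 : D2 P X (fl yr) V p k ω0 = 1 - cE P (Sv X (fl yr) k (k + p))
        (fun x => Lg P X (fl yr) k (k + p) x - Lg P X (fl yr) k (k + p + V) x) ω0 / V := rfl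
  have h0N : 0 ≤ cE P (Sv X (fl yr) k (k + p)) (chi (NM yr G (k + p))) ω0 :=
    cE_nonneg (Eventually.of_forall fun ω => chi_nonneg _ _) ω0
  rw [hD2]
  set z := cE P (Sv X (fl yr) k (k + p)) (chi (NM yr G (k + p))) ω0
  set w := cE P (Sv X (fl yr) k (k + p))
        (fun x => Lg P X (fl yr) k (k + p) x - Lg P X (fl yr) k (k + p + V) x) ω0
  have : 1 - κ5 - (t + 1) / V ≤ w / V := by
    rw [le_div_iff₀ hVr, sub_mul, div_mul_cancel₀ _ hVr.ne']
    nlinarith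
  linarith

theorem IsSys.count_pow {X : ℕ → Ω → τ} {Y : ℕ → Ω → ℤ} (h : IsSys X Y) (k l : ℕ) (a : τ) :
    (X (k + l) '' (X k ⁻¹' {a})).ncard ≤ 4 ^ l := by
  induction l with
  | zero =>
    have : X (k + 0) '' (X k ⁻¹' {a}) ⊆ {a} := by
      rintro _ ⟨x, hx, rfl⟩; exact hx
    exact (Set.ncard_le_ncard this (Set.finite_singleton a)).trans (by simp)
  | succ l ih =>
    have hfin : (X (k + l) '' (X k ⁻¹' {a})).Finite := (h.fX (k + l)).fin.subset (image_subset_range _ _)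
    have hsub : X (k + (l + 1)) '' (X k ⁻¹' {a})
        ⊆ ⋃ b ∈ hfin.toFinset, X (k + l + 1) '' (X (k + l) ⁻¹' {b}) := by
      rintro _ ⟨x, hx, rfl⟩
      simp only [mem_iUnion]
      exact ⟨X (k + l) x, hfin.mem_toFinset.2 ⟨x, hx, rfl⟩, x, rfl, rfl⟩
    have hf2 : (⋃ b ∈ hfin.toFinset, X (k + l + 1) '' (X (k + l) ⁻¹' {b})).Finite :=
      (h.fX (k + l + 1)).fin.subset (by
        simp only [iUnion_subset_iff]
        exact fun _ _ => image_subset_range _ _)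
    calc _ ≤ _ := Set.ncard_le_ncard hsub hf2
      _ ≤ ∑ b ∈ hfin.toFinset, (X (k + l + 1) '' (X (k + l) ⁻¹' {b})).ncard :=
        Finset.set_ncard_biUnion_le _ _
      _ ≤ ∑ b ∈ hfin.toFinset, 4 := Finset.sum_le_sum fun b _ => h.cX _ _
      _ = hfin.toFinset.card * 4 := by simp
      _ ≤ 4 ^ l * 4 := by
        rw [← Set.ncard_eq_toFinset_card _ hfin]
        exact Nat.mul_le_mul_right _ ih
      _ = 4 ^ (l + 1) := by ring

/-- If `X (k + l)` takes few values on an atom outside an exceptional event, its conditional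
entropy is small. -/
theorem D1_small {X : ℕ → Ω → τ} {Y : ℕ → Ω → ℤ} (h : IsSys X Y) {k p l : ℕ} (hl : 0 < l)
    {N : Set Ω} (hN : MeasurableSet N) {κ2 : ℝ} {ω0 : Ω} (hpos : 0 < pA P (Sv X Y k (k + p)) ω0)
    (hcard : (X (k + l) '' {x | Sv X Y k (k + p) x = Sv X Y k (k + p) ω0 ∧ x ∉ N}).ncard ≤ 2 ^ 11)
    (hNe : cE P (Sv X Y k (k + p)) (chi N) ω0 ≤ κ2) :
    D1 P X Y l p k ω0 ≤ 12 / l + 3 * κ2 := by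
  have hlr : (1 : ℝ) ≤ l := by exact_mod_cast hl
  set T := X (k + l) '' {x | Sv X Y k (k + p) x = Sv X Y k (k + p) ω0 ∧ x ∉ N} with hT
  set W := X (k + l) '' (X k ⁻¹' {X k ω0}) with hW
  have hWc : W.ncard ≤ 4 ^ l := h.count_pow k l _
  have hTf : T.Finite := (h.fX (k + l)).fin.subset (image_subset_range _ _)
  have hWf : W.Finite := (h.fX (k + l)).fin.subset (image_subset_range _ _)
  set R : τ → ℝ := fun a => (if a ∈ T then (1 / 2 ^ 12 : ℝ) else 0)
    + (if a ∈ W then (1 / (2 * 4 ^ l) : ℝ) else 0) with hR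
  have hsum : ∀ (s : Set τ) (hs : s.Finite) (w : ℝ), 0 ≤ w → ∀ (F : Finset τ),
      ∑ a ∈ F, (if a ∈ s then w else 0) ≤ s.ncard * w := by
    intro s hs w hw F
    rw [← Finset.sum_filter, Finset.sum_const, nsmul_eq_mul]
    refine mul_le_mul_of_nonneg_right ?_ hw
    rw [Set.ncard_eq_toFinset_card _ hs]
    have : F.filter (· ∈ s) ⊆ hs.toFinset := by
      intro a ha; exact hs.mem_toFinset.2 (Finset.mem_filter.1 ha).2
    exact_mod_cast Finset.card_le_card this
  have hB := h.fS k (k + p)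
  have hxW : ∀ x, Sv X Y k (k + p) x = Sv X Y k (k + p) ω0 → X (k + l) x ∈ W :=
    fun x hx => ⟨x, congrArg Prod.fst hx, rfl⟩
  have h4 : (0 : ℝ) < 1 / (2 * 4 ^ l) := by positivity
  have g := gibbs_atom (P := P) (h.fX (k + l)) hB ω0 R
    (fun a => by simp only [hR]; split_ifs <;> positivity)
    (fun x hx => by
      simp only [hR, if_pos (hxW x hx)]
      split_ifs <;> positivity)
    (by
      simp only [hR]
      rw [Finset.sum_add_distrib]
      have a1 := hsum T hTf (1 / 2 ^ 12) (by positivity) (h.fX (k + l)).fin.toFinset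
      have a2 := hsum W hWf (1 / (2 * 4 ^ l)) (by positivity) (h.fX (k + l)).fin.toFinset
      have c1 : (T.ncard : ℝ) ≤ 2 ^ 11 := by exact_mod_cast hcard
      have c2 : (W.ncard : ℝ) ≤ 4 ^ l := by exact_mod_cast hWc
      have b1 : (T.ncard : ℝ) * (1 / 2 ^ 12) ≤ 1 / 2 := by linarith
      have b2 : (W.ncard : ℝ) * (1 / (2 * 4 ^ l)) ≤ 1 / 2 := by
        rw [mul_one_div, div_le_iff₀ (by positivity)]; linarith
      linarith)
  rw [h.Lpair_X (Nat.le_add_right k l)] at g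
  have g2 : cE P (Sv X Y k (k + p)) (fun x => - Real.logb 2 (R (X (k + l) x))) ω0
      ≤ cE P (Sv X Y k (k + p)) (fun x => (12 : ℝ) + (2 * l + 1) * chi N x) ω0 := by
    refine cE_mono_on hB ((h.fX (k + l)).comp (fun a => - Real.logb 2 (R a)))
      ((chi_fm hN).comp (fun z => (12 : ℝ) + (2 * l + 1) * z)) ω0 (Eventually.of_forall ?_)
    intro x hx
    have hw := hxW x hx
    by_cases hxN : x ∈ N
    · have : (1 / (2 * 4 ^ l) : ℝ) ≤ R (X (k + l) x) := by
        simp only [hR, if_pos hw]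
        split_ifs
        · linarith [show (0 : ℝ) < 1 / 2 ^ 12 by norm_num]
        · linarith
      have := Real.logb_le_logb_of_le (b := 2) (by norm_num) h4 this
      rw [one_div, Real.logb_inv, show (2 * 4 ^ l : ℝ) = 2 ^ (2 * l + 1) by
        rw [pow_succ, pow_mul]; norm_num; ring, Real.logb_pow,
        Real.logb_self_eq_one (by norm_num)] at this
      push_cast at this
      simp only [chi, if_pos hxN]
      linarith
    · have hxT : X (k + l) x ∈ T := ⟨x, ⟨hx, hxN⟩, rfl⟩
      have : (1 / 2 ^ 12 : ℝ) ≤ R (X (k + l) x) := by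
        simp only [hR, if_pos hw, if_pos hxT]; linarith
      have := Real.logb_le_logb_of_le (b := 2) (by norm_num) (by norm_num) this
      rw [one_div, Real.logb_inv, Real.logb_pow, Real.logb_self_eq_one (by norm_num)] at this
      push_cast at this
      simp only [chi, if_neg hxN]
      linarith
  rw [cE_affine hB (chi_fm hN) _ _ hpos] at g2
  have hD1 : D1 P X Y l p k ω0 = cE P (Sv X Y k (k + p))
        (fun x => Lg P X Y k (k + p) x - Lg P X Y (k + l) (k + p) x) ω0 / l := rfl
  have h0N : 0 ≤ cE P (Sv X Y k (k + p)) (chi N) ω0 :=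
    cE_nonneg (Eventually.of_forall fun ω => chi_nonneg _ _) ω0
  rw [hD1, div_le_iff₀ (by linarith), add_mul, div_mul_cancel₀ _ (by linarith)]
  have g3 : cE P (Sv X Y k (k + p))
        (fun x => Lg P X Y k (k + p) x - Lg P X Y (k + l) (k + p) x) ω0 ≤ _ := g.trans g2
  refine g3.trans ?_
  nlinarith

end UUED

/-! ### Upper bound for the mean of `D1 * D2` -/

namespace UUED

variable {Ω τ : Type*} [MeasurableSpace Ω] {α β : Type*}
variable {P : Measure Ω} [IsProbabilityMeasure P] {U : Ultrafilter ℕ}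

/-- The event that the point is not typical for the pair of projections, or that its second
projection is close to the grid. -/
def BadS (P : Measure Ω) (X : ℕ → Ω → τ) (yr c : Ω → ℝ) (k m u u1 L0 L1 G : ℕ) (ζ κ : ℝ) : Set Ω :=
  {ω | ζ ^ 2 < dv P X (fl yr) L0 k m u ω} ∪
  {ω | ζ ^ 2 < dv P X (fl (fun ω => yr ω + c ω)) L1 k m u1 ω} ∪
  {ω | pA P (fun x => (fl yr u x, Sv X (fl (fun ω => yr ω + c ω)) m u1 x)) ω
      < κ * pA P (Sv X (fl (fun ω => yr ω + c ω)) m u1) ω} ∪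
  NM (fun ω => yr ω + c ω) G u1 ∪ {ω | ¬ 0 < pA P (Sv X (fl yr) m u) ω}

theorem pA_fm {B : Ω → β} (hB : FM B) : FM (pA P B) := hB.dep (pA_dep B)

theorem BadS_meas {X : ℕ → Ω → τ} {yr c : Ω → ℝ} (hyr : Measurable yr) (hc : Measurable c)
    (h0 : IsSys X (fl yr)) (h1 : IsSys X (fl (fun ω => yr ω + c ω)))
    (k m u u1 L0 L1 G : ℕ) (ζ κ : ℝ) : MeasurableSet (BadS P X yr c k m u u1 L0 L1 G ζ κ) := by
  unfold BadS
  refine (((MeasurableSet.union ?_ ?_).union ?_).union (NM_meas (hyr.add hc) G u1)).union ?_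
  · exact measurableSet_lt measurable_const (h0.dv_fm _ _ _ _).measurable
  · exact measurableSet_lt measurable_const (h1.dv_fm _ _ _ _).measurable
  · exact measurableSet_lt (pA_fm ((h0.fY u).pair (h1.fS m u1))).measurable
      ((pA_fm (h1.fS m u1)).cmul κ).measurable
  · exact (measurableSet_lt measurable_const (pA_fm (h0.fS m u)).measurable).compl

theorem Typ_of_not_BadS {X : ℕ → Ω → τ} {yr c : Ω → ℝ} {k m u u1 L0 L1 G : ℕ} {ζ κ : ℝ} {ω : Ω}
    (h : ω ∉ BadS P X yr c k m u u1 L0 L1 G ζ κ) :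
    Typ P X yr c k m u u1 L0 L1 ζ κ ω ∧ ω ∉ NM (fun ω => yr ω + c ω) G u1 := by
  unfold BadS at h
  simp only [mem_union, not_or, mem_ofPred_eq, not_lt] at h
  obtain ⟨⟨⟨⟨a, b⟩, d⟩, e⟩, f⟩ := h
  refine ⟨⟨a, b, not_le.1 f, d.trans (pA_mono ?_ ω)⟩, e⟩
  intro x y hxy
  simp only [Prod.mk.injEq] at hxy
  have h2 := congrArg Prod.fst hxy.2
  exact Prod.ext h2 hxy.1

theorem markov {f : Ω → ℝ} (hf : FM f) (h0 : ∀ ω, 0 ≤ f ω) {c : ℝ} (hc : 0 < c) :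
    P.real {ω | c < f ω} ≤ (∫ ω, f ω ∂P) / c := by
  have := mul_meas_ge_le_integral_of_nonneg (μ := P) (Eventually.of_forall h0) hf.integrable c
  rw [le_div_iff₀ hc, mul_comm]
  refine le_trans ?_ this
  refine mul_le_mul_of_nonneg_left (measureReal_mono ?_) hc.le
  intro ω hω
  exact (show c < f ω from hω).le

theorem BadS_le {X : ℕ → Ω → τ} {yr c : Ω → ℝ}
    (h0 : IsSys X (fl yr)) (h1 : IsSys X (fl (fun ω => yr ω + c ω)))
    {k m u u1 L0 L1 t G : ℕ} (hu : u1 + t = u) {ζ κ : ℝ} (hζ : 0 < ζ) (hκ : 0 ≤ κ)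
    (hc : ∀ ω ω', X m ω = X m ω' → (2 : ℝ) ^ u * |c ω - c ω'| ≤ 1) :
    P.real (BadS P X yr c k m u u1 L0 L1 G ζ κ)
      ≤ (∫ ω, dv P X (fl yr) L0 k m u ω ∂P) / ζ ^ 2
        + (∫ ω, dv P X (fl (fun ω => yr ω + c ω)) L1 k m u1 ω ∂P) / ζ ^ 2
        + κ * (2 ^ (t + 1) + 3) + P.real (NM (fun ω => yr ω + c ω) G u1) := by
  have hζ2 : 0 < ζ ^ 2 := by positivity
  have a1 := markov (P := P) (h0.dv_fm (P := P) L0 k m u) (fun ω => dv_nonneg _ _ _ _ ω) hζ2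
  have a2 := markov (P := P) (h1.dv_fm (P := P) L1 k m u1) (fun ω => dv_nonneg _ _ _ _ ω) hζ2
  have a3 := small_atoms (P := P) (h0.fY u) (h1.fS m u1) (2 ^ (t + 1) + 3) (by
    intro b
    rcases (fl yr u '' (Sv X (fl (fun ω => yr ω + c ω)) m u1 ⁻¹' {b})).eq_empty_or_nonempty with he | hne
    · rw [he]; simp
    obtain ⟨_, w, hw, rfl⟩ := hne
    have hsub : fl yr u '' (Sv X (fl (fun ω => yr ω + c ω)) m u1 ⁻¹' {b})
        ⊆ (Finset.Icc (fl yr u w - (2 ^ t + 1)) (fl yr u w + (2 ^ t + 1)) : Finset ℤ) := by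
      rintro _ ⟨x, hx, rfl⟩
      have e : Sv X (fl (fun ω => yr ω + c ω)) m u1 x = Sv X (fl (fun ω => yr ω + c ω)) m u1 w :=
        (show _ = b from hx).trans (show _ = b from hw).symm
      have h2 := fl_close (f := fun ω => yr ω + c ω) (congrArg Prod.snd e :
        fl (fun ω => yr ω + c ω) u1 x = fl (fun ω => yr ω + c ω) u1 w)
      have h3 := hc x w (congrArg Prod.fst e)
      have hp : (0 : ℝ) < 2 ^ t := by positivity
      have h4 : |(2 : ℝ) ^ u * (yr x + c x) - 2 ^ u * (yr w + c w)| < 2 ^ t := by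
        rw [← hu, pow_add, mul_comm ((2 : ℝ) ^ u1), mul_assoc, mul_assoc, ← mul_sub, abs_mul,
          abs_of_pos hp]
        nlinarith
      rw [← abs_of_pos (by positivity : (0 : ℝ) < 2 ^ u), ← abs_mul] at h3
      rw [abs_lt] at h4
      rw [abs_le] at h3
      have b1 := Int.floor_le ((2 : ℝ) ^ u * yr x)
      have b2 := Int.lt_floor_add_one ((2 : ℝ) ^ u * yr x)
      have b3 := Int.floor_le ((2 : ℝ) ^ u * yr w)
      have b4 := Int.lt_floor_add_one ((2 : ℝ) ^ u * yr w)
      rw [Finset.coe_Icc, mem_Icc]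
      unfold fl
      constructor
      · have : (((⌊(2 : ℝ) ^ u * yr w⌋ - (2 ^ t + 1) : ℤ)) : ℝ)
            < ((⌊(2 : ℝ) ^ u * yr x⌋ + 1 : ℤ) : ℝ) := by push_cast; linarith
        have := Int.cast_lt.1 this
        omega
      · have : ((⌊(2 : ℝ) ^ u * yr x⌋ : ℤ) : ℝ)
            < ((⌊(2 : ℝ) ^ u * yr w⌋ + (2 ^ t + 1) + 1 : ℤ) : ℝ) := by push_cast; linarith
        have := Int.cast_lt.1 this
        omega
    refine (Set.ncard_le_ncard hsub (Finset.finite_toSet _)).trans ?_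
    rw [Set.ncard_coe_finset, Int.card_Icc]
    have : ((2 ^ t : ℕ) : ℤ) = 2 ^ t := by push_cast; rfl
    rw [pow_succ, ← this]
    omega) hκ
  have a4 : P.real {ω | ¬ 0 < pA P (Sv X (fl yr) m u) ω} = 0 := by
    have := pA_pos_ae (P := P) (h0.fS m u)
    rw [ae_iff] at this
    rw [measureReal_def, this, ENNReal.toReal_zero]
  push_cast at a3
  unfold BadS
  refine (measureReal_union_le _ _).trans ?_
  rw [a4, add_zero]
  refine (measureReal_union_le _ _).trans (add_le_add ?_ le_rfl)
  refine (measureReal_union_le _ _).trans (add_le_add ?_ a3)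
  exact (measureReal_union_le _ _).trans (add_le_add a1 a2)

set_option maxHeartbeats 1000000 in
/-- At a single scale, `D1 * D2` is small on average: on a typical atom either two points have
separated displacements, so the digits of the projection are nearly equidistributed and `D2` is
small, or all displacements agree, so the two projections determine `X (k + l)` and `D1` is
small. -/
theorem pair_local {X : ℕ → Ω → τ} {yr c : Ω → ℝ} (hyr : Measurable yr) (hcm : Measurable c)
    (h0 : IsSys X (fl yr)) (h1 : IsSys X (fl (fun ω => yr ω + c ω)))
    {r q t V l G : ℕ} (k : ℕ) (hl : 0 < l) (hG : 0 < G) (ht : 32 * G ≤ 2 ^ t) (htV : t + 1 ≤ V)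
    (hr : V + l + 6 ≤ r) (hP : IsPair X yr c (r + q + t + V))
    {ζ κ2 κ3 κ5 : ℝ} (hζ : 0 < ζ) (hκ2 : 0 < κ2) (hκ3 : 0 < κ3) (hκ5 : 0 < κ5)
    (hsm : (2 * (2 ^ (V + (V + l + 5)) * ζ) + 2 * (2 ^ (V + (V + l + 5) + t) * ζ) / κ3)
      * 2 ^ (2 * V + l + 2) ≤ 1) :
    ∫ ω, D1 P X (fl yr) l (r + q + t) k ω * D2 P X (fl yr) V (r + q + t) k ω ∂P
      ≤ 12 / l + 3 * κ2 + 2 * (κ5 + (t + 1) / V)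
        + (2 / κ2) * ((∫ ω, dv P X (fl yr) (V + (V + l + 5)) k (k + r) (k + (r + q + t)) ω ∂P) / ζ ^ 2
        + (∫ ω, dv P X (fl (fun ω => yr ω + c ω)) (V + (V + l + 5) + t) k (k + r) (k + (r + q)) ω ∂P) / ζ ^ 2
        + κ3 * (2 ^ (t + 1) + 3) + P.real (NM (fun ω => yr ω + c ω) G (k + (r + q))))
        + (2 / κ5) * P.real (NM yr G (k + (r + q + t))) := by
  set p := r + q + t with hp
  set L0 := V + (V + l + 5) with hL0
  set L1 := L0 + t with hL1
  have hlr : (0 : ℝ) < l := by exact_mod_cast hl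
  have hVr : (0 : ℝ) < V := by
    have : 0 < V := by omega
    exact_mod_cast this
  have hck : ∀ ω ω', X k ω = X k ω' → (2 : ℝ) ^ (k + p + V) * |c ω - c ω'| ≤ 2 := by
    intro ω ω' h
    have := hP.cvar k ω ω' h
    rwa [← add_assoc] at this
  have hcm1 : ∀ ω ω', X (k + r) ω = X (k + r) ω' → (2 : ℝ) ^ (k + p + L0) * |c ω - c ω'| ≤ 1 := by
    intro ω ω' h
    have h2 := hP.cvar (k + r) ω ω' h
    have h3 : (2 : ℝ) ^ (k + p + L0 + 1) ≤ 2 ^ (k + r + (p + V)) :=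
      pow_le_pow_right₀ (by norm_num) (by omega)
    have h4 := mul_le_mul_of_nonneg_right h3 (abs_nonneg (c ω - c ω'))
    rw [pow_succ] at h4
    linarith
  set Bad := BadS P X yr c k (k + r) (k + p) (k + (r + q)) L0 L1 G ζ κ3 with hBad
  have hBm : MeasurableSet Bad := BadS_meas hyr hcm h0 h1 _ _ _ _ _ _ _ _ _
  have hBle := BadS_le (P := P) h0 h1 (k := k) (m := k + r) (u := k + p) (u1 := k + (r + q))
    (L0 := L0) (L1 := L1) (t := t) (G := G) (by omega) hζ hκ3.le (by
      intro ω ω' h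
      refine le_trans ?_ (hcm1 ω ω' h)
      exact mul_le_mul_of_nonneg_right (pow_le_pow_right₀ (by norm_num) (by omega)) (abs_nonneg _))
  have hNm := NM_meas hyr G (k + p)
  set B := Sv X (fl yr) k (k + p) with hB
  have hBf : FM B := h0.fS k (k + p)
  set K := 12 / (l : ℝ) + 3 * κ2 + 2 * (κ5 + (t + 1) / V) with hK
  have hK0 : 0 ≤ 12 / (l : ℝ) + 3 * κ2 := by positivity
  have hK1 : 0 ≤ 2 * (κ5 + ((t : ℝ) + 1) / V) := by positivity
  have hpt : ∀ᵐ ω ∂P, D1 P X (fl yr) l p k ω * D2 P X (fl yr) V p k ω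
      ≤ K + (2 / κ2) * cE P B (chi Bad) ω + (2 / κ5) * cE P B (chi (NM yr G (k + p))) ω := by
    filter_upwards [pA_pos_ae (P := P) hBf] with ω0 hpos
    have n1 : 0 ≤ cE P B (chi Bad) ω0 :=
      cE_nonneg (Eventually.of_forall fun ω => chi_nonneg _ _) ω0
    have n2 : 0 ≤ cE P B (chi (NM yr G (k + p))) ω0 :=
      cE_nonneg (Eventually.of_forall fun ω => chi_nonneg _ _) ω0
    have d1 := h0.D1_nonneg (P := P) l p k ω0
    have d1' := h0.D1_le (P := P) l p k ω0
    have d2 := h0.D2_nonneg (P := P) V p k ω0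
    have d2' := h0.D2_le (P := P) V p k ω0
    have m1 : 0 ≤ (2 / κ2) * cE P B (chi Bad) ω0 := by positivity
    have m2 : 0 ≤ (2 / κ5) * cE P B (chi (NM yr G (k + p))) ω0 := by positivity
    have hD2 : D1 P X (fl yr) l p k ω0 * D2 P X (fl yr) V p k ω0 ≤ 2 := by nlinarith
    by_cases c1 : κ2 < cE P B (chi Bad) ω0
    · have : 2 ≤ (2 / κ2) * cE P B (chi Bad) ω0 := by
        rw [div_mul_eq_mul_div, le_div_iff₀ hκ2]; linarith
      linarith
    by_cases c2 : κ5 < cE P B (chi (NM yr G (k + p))) ω0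
    · have : 2 ≤ (2 / κ5) * cE P B (chi (NM yr G (k + p))) ω0 := by
        rw [div_mul_eq_mul_div, le_div_iff₀ hκ5]; linarith
      linarith
    push Not at c1 c2
    by_cases hsep : ∃ ω1 ω2, B ω1 = B ω0 ∧ B ω2 = B ω0 ∧ ω1 ∉ Bad ∧ ω2 ∉ Bad ∧
        2 ^ (V + 5) ≤ |fl c (k + p + L0) ω2 - fl c (k + p + L0) ω1|
    · obtain ⟨ω1, ω2, e1, e2, b1, b2, hs⟩ := hsep
      obtain ⟨t1, nm1⟩ := Typ_of_not_BadS b1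
      obtain ⟨t2, -⟩ := Typ_of_not_BadS b2
      have hdig : ∀ x, B x = B ω0 → fl (fun ω => yr ω + c ω) (k + (r + q)) x
          = fl (fun ω => yr ω + c ω) (k + (r + q)) ω1 := fun x hx =>
        same_digit (X := X) (V := V) hG ht (by omega) hck (hx.trans e1.symm) nm1
      have hJ : ∀ x, B x = B ω0 → fl (fun ω => yr ω + c ω) (k + (r + q)) x
          = fl (fun ω => yr ω + c ω) (k + (r + q)) ω0 := fun x hx =>
        (hdig x hx).trans (hdig ω0 rfl).symm
      have := D2_small h0 hyr (by omega : 0 < V) htV hpos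
        (fun x ex hx => pair_cells h0 h1 hG ht (by omega) (Nat.le_add_right k r) rfl
          (by omega : k + (r + q) + L1 = k + p + L0) hcm1 hck hζ.le hκ3 hsm hpos hJ e1 e2 t1 t2 hs
          ex hx) c2
      nlinarith
    · push Not at hsep
      have hcard : (X (k + l) '' {x | B x = B ω0 ∧ x ∉ Bad}).ncard ≤ 2 ^ 11 := by
        rcases {x | B x = B ω0 ∧ x ∉ Bad}.eq_empty_or_nonempty with he | ⟨w, hw, hwB⟩
        · rw [he]; simp
        refine le_trans (Set.ncard_le_ncard (image_mono ?_) ?_) (hP.count k l w)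
        · rintro x ⟨hx, hxB⟩
          have e : B x = B w := hx.trans hw.symm
          refine ⟨congrArg Prod.fst e, ?_, ?_⟩
          · have h2 := fl_close (f := yr) (congrArg Prod.snd e : fl yr (k + p) x = fl yr (k + p) w)
            rw [← mul_sub, abs_mul, abs_of_pos (by positivity : (0 : ℝ) < 2 ^ (k + p))] at h2
            refine le_trans ?_ h2.le
            gcongr
            · norm_num
            · omega
          · have h2 := hsep w x hw hx hwB hxB
            have a1 := Int.floor_le ((2 : ℝ) ^ (k + p + L0) * c w)
            have a2 := Int.lt_floor_add_one ((2 : ℝ) ^ (k + p + L0) * c w)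
            have a3 := Int.floor_le ((2 : ℝ) ^ (k + p + L0) * c x)
            have a4 := Int.lt_floor_add_one ((2 : ℝ) ^ (k + p + L0) * c x)
            have h3 : |(fl c (k + p + L0) x - fl c (k + p + L0) w : ℤ)| + 1 ≤ 2 ^ (V + 5) := h2
            have h4 : (((|(fl c (k + p + L0) x - fl c (k + p + L0) w : ℤ)| + 1 : ℤ)) : ℝ)
                ≤ ((2 ^ (V + 5) : ℤ) : ℝ) := Int.cast_le.2 h3
            push_cast at h4
            have h5 := abs_le.1 (le_sub_iff_add_le.2 h4)
            unfold fl at h5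
            have h6 : |(2 : ℝ) ^ (k + p + L0) * c x - 2 ^ (k + p + L0) * c w| ≤ 2 ^ (V + 5) := by
              rw [abs_le]; constructor <;> linarith [h5.1, h5.2]
            rw [← mul_sub, abs_mul, abs_of_pos (by positivity : (0 : ℝ) < 2 ^ (k + p + L0)),
              show k + p + L0 = k + (p + V) + l + (V + 5) by omega, pow_add _ _ (V + 5)] at h6
            have hp5 : (0 : ℝ) < 2 ^ (V + 5) := by positivity
            have : (2 : ℝ) ^ (k + (p + V) + l) * |c x - c w| ≤ 1 := by
              by_contra hcon
              push Not at hcon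
              nlinarith
            linarith
        · exact (h0.fX (k + l)).fin.subset (image_subset_range _ _)
      have := D1_small h0 hl hBm hpos hcard c1
      nlinarith
  have fm1 := h0.D1_fm (P := P) l p k
  have fm2 := h0.D2_fm (P := P) V p k
  have fc1 := cE_fm (P := P) hBf (chi Bad)
  have fc2 := cE_fm (P := P) hBf (chi (NM yr G (k + p)))
  have hIntg := integral_mono_ae (fm1.mul fm2).integrable
    ((((integrable_const K).add (fc1.cmul (2 / κ2)).integrable)).add
      (fc2.cmul (2 / κ5)).integrable) hpt
  refine hIntg.trans ?_
  have e1 : ∫ ω, (K + 2 / κ2 * cE P B (chi Bad) ω + 2 / κ5 * cE P B (chi (NM yr G (k + p))) ω) ∂P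
      = K + 2 / κ2 * P.real Bad + 2 / κ5 * P.real (NM yr G (k + p)) := by
    have i12 : Integrable (fun ω => K + 2 / κ2 * cE P B (chi Bad) ω) P :=
      (integrable_const K).add (fc1.cmul (2 / κ2)).integrable
    rw [integral_add i12
      (fc2.cmul (2 / κ5)).integrable, integral_add (integrable_const K)
      (fc1.cmul (2 / κ2)).integrable, integral_const_mul, integral_const_mul,
      integral_cE_one hBf (chi_fm hBm), integral_cE_one hBf (chi_fm hNm), integral_chi hBm,
      integral_chi hNm]
    simp
  refine (le_of_eq e1).trans ?_
  have := mul_le_mul_of_nonneg_left hBle (by positivity : 0 ≤ 2 / κ2)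
  linarith

/-- Averaged form of `pair_local`. -/
theorem pair_lam {X : ℕ → Ω → τ} {yr c : Ω → ℝ} (hyr : Measurable yr) (hcm : Measurable c)
    (hU : (U : Filter ℕ) ≤ atTop)
    (h0 : IsSys X (fl yr)) (h1 : IsSys X (fl (fun ω => yr ω + c ω)))
    {r q t V l G : ℕ} (hl : 0 < l) (hG : 0 < G) (ht : 32 * G ≤ 2 ^ t) (htV : t + 1 ≤ V)
    (hr : V + l + 6 ≤ r) (hP : IsPair X yr c (r + q + t + V))
    {ζ ζ0 κ2 κ3 κ5 : ℝ} (hζ : 0 < ζ) (hκ2 : 0 < κ2) (hκ3 : 0 < κ3) (hκ5 : 0 < κ5)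
    (hsm : (2 * (2 ^ (V + (V + l + 5)) * ζ) + 2 * (2 ^ (V + (V + l + 5) + t) * ζ) / κ3)
      * 2 ^ (2 * V + l + 2) ≤ 1)
    (hg0 : gq U P X (fl yr) (V + (V + l + 5)) (q + t)
      - gq U P X (fl yr) (V + (V + l + 5)) (r + q + t) ≤ ζ0)
    (hg1 : gq U P X (fl (fun ω => yr ω + c ω)) (V + (V + l + 5) + t) q
      - gq U P X (fl (fun ω => yr ω + c ω)) (V + (V + l + 5) + t) (r + q) ≤ ζ0)
    (hN0 : ∀ u, P.real (NM yr G u) ≤ 1 / G)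
    (hN1 : ∀ u, P.real (NM (fun ω => yr ω + c ω) G u) ≤ 1 / G) :
    lam U (fun k => ∫ ω, D1 P X (fl yr) l (r + q + t) k ω * D2 P X (fl yr) V (r + q + t) k ω ∂P)
      ≤ 12 / l + 3 * κ2 + 2 * (κ5 + (t + 1) / V)
        + (2 / κ2) * (2 * ζ0 / ζ ^ 2 + κ3 * (2 ^ (t + 1) + 3) + 1 / G) + (2 / κ5) * (1 / G) := by
  set A0 := fun k => ∫ ω, dv P X (fl yr) (V + (V + l + 5)) k (k + r) (k + (r + q + t)) ω ∂P with hA0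
  set A1 := fun k => ∫ ω, dv P X (fl (fun ω => yr ω + c ω)) (V + (V + l + 5) + t) k (k + r)
    (k + (r + q)) ω ∂P with hA1
  set C := 12 / (l : ℝ) + 3 * κ2 + 2 * (κ5 + (t + 1) / V)
        + (2 / κ2) * (κ3 * (2 ^ (t + 1) + 3) + 1 / G) + (2 / κ5) * (1 / G) with hC
  have hζ2 : 0 < ζ ^ 2 := by positivity
  have hb : ∀ (Y : ℕ → Ω → ℤ) (h : IsSys X Y) (L k m j : ℕ), k ≤ m →
      0 ≤ (∫ ω, dv P X Y L k m j ω ∂P) ∧ (∫ ω, dv P X Y L k m j ω ∂P) ≤ 1 := by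
    intro Y h L k m j hkm
    refine ⟨integral_nonneg fun ω => dv_nonneg _ _ _ _ ω, ?_⟩
    rw [h.int_dv L hkm j]
    have := h.gL_le_one (P := P) L m j
    have := gL_nonneg (P := P) (X := X) (Y := Y) L k j
    linarith
  have bA0 : Bd A0 := Bd.of (c := 0) (d := 1) fun k => hb _ h0 _ _ _ _ (Nat.le_add_right _ _)
  have bA1 : Bd A1 := Bd.of (c := 0) (d := 1) fun k => hb _ h1 _ _ _ _ (Nat.le_add_right _ _)
  have e0 : lam U A0 ≤ ζ0 := by
    have := h0.lam_dv (P := P) hU (V + (V + l + 5)) (show q + t ≤ r + q + t by omega)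
    rw [show r + q + t - (q + t) = r by omega] at this
    rw [hA0, this]; exact hg0
  have e1 : lam U A1 ≤ ζ0 := by
    have := h1.lam_dv (P := P) hU (V + (V + l + 5) + t) (show q ≤ r + q by omega)
    rw [show r + q - q = r by omega] at this
    rw [hA1, this]; exact hg1
  have hpt : ∀ k, ∫ ω, D1 P X (fl yr) l (r + q + t) k ω * D2 P X (fl yr) V (r + q + t) k ω ∂P
      ≤ C + (2 / κ2 / ζ ^ 2) * A0 k + (2 / κ2 / ζ ^ 2) * A1 k := by
    intro k
    refine (pair_local hyr hcm h0 h1 k hl hG ht htV hr hP hζ hκ2 hκ3 hκ5 hsm).trans ?_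
    have i0 := mul_le_mul_of_nonneg_left (hN0 (k + (r + q + t))) (by positivity : 0 ≤ 2 / κ5)
    have i1 := mul_le_mul_of_nonneg_left (hN1 (k + (r + q))) (by positivity : 0 ≤ 2 / κ2)
    have j0 : 2 / κ2 * (A0 k / ζ ^ 2) = (2 / κ2 / ζ ^ 2) * A0 k := by ring
    have j1 : 2 / κ2 * (A1 k / ζ ^ 2) = (2 / κ2 / ζ ^ 2) * A1 k := by ring
    simp only [hA0, hA1] at j0 j1
    simp only [hA0, hA1, hC]
    linarith
  have bD : Bd (fun k => ∫ ω, D1 P X (fl yr) l (r + q + t) k ω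
      * D2 P X (fl yr) V (r + q + t) k ω ∂P) := by
    refine bd_int (c := 0) (d := 2)
      (fun k => (h0.D1_fm (P := P) l (r + q + t) k).mul (h0.D2_fm (P := P) V (r + q + t) k)) ?_
    intro k ω
    have d1 := h0.D1_nonneg (P := P) l (r + q + t) k ω
    have d1' := h0.D1_le (P := P) l (r + q + t) k ω
    have d2 := h0.D2_nonneg (P := P) V (r + q + t) k ω
    have d2' := h0.D2_le (P := P) V (r + q + t) k ω
    constructor
    · positivity
    · nlinarith
  refine (lam_mono bD (((Bd.const C).add (bA0.cmul _)).add (bA1.cmul _)) hpt).trans ?_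
  rw [lam_add ((Bd.const C).add (bA0.cmul _)) (bA1.cmul _), lam_add (Bd.const C) (bA0.cmul _),
    lam_cmul bA0, lam_cmul bA1, lam_const hU]
  have hpos : 0 ≤ 2 / κ2 / ζ ^ 2 := by positivity
  have i0 := mul_le_mul_of_nonneg_left e0 hpos
  have i1 := mul_le_mul_of_nonneg_left e1 hpos
  have : 2 / κ2 * (2 * ζ0 / ζ ^ 2) = 2 / κ2 / ζ ^ 2 * ζ0 + 2 / κ2 / ζ ^ 2 * ζ0 := by ring
  rw [hC]
  linarith

end UUED

/-! ### Projections of a randomly translated planar point -/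

namespace UUED

variable {Ω τ : Type*} [MeasurableSpace Ω]
variable {P : Measure Ω} [IsProbabilityMeasure P] {U : Ultrafilter ℕ}

/-- The generation-`k` dyadic cell of the planar point `(x, y)`, together with the label `γ`. -/
def Xc (x y : Ω → ℝ) (γ : Ω → ℕ) (k : ℕ) (ω : Ω) : ℤ × ℤ × ℕ := (fl x k ω, fl y k ω, γ ω)

/-- The projection of `(x, y)` in direction `θ`, translated by `γ / G`. -/
def yt (x y : Ω → ℝ) (γ : Ω → ℕ) (G : ℕ) (θ : ℝ) (ω : Ω) : ℝ :=
  x ω * Real.cos θ + y ω * Real.sin θ + γ ω / G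

theorem fl_fm {f : Ω → ℝ} (hf : Measurable f) {B : ℝ} (hB : ∀ ω, |f ω| ≤ B) (k : ℕ) :
    FM (fl f k) where
  fin := by
    refine (Set.finite_Icc (⌊-((2:ℝ) ^ k * B)⌋) (⌊(2:ℝ) ^ k * B⌋)).subset ?_
    rintro _ ⟨ω, rfl⟩
    have h := abs_le.1 (hB ω)
    have h2 : (0:ℝ) < 2 ^ k := by positivity
    constructor
    · exact Int.floor_le_floor (by nlinarith)
    · exact Int.floor_le_floor (by nlinarith)
  meas := by
    intro a
    have : Measurable (fl f k) := by
      unfold fl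
      exact Int.measurable_floor.comp (measurable_const.mul hf)
    exact this (measurableSet_singleton a)

theorem fl_dep (f : Ω → ℝ) (k : ℕ) : Dep (fl f k) (fl f (k + 1)) := by
  intro ω ω' h
  have h1 := fl_div f k 1 ω
  have h2 := fl_div f k 1 ω'
  rw [Finset.mem_Ico] at h1 h2
  rw [h] at h1
  omega

theorem fl_sub (f : Ω → ℝ) (k : ℕ) (ω : Ω) :
    fl f (k + 1) ω ∈ ({2 * fl f k ω, 2 * fl f k ω + 1} : Finset ℤ) := by
  have h1 := fl_div f k 1 ω
  rw [Finset.mem_Ico] at h1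
  simp only [Finset.mem_insert, Finset.mem_singleton]
  omega

theorem yt_meas {x y : Ω → ℝ} {γ : Ω → ℕ} (hx : Measurable x) (hy : Measurable y)
    (hγ : Measurable γ) (G : ℕ) (θ : ℝ) : Measurable (yt x y γ G θ) := by
  unfold yt
  have : Measurable (fun ω => (γ ω : ℝ)) := (measurable_from_nat (f := fun n : ℕ => (n : ℝ))).comp hγ
  fun_prop

theorem yt_bdd {x y : Ω → ℝ} {γ : Ω → ℕ} {B : ℝ} (hxB : ∀ ω, |x ω| ≤ B) (hyB : ∀ ω, |y ω| ≤ B)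
    {G : ℕ} (hγG : ∀ ω, γ ω < G) (θ : ℝ) (ω : Ω) : |yt x y γ G θ ω| ≤ B + B + 1 := by
  unfold yt
  have h1 : |x ω * Real.cos θ| ≤ B := by
    rw [abs_mul]
    calc _ ≤ |x ω| * 1 := by gcongr; exact Real.abs_cos_le_one θ
      _ ≤ B := by linarith [hxB ω]
  have h2 : |y ω * Real.sin θ| ≤ B := by
    rw [abs_mul]
    calc _ ≤ |y ω| * 1 := by gcongr; exact Real.abs_sin_le_one θ
      _ ≤ B := by linarith [hyB ω]
  have h3 : |(γ ω : ℝ) / G| ≤ 1 := by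
    rw [abs_of_nonneg (by positivity)]
    apply div_le_one_of_le₀ _ (by positivity)
    exact_mod_cast (hγG ω).le
  calc _ ≤ |x ω * Real.cos θ + y ω * Real.sin θ| + |(γ ω : ℝ) / G| := abs_add_le _ _
    _ ≤ |x ω * Real.cos θ| + |y ω * Real.sin θ| + |(γ ω : ℝ) / G| := by gcongr; exact abs_add_le _ _
    _ ≤ _ := by linarith

/-- The dyadic cells of the point and of its projection form a system of refining partitions. -/
theorem isSys_core {x y : Ω → ℝ} {γ : Ω → ℕ} (hx : Measurable x) (hy : Measurable y)
    (hγ : Measurable γ) {B : ℝ} (hxB : ∀ ω, |x ω| ≤ B) (hyB : ∀ ω, |y ω| ≤ B)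
    {G : ℕ} (hγG : ∀ ω, γ ω < G) (θ : ℝ) :
    IsSys (Xc x y γ) (fl (yt x y γ G θ)) where
  fX k := (fl_fm hx hxB k).pair ((fl_fm hy hyB k).pair
    ⟨(Set.finite_Iio G).subset (by rintro _ ⟨ω, rfl⟩; exact hγG ω),
      fun a => hγ (measurableSet_singleton a)⟩)
  fY k := fl_fm (yt_meas hx hy hγ G θ) (yt_bdd hxB hyB hγG θ) k
  dX k := by
    intro ω ω' h
    simp only [Xc, Prod.mk.injEq] at h ⊢
    exact ⟨fl_dep x k ω ω' h.1, fl_dep y k ω ω' h.2.1, h.2.2⟩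
  dY k := fl_dep _ k
  cX k t := by
    obtain ⟨a, b, g⟩ := t
    have : Xc x y γ (k + 1) '' (Xc x y γ k ⁻¹' {(a, b, g)})
        ⊆ ((({2 * a, 2 * a + 1} : Finset ℤ) ×ˢ ({2 * b, 2 * b + 1} : Finset ℤ) ×ˢ ({g} : Finset ℕ)
          : Finset (ℤ × ℤ × ℕ)) : Set (ℤ × ℤ × ℕ)) := by
      rintro _ ⟨ω, h, rfl⟩
      simp only [Xc, mem_preimage, mem_singleton_iff, Prod.mk.injEq] at h
      have h1 := fl_sub x k ω
      have h2 := fl_sub y k ω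
      rw [h.1] at h1
      rw [h.2.1] at h2
      rw [Finset.mem_coe, Finset.mem_product, Finset.mem_product]
      exact ⟨h1, h2, by simpa [Xc] using h.2.2⟩
    refine (Set.ncard_le_ncard this (Finset.finite_toSet _)).trans ?_
    rw [Set.ncard_coe_finset, Finset.card_product, Finset.card_product]
    have e1 := Finset.card_le_two (a := 2 * a) (b := 2 * a + 1)
    have e2 := Finset.card_le_two (a := 2 * b) (b := 2 * b + 1)
    rw [Finset.card_singleton]
    nlinarith
  cY k t := by
    have : fl (yt x y γ G θ) (k + 1) '' (fl (yt x y γ G θ) k ⁻¹' {t})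
        ⊆ (({2 * t, 2 * t + 1} : Finset ℤ) : Set ℤ) := by
      rintro _ ⟨ω, h, rfl⟩
      have h1 := fl_sub (yt x y γ G θ) k ω
      rw [mem_preimage, mem_singleton_iff] at h
      rw [h] at h1
      exact h1
    refine (Set.ncard_le_ncard this (Finset.finite_toSet _)).trans ?_
    rw [Set.ncard_coe_finset]
    exact Finset.card_le_two

theorem fl_near {f : Ω → ℝ} {k : ℕ} {ω ω' : Ω} (h : (2:ℝ) ^ k * |f ω' - f ω| ≤ 10) :
    fl f k ω' ∈ Finset.Icc (fl f k ω - 16) (fl f k ω + 16) := by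
  have h2 : (0:ℝ) < 2 ^ k := by positivity
  rw [← abs_of_pos h2, ← abs_mul, abs_le] at h
  unfold fl
  have a1 := Int.floor_le ((2:ℝ) ^ k * f ω)
  have a2 := Int.lt_floor_add_one ((2:ℝ) ^ k * f ω)
  have b1 := Int.floor_le ((2:ℝ) ^ k * f ω')
  have b2 := Int.lt_floor_add_one ((2:ℝ) ^ k * f ω')
  rw [Finset.mem_Icc]
  constructor
  · rw [← Int.cast_le (R := ℝ)]; push_cast; nlinarith
  · rw [← Int.cast_le (R := ℝ)]; push_cast; nlinarith

theorem abs_sin_ge {φ : ℝ} (h : |φ| ≤ 1) : |φ| / 2 ≤ |Real.sin φ| := by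
  have key : ∀ z : ℝ, 0 ≤ z → z ≤ 1 → z / 2 ≤ Real.sin z := by
    intro z h0 h1
    have := Real.mul_le_sin h0 (by linarith [Real.pi_gt_three])
    refine le_trans ?_ this
    have hp : (1:ℝ) / 2 ≤ 2 / Real.pi := by
      rw [div_le_div_iff₀ (by norm_num) Real.pi_pos]; linarith [Real.pi_le_four]
    nlinarith
  rcases le_total 0 φ with h0 | h0
  · rw [abs_of_nonneg h0] at h ⊢
    exact (key φ h0 h).trans (le_abs_self _)
  · rw [abs_of_nonpos h0] at h ⊢
    have := key (-φ) (by linarith) h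
    rw [Real.sin_neg] at this
    exact this.trans (neg_le_abs _)

theorem abs_sin_sub (a b : ℝ) : |Real.sin a - Real.sin b| ≤ |a - b| := by
  have := Real.lipschitzWith_sin.dist_le_mul a b
  simpa [Real.dist_eq] using this

theorem abs_cos_sub (a b : ℝ) : |Real.cos a - Real.cos b| ≤ |a - b| := by
  have := Real.lipschitzWith_cos.dist_le_mul a b
  simpa [Real.dist_eq] using this

/-- A linear combination estimate used for inverting the pair of projections. -/
theorem inv_bound {s K S C u Δ φ : ℝ} {N M : ℝ} (hN : 0 < N) (hM : 0 < M) (hφ0 : 0 < |φ|)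
    (hφ : |φ| / 2 ≤ |s|) (hMφ : 1 < 2 * (M * |φ|)) (hS : N * |S| ≤ 1) (hC : N * M * |C| ≤ 2)
    (hK : |K| ≤ |φ|) (hu : |u| ≤ 1) (he : s * Δ = S * K + C * u) : N * |Δ| ≤ 10 := by
  have h1 : |φ| / 2 * |Δ| ≤ |S| * |φ| + |C| := by
    calc |φ| / 2 * |Δ| ≤ |s| * |Δ| := by gcongr
      _ = |S * K + C * u| := by rw [← abs_mul, he]
      _ ≤ |S| * |K| + |C| * |u| := by rw [← abs_mul, ← abs_mul]; exact abs_add_le _ _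
      _ ≤ |S| * |φ| + |C| * 1 := by gcongr
      _ = _ := by ring
  -- multiply by `N`, and use `N|C| ≤ 2/M < 4|φ|`
  have h2 : N * |C| ≤ 4 * |φ| := by
    have : M * (N * |C|) ≤ M * (4 * |φ|) := by nlinarith
    exact le_of_mul_le_mul_left this hM
  have h3 : |φ| * (N * |Δ|) ≤ |φ| * 10 := by nlinarith
  exact le_of_mul_le_mul_left h3 hφ0

/-- Two projections in directions at distance about `2 ^ (-Q)` form a pair: the map from the point to
`(yt θ0, yt θ1 - yt θ0)` is linear with determinant of size about `2 ^ (-Q)`. -/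
theorem isPair_core (x y : Ω → ℝ) (γ : Ω → ℕ) (G : ℕ) {θ0 θ1 : ℝ} {Q : ℕ}
    (h1 : 2 ^ Q * |θ1 - θ0| ≤ 1) (h2 : 1 < 2 * (2 ^ Q * |θ1 - θ0|)) :
    IsPair (Xc x y γ) (yt x y γ G θ0) (fun ω => yt x y γ G θ1 ω - yt x y γ G θ0 ω) Q where
  cvar k ω ω' h := by
    simp only [Xc, Prod.mk.injEq] at h
    have hx := fl_close h.1
    have hy := fl_close h.2.1
    have h2k : (0:ℝ) < 2 ^ k := by positivity
    rw [← mul_sub, abs_mul, abs_of_pos h2k] at hx hy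
    have e : (yt x y γ G θ1 ω - yt x y γ G θ0 ω) - (yt x y γ G θ1 ω' - yt x y γ G θ0 ω')
        = (x ω - x ω') * (Real.cos θ1 - Real.cos θ0) + (y ω - y ω') * (Real.sin θ1 - Real.sin θ0) := by
      unfold yt; ring
    rw [e]
    have e2 : |(x ω - x ω') * (Real.cos θ1 - Real.cos θ0) + (y ω - y ω') * (Real.sin θ1 - Real.sin θ0)|
        ≤ (|x ω - x ω'| + |y ω - y ω'|) * |θ1 - θ0| := by
      refine (abs_add_le _ _).trans ?_
      rw [abs_mul, abs_mul, add_mul]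
      exact add_le_add (mul_le_mul_of_nonneg_left (abs_cos_sub _ _) (abs_nonneg _))
        (mul_le_mul_of_nonneg_left (abs_sin_sub _ _) (abs_nonneg _))
    calc (2:ℝ) ^ (k + Q) * _ ≤ 2 ^ (k + Q) * ((|x ω - x ω'| + |y ω - y ω'|) * |θ1 - θ0|) := by gcongr
      _ = (2 ^ k * |x ω - x ω'| + 2 ^ k * |y ω - y ω'|) * (2 ^ Q * |θ1 - θ0|) := by
        rw [pow_add]; ring
      _ ≤ (1 + 1) * 1 := by gcongr
      _ = 2 := by norm_num
  count k l ω := by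
    have hsub : Xc x y γ (k + l) '' {ω' | Xc x y γ k ω' = Xc x y γ k ω ∧
        (2 : ℝ) ^ (k + l) * |yt x y γ G θ0 ω' - yt x y γ G θ0 ω| ≤ 1 ∧
        (2 : ℝ) ^ (k + Q + l) * |(yt x y γ G θ1 ω' - yt x y γ G θ0 ω')
          - (yt x y γ G θ1 ω - yt x y γ G θ0 ω)| ≤ 2}
        ⊆ ((Finset.Icc (fl x (k + l) ω - 16) (fl x (k + l) ω + 16) ×ˢ
            Finset.Icc (fl y (k + l) ω - 16) (fl y (k + l) ω + 16) ×ˢ ({γ ω} : Finset ℕ) :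
            Finset (ℤ × ℤ × ℕ)) : Set (ℤ × ℤ × ℕ)) := by
      rintro _ ⟨ω', ⟨hX, hS, hC⟩, rfl⟩
      simp only [Xc, Prod.mk.injEq] at hX
      have hN : (0:ℝ) < 2 ^ (k + l) := by positivity
      have hM : (0:ℝ) < 2 ^ Q := by positivity
      have hφ0 : 0 < |θ1 - θ0| := by
        by_contra hc
        have : |θ1 - θ0| = 0 := le_antisymm (not_lt.1 hc) (abs_nonneg _)
        rw [this] at h2; norm_num at h2
      have hφ1 : |θ1 - θ0| ≤ 1 := by
        have : (1:ℝ) ≤ 2 ^ Q := one_le_pow₀ (by norm_num)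
        nlinarith
      have hs := abs_sin_ge hφ1
      have hC' : (2:ℝ) ^ (k + l) * 2 ^ Q * |(yt x y γ G θ1 ω' - yt x y γ G θ0 ω')
          - (yt x y γ G θ1 ω - yt x y γ G θ0 ω)| ≤ 2 := by
        rw [← pow_add]
        have : k + l + Q = k + Q + l := by omega
        rw [this]; exact hC
      have A : (2:ℝ) ^ (k + l) * |x ω' - x ω| ≤ 10 := by
        refine inv_bound (s := Real.sin (θ1 - θ0)) (K := Real.sin θ1 - Real.sin θ0)
          (u := - Real.sin θ0) hN hM hφ0 hs h2 hS hC' (abs_sin_sub _ _) ?_ ?_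
        · rw [abs_neg]; exact Real.abs_sin_le_one _
        · unfold yt
          rw [hX.2.2, Real.sin_sub]
          ring
      have B : (2:ℝ) ^ (k + l) * |y ω' - y ω| ≤ 10 := by
        refine inv_bound (s := Real.sin (θ1 - θ0)) (K := Real.cos θ0 - Real.cos θ1)
          (u := Real.cos θ0) hN hM hφ0 hs h2 hS hC' ?_ ?_ ?_
        · rw [abs_sub_comm θ1 θ0]; exact abs_cos_sub _ _
        · exact Real.abs_cos_le_one _
        · unfold yt
          rw [hX.2.2, Real.sin_sub]
          ring
      rw [Finset.mem_coe, Finset.mem_product, Finset.mem_product]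
      exact ⟨fl_near A, fl_near B, by simpa [Xc] using hX.2.2⟩
    refine (Set.ncard_le_ncard hsub (Finset.finite_toSet _)).trans ?_
    rw [Set.ncard_coe_finset, Finset.card_product, Finset.card_product]
    simp only [Int.card_Icc, Finset.card_singleton]
    have e : ∀ z : ℤ, (z + 16 + 1 - (z - 16)).toNat = 33 := by intro z; omega
    rw [e, e]; norm_num

theorem floor_ne_near {a b : ℝ} (h : ⌊a⌋ ≠ ⌊b⌋) : ∃ n : ℤ, |a - n| ≤ |a - b| := by
  rcases lt_or_gt_of_ne h with h | h
  · refine ⟨⌊b⌋, ?_⟩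
    have h1 := Int.floor_lt.1 h
    have h2 := Int.floor_le b
    rw [abs_of_neg (by linarith), abs_of_neg (by linarith)]
    linarith
  · refine ⟨⌊a⌋, ?_⟩
    have h1 := Int.floor_lt.1 h
    have h2 := Int.floor_le a
    rw [abs_of_nonneg (by linarith), abs_of_pos (by linarith)]
    linarith

/-- A small cell whose projection meets two dyadic intervals of generation `k` projects close to the
grid. -/
theorem strad_sub {x y : Ω → ℝ} {γ : Ω → ℕ} {G : ℕ} (hG : 0 < G) {l0 : ℕ}
    (hl0 : 4 * (G:ℝ) ≤ 2 ^ l0) (θ : ℝ) (k : ℕ) :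
    strad (Xc x y γ) (fl (yt x y γ G θ)) l0 k ⊆ NM (yt x y γ G θ) G k := by
  rintro ω ⟨ω', hX, hY⟩
  obtain ⟨n, hn⟩ := floor_ne_near (Ne.symm hY)
  refine ⟨n, hn.trans_lt ?_⟩
  simp only [Xc, Prod.mk.injEq] at hX
  have hx := fl_close hX.1
  have hy := fl_close hX.2.1
  have h2k : (0:ℝ) < 2 ^ k := by positivity
  have h2l : (0:ℝ) < 2 ^ l0 := by positivity
  rw [← mul_sub, abs_mul, abs_of_pos (by positivity), pow_add, mul_assoc] at hx hy
  rw [← mul_sub, abs_mul, abs_of_pos h2k, abs_sub_comm]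
  have e : yt x y γ G θ ω' - yt x y γ G θ ω
      = (x ω' - x ω) * Real.cos θ + (y ω' - y ω) * Real.sin θ := by
    unfold yt; rw [hX.2.2]; ring
  have e2 : |yt x y γ G θ ω' - yt x y γ G θ ω| ≤ |x ω' - x ω| + |y ω' - y ω| := by
    rw [e]
    refine (abs_add_le _ _).trans ?_
    rw [abs_mul, abs_mul]
    have := mul_le_mul_of_nonneg_left (Real.abs_cos_le_one θ) (abs_nonneg (x ω' - x ω))
    have := mul_le_mul_of_nonneg_left (Real.abs_sin_le_one θ) (abs_nonneg (y ω' - y ω))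
    linarith
  have hG' : (0:ℝ) < G := by exact_mod_cast hG
  rw [lt_div_iff₀ (by positivity)]
  have h3 : 2 ^ l0 * (2 ^ k * |yt x y γ G θ ω' - yt x y γ G θ ω|) < 2 := by
    have : 2 ^ l0 * (2 ^ k * |yt x y γ G θ ω' - yt x y γ G θ ω|)
      ≤ 2 ^ l0 * (2 ^ k * (|x ω' - x ω| + |y ω' - y ω|)) := by gcongr
    nlinarith
  have h4 : 0 ≤ 2 ^ k * |yt x y γ G θ ω' - yt x y γ G θ ω| := by positivity
  nlinarith

end UUED

/-! ### Separation and countability of exceptional directions -/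

namespace UUED

variable {Ω τ : Type*} [MeasurableSpace Ω]
variable {P : Measure Ω} [IsProbabilityMeasure P] {U : Ultrafilter ℕ}

theorem cesaro_mono {f : ℕ → ℝ} (hf : Monotone f) {b : ℝ} (hb : ∀ q, f q ≤ b) {η : ℝ} (hη : 0 < η) :
    ∃ L : ℕ, ∀ l, L ≤ l → ∀ q, f q - η ≤ (1 / (l:ℝ)) * ∑ i ∈ Finset.range l, f i := by
  have hbd : BddAbove (range f) := ⟨b, by rintro _ ⟨q, rfl⟩; exact hb q⟩
  have h1 := (tendsto_atTop_ciSup hf hbd).cesaro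
  have h2 : ∀ᶠ l : ℕ in atTop, (⨆ i, f i) - η < (l:ℝ)⁻¹ * ∑ i ∈ Finset.range l, f i :=
    h1.eventually (lt_mem_nhds (by linarith))
  obtain ⟨L, hL⟩ := eventually_atTop.1 h2
  refine ⟨L, fun l hl q => ?_⟩
  have := hL l hl
  rw [one_div]
  linarith [le_ciSup hbd q]

/-- The tolerance that makes the smallness condition of `pair_lam` an equality. -/
def zet (t V l : ℕ) (κ : ℝ) : ℝ :=
  1 / ((2 * 2 ^ (V + (V + l + 5)) + 2 * 2 ^ (V + (V + l + 5) + t) / κ) * 2 ^ (2 * V + l + 2))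

theorem zet_pos {t V l : ℕ} {κ : ℝ} (hκ : 0 < κ) : 0 < zet t V l κ := by
  unfold zet; positivity

theorem zet_spec {t V l : ℕ} {κ : ℝ} (hκ : 0 < κ) :
    (2 * (2 ^ (V + (V + l + 5)) * zet t V l κ) + 2 * (2 ^ (V + (V + l + 5) + t) * zet t V l κ) / κ)
      * 2 ^ (2 * V + l + 2) ≤ 1 := by
  have h : 0 < (2 * 2 ^ (V + (V + l + 5)) + 2 * 2 ^ (V + (V + l + 5) + t) / κ)
      * 2 ^ (2 * V + l + 2) := by positivity
  have e : (2 * (2 ^ (V + (V + l + 5)) * zet t V l κ)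
      + 2 * (2 ^ (V + (V + l + 5) + t) * zet t V l κ) / κ) * 2 ^ (2 * V + l + 2)
      = ((2 * 2 ^ (V + (V + l + 5)) + 2 * 2 ^ (V + (V + l + 5) + t) / κ) * 2 ^ (2 * V + l + 2))
        * zet t V l κ := by ring
  rw [e]
  unfold zet
  rw [mul_one_div_cancel h.ne']

/-- The direction is good at the scales `l`, `V`, `q`: conditionally on the first digits of the
point, projecting loses information and the projection is far from uniform on a substantial set
of positions, and beyond lag `q` conditioning on more digits hardly changes the law of the next
digits of the projection. -/
structure GoodAt (U : Ultrafilter ℕ) (P : Measure Ω) (X : ℕ → Ω → τ) (Y : ℕ → Ω → ℤ)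
    (e κ : ℝ) (t l V q : ℕ) : Prop where
  l0 : 0 < l
  l1 : 12 / (l:ℝ) ≤ e
  V1 : t + 1 ≤ V
  V2 : 2 * (((t:ℝ) + 1) / V) ≤ e
  low : ∀ p, l ≤ p → 18 * e ≤ lam U (fun k => ∫ ω, D1 P X Y l p k ω * D2 P X Y V p k ω ∂P)
  gap0 : ∀ q1, q ≤ q1 → ∀ q2, q1 ≤ q2 → gq U P X Y (V + (V + l + 5)) q1
    - gq U P X Y (V + (V + l + 5)) q2 ≤ e ^ 2 * (zet t V l κ) ^ 2 / 2
  gap1 : ∀ q1, q ≤ q1 → ∀ q2, q1 ≤ q2 → gq U P X Y (V + (V + l + 5) + t) q1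
    - gq U P X Y (V + (V + l + 5) + t) q2 ≤ e ^ 2 * (zet t V l κ) ^ 2 / 2

theorem exists_large (c e : ℝ) (he : 0 < e) : ∃ N : ℕ, ∀ n : ℕ, N ≤ n → c / n ≤ e := by
  obtain ⟨N, hN⟩ := exists_nat_gt (|c| / e)
  refine ⟨N + 1, fun n hn => ?_⟩
  have h1 : (N:ℝ) + 1 ≤ n := by exact_mod_cast hn
  have h0 : (0:ℝ) < n := by
    have : (0:ℝ) ≤ N := by positivity
    linarith
  rw [div_le_iff₀ h0]
  rw [div_lt_iff₀ he] at hN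
  nlinarith [le_abs_self c]

/-- A system whose projection has entropy rate below that of `X` is good at some parameters. -/
theorem IsSys.exists_good {X : ℕ → Ω → τ} {Y : ℕ → Ω → ℤ} (h : IsSys X Y)
    (hU : (U : Filter ℕ) ≤ atTop) {a b δ g κ : ℝ} (ha : 0 ≤ a) (ha1 : a ≤ 1) (hδ : 0 < δ)
    (hab : b + δ ≤ a) (hg : g ≤ δ / 6) {l0 : ℕ} (hl0 : 0 < l0) (hκ : 0 < κ)
    (hst : ∀ k, P.real (strad X Y l0 k) ≤ g)
    (hbad : lam U (fun k => P.real (badX P X l0 a k)) ≤ δ / 6)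
    (hb : ∀ᶠ n : ℕ in atTop, - eL P X Y 0 n ≤ b * n) (t : ℕ) :
    ∃ l V q, GoodAt U P X Y (δ ^ 2 / 80) κ t l V q := by
  set e := δ ^ 2 / 80 with he
  have he0 : 0 < e := by positivity
  obtain ⟨L, hL⟩ := cesaro_mono (f := fq U P X Y) (fun _ _ hq => h.fq_mono hU hq)
    (h.fq_le hU hb) (η := e / 6) (by positivity)
  obtain ⟨N1, hN1⟩ := exists_large 12 e he0
  obtain ⟨N2, hN2⟩ := exists_large 1 (δ / 6) (by positivity)
  set m := L + N1 + N2 + 1 with hm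
  have hml : m ≤ m * l0 := Nat.le_mul_of_pos_right m hl0
  have hl : 0 < m * l0 := by omega
  set l := m * l0 with hldef
  have M := h.mean_deficit hU hl0 (m := m) (by omega) ha ha1 hst hbad hb
  have hm6 := hN2 m (by omega)
  have hlow : δ / 2 ≤ lam U (fun k => ∫ ω, Mv P X Y l k ω ∂P) := by
    rw [hldef]; linarith
  obtain ⟨N3, hN3⟩ := exists_large (2 * ((t:ℝ) + 1)) e he0
  obtain ⟨N4, hN4⟩ := exists_large (2 * (l:ℝ)) e he0
  obtain ⟨V, hV1, hV0, hVp⟩ := exists_stable_window (P := P) hU (M := Mv P X Y l) (fun k => h.Mv_fm l k)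
    (fun k => h.Mv_nonneg l k) (fun k => h.Mv_le_one l k) (η := (e / 6) ^ 2) (by positivity)
    (N3 + N4 + t + 1)
  have hz := zet_pos (t := t) (V := V) (l := l) hκ
  obtain ⟨q0, hq0⟩ := h.exists_gap (P := P) hU (V + (V + l + 5))
    (ζ := e ^ 2 * (zet t V l κ) ^ 2 / 2) (by positivity)
  obtain ⟨q1, hq1⟩ := h.exists_gap (P := P) hU (V + (V + l + 5) + t)
    (ζ := e ^ 2 * (zet t V l κ) ^ 2 / 2) (by positivity)
  refine ⟨l, V, q0 + q1, hl, hN1 l (by omega), by omega, ?_, ?_, fun q hq q' hqq' =>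
    hq0 q (by omega) q' hqq', fun q hq q' hqq' => hq1 q (by omega) q' hqq'⟩
  · have := hN3 V (by omega)
    rw [← mul_div_assoc]; exact this
  · intro p hp
    have M6' := h.D1_mul_D2_lower (P := P) hU hl hV0 hp (η := e / 6) (by positivity) (hL l (by omega)) hVp
    have h4 := hN4 V (by omega)
    have hsq : (δ / 2) ^ 2 ≤ (lam U (fun k => ∫ ω, Mv P X Y l k ω ∂P)) ^ 2 := by gcongr
    have : (δ / 2) ^ 2 = 20 * e := by rw [he]; ring
    linarith

/-- Distinct directions that are good at the same parameters are uniformly separated. -/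
theorem good_pair {x y : Ω → ℝ} {γ : Ω → ℕ} (hx : Measurable x) (hy : Measurable y)
    (hγ : Measurable γ) {B : ℝ} (hxB : ∀ ω, |x ω| ≤ B) (hyB : ∀ ω, |y ω| ≤ B)
    {G : ℕ} (hγG : ∀ ω, γ ω < G) (hG : 0 < G) (hU : (U : Filter ℕ) ≤ atTop)
    {e κ : ℝ} (he : 0 < e) (hκ : 0 < κ) {t : ℕ} (ht : 32 * G ≤ 2 ^ t) (hGe : 1 / (G:ℝ) ≤ e ^ 2)
    (hκe : κ * (2 ^ (t + 1) + 3) ≤ e ^ 2)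
    (hN : ∀ θ u, P.real (NM (yt x y γ G θ) G u) ≤ 1 / G) {l V q : ℕ} {θ0 θ1 : ℝ}
    (h0 : GoodAt U P (Xc x y γ) (fl (yt x y γ G θ0)) e κ t l V q)
    (h1 : GoodAt U P (Xc x y γ) (fl (yt x y γ G θ1)) e κ t l V q) (hne : θ0 ≠ θ1) :
    1 ≤ 2 ^ ((V + l + 6) + q + t + V) * |θ1 - θ0| := by
  by_contra hlt
  push Not at hlt
  have hφ : 0 < |θ1 - θ0| := abs_pos.2 (sub_ne_zero.2 hne.symm)
  have h2Q : ∀ n : ℕ, (0:ℝ) < 2 ^ n := fun n => by positivity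
  have hφ1 : 1 ≤ 1 / |θ1 - θ0| := by
    rw [le_div_iff₀ hφ]
    have : (1:ℝ) ≤ 2 ^ ((V + l + 6) + q + t + V) := one_le_pow₀ (by norm_num)
    nlinarith
  obtain ⟨Q, hQ1, hQ2⟩ := exists_nat_pow_near hφ1 (by norm_num : (1:ℝ) < 2)
  rw [le_div_iff₀ hφ] at hQ1
  rw [div_lt_iff₀ hφ, pow_succ] at hQ2
  have hQ : (V + l + 6) + q + t + V ≤ Q := by
    by_contra hc
    push Not at hc
    have : (2:ℝ) ^ (Q + 1) ≤ 2 ^ ((V + l + 6) + q + t + V) :=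
      pow_le_pow_right₀ (by norm_num) hc
    rw [pow_succ] at this
    nlinarith
  obtain ⟨r, hr⟩ : ∃ r, Q = r + q + t + V := ⟨Q - (q + t + V), by omega⟩
  have hP := isPair_core x y γ G hQ1 (by linarith)
  rw [hr] at hP
  have hyeq : (fun ω => yt x y γ G θ0 ω + (yt x y γ G θ1 ω - yt x y γ G θ0 ω)) = yt x y γ G θ1 := by
    funext ω; ring
  have hz := zet_pos (t := t) (V := V) (l := l) hκ
  have s0 := isSys_core hx hy hγ hxB hyB hγG θ0
  have s1 := isSys_core hx hy hγ hxB hyB hγG θ1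
  have m0 := yt_meas hx hy hγ G θ0
  have m1 := yt_meas hx hy hγ G θ1
  have key := pair_lam (P := P) (yr := yt x y γ G θ0)
    (c := fun ω => yt x y γ G θ1 ω - yt x y γ G θ0 ω) m0 (m1.sub m0) hU s0
    (by rw [hyeq]; exact s1) (r := r) (q := q) (t := t) (V := V) (l := l) h0.l0 hG ht h0.V1
    (by omega) hP (ζ := zet t V l κ) (ζ0 := e ^ 2 * (zet t V l κ) ^ 2 / 2)
    (κ2 := e) (κ3 := κ) (κ5 := e) hz he hκ he (zet_spec hκ)
    (h0.gap0 (q + t) (by omega) _ (by omega))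
    (by rw [hyeq]; exact h1.gap1 q le_rfl _ (by omega)) (hN θ0) (by rw [hyeq]; exact hN θ1)
  have low := h0.low (r + q + t) (by omega)
  have e1 : 2 * (e ^ 2 * (zet t V l κ) ^ 2 / 2) / (zet t V l κ) ^ 2 = e ^ 2 := by
    field_simp
  rw [e1] at key
  have e2 : (2 / e) * (e ^ 2 + κ * (2 ^ (t + 1) + 3) + 1 / G) ≤ 6 * e := by
    calc (2 / e) * (e ^ 2 + κ * (2 ^ (t + 1) + 3) + 1 / G) ≤ (2 / e) * (e ^ 2 + e ^ 2 + e ^ 2) := by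
          gcongr
      _ = 6 * e := by field_simp; ring
  have e3 : (2 / e) * (1 / G) ≤ 2 * e := by
    calc (2 / e) * (1 / (G:ℝ)) ≤ (2 / e) * e ^ 2 := by gcongr
      _ = 2 * e := by field_simp
  have l1 := h0.l1
  have V2 := h0.V2
  have e4 : 2 * (e + ((t:ℝ) + 1) / V) = 2 * e + 2 * (((t:ℝ) + 1) / V) := by ring
  rw [e4] at key
  linarith

theorem countable_sep {S : Set ℝ} {K : ℝ} (hK : 0 < K)
    (h : ∀ a ∈ S, ∀ b ∈ S, a ≠ b → 1 ≤ K * |b - a|) : S.Countable := by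
  have : InjOn (fun a : ℝ => ⌊K * a⌋) S := by
    intro a ha b hb hab
    by_contra hne
    have := Int.abs_sub_lt_one_of_floor_eq_floor hab
    rw [← mul_sub, abs_mul, abs_of_pos hK, abs_sub_comm] at this
    linarith [h a ha b hb hne]
  exact MapsTo.countable_of_injOn (t := univ) (fun _ _ => mem_univ _) this (to_countable _)

/-- Only countably many directions have a projection whose entropy rate is smaller than `a` by a
fixed amount. -/
theorem core {x y : Ω → ℝ} {γ : Ω → ℕ} (hx : Measurable x) (hy : Measurable y)
    (hγ : Measurable γ) {B : ℝ} (hxB : ∀ ω, |x ω| ≤ B) (hyB : ∀ ω, |y ω| ≤ B)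
    {G : ℕ} (hγG : ∀ ω, γ ω < G) (hG : 0 < G) (hU : (U : Filter ℕ) ≤ atTop)
    {a b δ : ℝ} (ha : 0 ≤ a) (ha1 : a ≤ 1) (hδ : 0 < δ) (hδ1 : δ ≤ 1) (hab : b + δ ≤ a)
    (hGe : 1 / (G:ℝ) ≤ (δ ^ 2 / 80) ^ 2) {l0 : ℕ} (hl0 : 0 < l0) (hl0G : 4 * (G:ℝ) ≤ 2 ^ l0)
    (hbad : lam U (fun k => P.real (badX P (Xc x y γ) l0 a k)) ≤ δ / 6)
    (hN : ∀ θ u, P.real (NM (yt x y γ G θ) G u) ≤ 1 / G) {Θ : Set ℝ}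
    (hΘ : ∀ θ ∈ Θ, ∀ᶠ n : ℕ in atTop, - eL P (Xc x y γ) (fl (yt x y γ G θ)) 0 n ≤ b * n) :
    Θ.Countable := by
  obtain ⟨t, ht⟩ : ∃ t, 32 * G ≤ 2 ^ t := ⟨32 * G, Nat.lt_two_pow_self.le⟩
  set e := δ ^ 2 / 80 with he
  have he0 : 0 < e := by positivity
  set κ : ℝ := e ^ 2 / (2 ^ (t + 1) + 3) with hκ
  have hκ0 : 0 < κ := by positivity
  have hsub : Θ ⊆ ⋃ v : ℕ × ℕ × ℕ,
      {θ | GoodAt U P (Xc x y γ) (fl (yt x y γ G θ)) e κ t v.1 v.2.1 v.2.2} := by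
    intro θ hθ
    have hg : 1 / (G:ℝ) ≤ δ / 6 := by
      refine hGe.trans ?_
      rw [he]
      have : δ ^ 4 ≤ δ := by
        calc δ ^ 4 ≤ δ ^ 1 := pow_le_pow_of_le_one hδ.le hδ1 (by norm_num)
          _ = δ := pow_one δ
      nlinarith
    obtain ⟨l, V, q, hgood⟩ := (isSys_core hx hy hγ hxB hyB hγG θ).exists_good (P := P) hU ha ha1 hδ
      hab hg hl0 hκ0 (fun k => (measureReal_mono (strad_sub hG hl0G θ k)).trans (hN θ k)) hbad
      (hΘ θ hθ) t
    exact mem_iUnion.2 ⟨(l, V, q), hgood⟩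
  refine (countable_iUnion fun v => ?_).mono hsub
  refine countable_sep (K := 2 ^ ((v.2.1 + v.1 + 6) + v.2.2 + t + v.2.1)) (by positivity) ?_
  intro θ0 h0 θ1 h1 hne
  refine good_pair hx hy hγ hxB hyB hγG hG hU he0 hκ0 ht hGe ?_ hN h0 h1 hne
  rw [hκ, div_mul_cancel₀ _ (by positivity)]

end UUED

/-! ### Covering numbers and packing dimension -/

namespace UUED

/-- `K` is covered by at most `2 ^ (n β)` intervals of radius `2 ^ (-n)`. -/
def CovBy (K : Set ℝ) (β : ℝ) (n : ℕ) : Prop :=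
  ∃ T : Finset ℝ, (T.card : ℝ) ≤ (2:ℝ) ^ ((n:ℝ) * β) ∧ ∀ z ∈ K, ∃ p ∈ T, (2:ℝ) ^ n * |z - p| ≤ 1

theorem two_rpow_neg (n : ℕ) : (2:ℝ) ^ (-(n:ℝ)) = 1 / 2 ^ n := by
  rw [Real.rpow_neg (by norm_num), Real.rpow_natCast, one_div]

theorem coverNumber_le {F : Set ℝ} {R : ℕ} (hF : F ⊆ Icc (-(R:ℝ)) R) (n : ℕ) :
    coverNumber F ((2:ℝ) ^ (-(n:ℝ))) ≤ (((2 * R + 1) * 2 ^ n : ℕ) : ℝ≥0∞) := by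
  set S : Finset (Set ℝ) := (Finset.Icc (-((R:ℤ) * 2 ^ n)) (R * 2 ^ n)).image
    (fun i : ℤ => Icc ((i:ℝ) / 2 ^ n) ((i + 1) / 2 ^ n)) with hS
  have h2 : (0:ℝ) < 2 ^ n := by positivity
  have hc : S.card ≤ (2 * R + 1) * 2 ^ n := by
    refine Finset.card_image_le.trans ?_
    rw [Int.card_Icc]
    have : (1:ℕ) ≤ 2 ^ n := Nat.one_le_two_pow
    have h0 : (0:ℤ) ≤ R * 2 ^ n := by positivity
    zify
    rw [Int.toNat_of_nonneg (by linarith)]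
    zify at this
    nlinarith
  refine le_trans ?_ (Nat.cast_le.2 hc)
  refine iInf_le_of_le S (iInf_le_of_le ?_ (iInf_le_of_le ?_ le_rfl))
  · intro z hz
    have hz' := hF hz
    simp only [mem_iUnion, exists_prop]
    refine ⟨Icc ((⌊2 ^ n * z⌋ : ℝ) / 2 ^ n) ((⌊2 ^ n * z⌋ + 1) / 2 ^ n), ?_, ?_, ?_⟩
    · rw [hS, Finset.mem_image]
      refine ⟨⌊2 ^ n * z⌋, ?_, rfl⟩
      rw [Finset.mem_Icc]
      constructor
      · rw [Int.le_floor]; push_cast; nlinarith [hz'.1]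
      · rw [← Int.cast_le (R := ℝ)]; push_cast
        exact (Int.floor_le _).trans (by nlinarith [hz'.2])
    · rw [div_le_iff₀ h2, mul_comm]; exact Int.floor_le _
    · rw [le_div_iff₀ h2, mul_comm]; exact (Int.lt_floor_add_one _).le
  · intro s hs
    rw [hS, Finset.mem_image] at hs
    obtain ⟨i, _, rfl⟩ := hs
    rw [two_rpow_neg]
    have := Real.ediam_Icc ((i:ℝ) / 2 ^ n) ((i + 1) / 2 ^ n)
    refine this.le.trans (ENNReal.ofReal_le_ofReal ?_)
    rw [← sub_div]; ring_nf; exact le_rfl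

theorem logb_cover_nonneg (F : Set ℝ) (r : ℝ) (hF : coverNumber F r ≠ ⊤) :
    0 ≤ Real.logb 2 (coverNumber F r).toReal := by
  rcases eq_or_ne (coverNumber F r) 0 with h | h
  · simp [h]
  apply Real.logb_nonneg (by norm_num)
  have h1 : 1 ≤ coverNumber F r := by
    by_contra hc
    push Not at hc
    apply h
    unfold coverNumber at hc
    simp only [iInf_lt_iff] at hc
    obtain ⟨S, h1, h2, h3⟩ := hc
    have : S.card = 0 := by
      have : S.card < 1 := by exact_mod_cast h3
      omega
    refine le_antisymm ?_ zero_le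
    exact iInf_le_of_le S (iInf_le_of_le h1 (iInf_le_of_le h2 (by simp [this])))
  rw [← ENNReal.toReal_one]
  exact ENNReal.toReal_mono hF h1

theorem logb_cover_le {F : Set ℝ} {R : ℕ} (hF : F ⊆ Icc (-(R:ℝ)) R) (n : ℕ) :
    Real.logb 2 (coverNumber F ((2:ℝ) ^ (-(n:ℝ)))).toReal ≤ Real.logb 2 (2 * R + 1) + n := by
  have h := coverNumber_le hF n
  have hR : (0:ℝ) ≤ R := by positivity
  have h2 : (1:ℝ) ≤ (2 * R + 1) * 2 ^ n := by
    have : (1:ℝ) ≤ 2 ^ n := one_le_pow₀ (by norm_num)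
    nlinarith
  have e : Real.logb 2 (2 * R + 1) + n = Real.logb 2 ((2 * R + 1) * 2 ^ n) := by
    rw [Real.logb_mul (by positivity) (by positivity), Real.logb_pow]
    simp
  rw [e]
  have h3 := ENNReal.toReal_mono (ENNReal.natCast_ne_top _) h
  rw [ENNReal.toReal_natCast] at h3
  push_cast at h3
  rcases eq_or_lt_of_le (ENNReal.toReal_nonneg (a := coverNumber F ((2:ℝ) ^ (-(n:ℝ))))) with h0 | h0
  · rw [← h0, Real.logb_zero]; exact Real.logb_nonneg (by norm_num) h2
  · exact Real.logb_le_logb_of_le (by norm_num) h0 h3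

theorem cover_seq_bdd {F : Set ℝ} {R : ℕ} (hF : F ⊆ Icc (-(R:ℝ)) R) (n : ℕ) :
    0 ≤ Real.logb 2 (coverNumber F ((2:ℝ) ^ (-(n:ℝ)))).toReal / n ∧
    Real.logb 2 (coverNumber F ((2:ℝ) ^ (-(n:ℝ)))).toReal / n ≤ Real.logb 2 (2 * R + 1) / n + 1 := by
  have hfin := ne_top_of_le_ne_top (ENNReal.natCast_ne_top _) (coverNumber_le hF n)
  refine ⟨div_nonneg (logb_cover_nonneg F _ hfin) (Nat.cast_nonneg n), ?_⟩
  rcases Nat.eq_zero_or_pos n with h | h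
  · simp [h]
  · have hn : (0:ℝ) < n := by exact_mod_cast h
    rw [div_le_iff₀ hn, add_mul, div_mul_cancel₀ _ hn.ne', one_mul]
    exact logb_cover_le hF n

theorem upperBoxDim_le_two {F : Set ℝ} {R : ℕ} (hF : F ⊆ Icc (-(R:ℝ)) R) :
    upperBoxDim F ≤ 2 := by
  refine limsup_le_of_le ?_ ?_
  · exact IsCoboundedUnder.of_frequently_ge
      (a := 0) (Eventually.of_forall fun n => (cover_seq_bdd hF n).1).frequently
  · obtain ⟨N, hN⟩ := exists_large (Real.logb 2 (2 * R + 1)) 1 one_pos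
    filter_upwards [eventually_ge_atTop N] with n hn
    linarith [(cover_seq_bdd hF n).2, hN n hn]

theorem bdd_sub {F : Set ℝ} (hF : Bornology.IsBounded F) : ∃ R : ℕ, F ⊆ Icc (-(R:ℝ)) R := by
  obtain ⟨r, hr⟩ := hF.subset_closedBall 0
  obtain ⟨R, hR⟩ := exists_nat_ge r
  refine ⟨R, fun z hz => ?_⟩
  have := hr hz
  rw [Metric.mem_closedBall, Real.dist_eq, sub_zero, abs_le] at this
  exact ⟨by linarith, by linarith⟩

theorem packingDimMeas_nonneg (ν : Measure ℝ) : 0 ≤ packingDimMeas ν := by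
  apply Real.sInf_nonneg
  rintro _ ⟨A, _, _, rfl⟩
  apply Real.sInf_nonneg
  rintro s ⟨hs, _⟩
  exact hs

/-- A measure of packing dimension below `β` charges a closed set covered by at most `2 ^ (n β)`
intervals of radius `2⁻ⁿ` at all small scales. -/
theorem exists_cov {ν : Measure ℝ} [IsProbabilityMeasure ν] {β : ℝ} (h : packingDimMeas ν < β) :
    ∃ K : Set ℝ, IsClosed K ∧ 0 < ν K ∧ ∀ᶠ n : ℕ in atTop, CovBy K β n := by
  have hne0 : {s : ℝ | ∃ A : Set ℝ, MeasurableSet A ∧ 0 < ν A ∧ packingDimSet A = s}.Nonempty :=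
    ⟨_, univ, MeasurableSet.univ, by simp, rfl⟩
  obtain ⟨s, ⟨A, hA, hA0, rfl⟩, hs⟩ := exists_lt_of_csInf_lt hne0 h
  have hne : {s : ℝ | 0 ≤ s ∧ ∃ F : ℕ → Set ℝ, A ⊆ (⋃ k, F k) ∧
      ∀ k, Bornology.IsBounded (F k) ∧ upperBoxDim (F k) ≤ s}.Nonempty := by
    refine ⟨2, by norm_num, fun k => Icc (-(k:ℝ)) k, fun z _ => ?_, fun k => ⟨Metric.isBounded_Icc _ _, ?_⟩⟩
    · obtain ⟨k, hk⟩ := exists_nat_ge |z|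
      exact mem_iUnion.2 ⟨k, abs_le.1 hk⟩
    · exact upperBoxDim_le_two (Subset.refl _)
  obtain ⟨s, ⟨hs0, F, hAF, hF⟩, hsβ⟩ := exists_lt_of_csInf_lt hne hs
  obtain ⟨k, hk⟩ : ∃ k, ν (F k) ≠ 0 := by
    by_contra hc
    push Not at hc
    exact hA0.ne' (measure_mono_null hAF (measure_iUnion_null hc))
  refine ⟨closure (F k), isClosed_closure, (pos_iff_ne_zero.2 hk).trans_le (measure_mono subset_closure), ?_⟩
  obtain ⟨R, hR⟩ := bdd_sub (hF k).1
  have hlim : limsup (fun n : ℕ =>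
    Real.logb 2 ((coverNumber (F k) ((2 : ℝ) ^ (-(n : ℝ)))).toReal) / (n : ℝ)) atTop < β :=
    (hF k).2.trans_lt hsβ
  have hb : IsBoundedUnder (· ≤ ·) atTop (fun n : ℕ =>
      Real.logb 2 ((coverNumber (F k) ((2 : ℝ) ^ (-(n : ℝ)))).toReal) / (n : ℝ)) := by
    obtain ⟨N, hN⟩ := exists_large (Real.logb 2 (2 * R + 1)) 1 one_pos
    refine isBoundedUnder_of_eventually_le (a := 2) ?_
    filter_upwards [eventually_ge_atTop N] with n hn
    linarith [(cover_seq_bdd hR n).2, hN n hn]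
  filter_upwards [eventually_lt_of_limsup_lt hlim hb, eventually_gt_atTop 0] with n hn hn0
  have hn0' : (0:ℝ) < n := by exact_mod_cast hn0
  rw [div_lt_iff₀ hn0', mul_comm] at hn
  have hfin := ne_top_of_le_ne_top (ENNReal.natCast_ne_top _) (coverNumber_le hR n)
  have hlt : coverNumber (F k) ((2 : ℝ) ^ (-(n : ℝ))) < ENNReal.ofReal ((2:ℝ) ^ ((n:ℝ) * β)) := by
    rw [ENNReal.lt_ofReal_iff_toReal_lt hfin]
    rcases eq_or_lt_of_le (ENNReal.toReal_nonneg
      (a := coverNumber (F k) ((2:ℝ) ^ (-(n:ℝ))))) with h0 | h0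
    · rw [← h0]; positivity
    · exact (Real.logb_lt_iff_lt_rpow (by norm_num) h0).1 hn
  unfold coverNumber at hlt
  simp only [iInf_lt_iff] at hlt
  obtain ⟨S, hS1, hS2, hS3⟩ := hlt
  have hS3' : (S.card : ℝ) ≤ (2:ℝ) ^ ((n:ℝ) * β) := by
    have := (ENNReal.lt_ofReal_iff_toReal_lt (ENNReal.natCast_ne_top _)).1 hS3
    rw [ENNReal.toReal_natCast] at this
    exact this.le
  set c : Set ℝ → ℝ := fun s => if h : s.Nonempty then h.some else 0 with hc
  refine ⟨S.image c, (Nat.cast_le.2 Finset.card_image_le).trans hS3', ?_⟩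
  have hcl : IsClosed (⋃ p ∈ S.image c, {z : ℝ | (2:ℝ) ^ n * |z - p| ≤ 1}) := by
    refine isClosed_biUnion_finset fun p _ => isClosed_le (by fun_prop) continuous_const
  have hsub : F k ⊆ ⋃ p ∈ S.image c, {z : ℝ | (2:ℝ) ^ n * |z - p| ≤ 1} := by
    intro z hz
    have := hS1 hz
    simp only [mem_iUnion, exists_prop] at this ⊢
    obtain ⟨s, hs, hzs⟩ := this
    refine ⟨c s, Finset.mem_image_of_mem c hs, ?_⟩
    have hne : s.Nonempty := ⟨z, hzs⟩
    have hcs : c s ∈ s := by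
      rw [hc]; simp only [dif_pos hne]; exact hne.some_mem
    have h1 : edist z (c s) ≤ ENNReal.ofReal ((2:ℝ) ^ (-(n:ℝ))) :=
      (Metric.edist_le_ediam_of_mem hzs hcs).trans (hS2 s hs)
    rw [edist_dist, ENNReal.ofReal_le_ofReal_iff (by positivity), Real.dist_eq, two_rpow_neg,
      le_div_iff₀ (by positivity), mul_comm] at h1
    exact h1
  intro z hz
  have := closure_minimal hsub hcl hz
  simpa only [mem_iUnion, exists_prop, mem_ofPred_eq] using this

end UUED

/-! ### Entropy of a concentrated projection -/

namespace UUED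

variable {Ω τ : Type*} [MeasurableSpace Ω]
variable {P : Measure Ω} [IsProbabilityMeasure P] {X : ℕ → Ω → τ} {Y : ℕ → Ω → ℤ}

/-- Entropy of a projection that lives, up to probability `ε`, on few cells. -/
theorem IsSys.eL_bound (h : IsSys X Y) {β ε C : ℝ} (hβ : 0 ≤ β) (hε : 0 < ε) (hC : 1 ≤ C)
    (T M : ℕ → Finset ℤ)
    (hT : ∀ᶠ n : ℕ in atTop, ((T n).card : ℝ) ≤ C * 2 ^ ((n:ℝ) * β))
    (hP : ∀ᶠ n : ℕ in atTop, P.real {ω | Y n ω ∉ T n} ≤ ε)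
    (hM : ∀ n ω, Y n ω ∈ M n) (hMc : ∀ n : ℕ, ((M n).card : ℝ) ≤ C * 2 ^ n) :
    ∀ᶠ n : ℕ in atTop, - eL P X Y 0 n ≤ (β + 2 * ε) * n := by
  set H0 : ℝ := - ∫ ω, lgA P (X 0) ω ∂P with hH0
  obtain ⟨n0, hn0⟩ := exists_large (H0 + 1 + Real.logb 2 C) ε hε
  filter_upwards [hT, hP, eventually_ge_atTop (n0 + 1)] with n hTn hPn hn
  have hnpos : (0:ℝ) < n := by exact_mod_cast (by omega : 0 < n)
  set N1 : ℝ := C * 2 ^ ((n:ℝ) * β) with hN1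
  set N2 : ℝ := C * 2 ^ n with hN2
  have hN1p : 0 < N1 := by positivity
  have hN2p : 0 < N2 := by positivity
  set R : ℤ → τ → ℝ := fun a _ => (if a ∈ T n then 1 / (2 * N1) else 0)
    + (if a ∈ M n then 1 / (2 * N2) else 0) with hR
  have hR2 : ∀ ω, 1 / (2 * N2) ≤ R (Y n ω) (X 0 ω) := by
    intro ω
    simp only [hR, if_pos (hM n ω)]
    have : (0:ℝ) ≤ if Y n ω ∈ T n then 1 / (2 * N1) else 0 := by split_ifs <;> positivity
    linarith
  have hRp : ∀ ω, 0 < R (Y n ω) (X 0 ω) := fun ω => lt_of_lt_of_le (by positivity) (hR2 ω)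
  have key := gibbs (P := P) (h.fY n) (h.fX 0) (w := fun _ => 1) (fun _ => zero_le_one)
    (Dep.const 1 _) R (fun a b => by simp only [hR]; positivity) (ae_of_all _ hRp) ?_
  swap
  · intro b _
    simp only [hR, Finset.sum_add_distrib]
    have s1 : ∀ (S : Finset ℤ) (W : Finset ℤ) (c N : ℝ), 0 < N → (W.card : ℝ) ≤ N →
        ∑ a ∈ S, (if a ∈ W then 1 / (2 * N) else 0) ≤ 1 / 2 := by
      intro S W c N hN hW
      rw [← Finset.sum_filter, Finset.sum_const, nsmul_eq_mul]
      have h1 : ((S.filter (· ∈ W)).card : ℝ) ≤ N := by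
        refine le_trans ?_ hW
        exact_mod_cast Finset.card_le_card (fun a ha => (Finset.mem_filter.1 ha).2)
      rw [mul_one_div, div_le_div_iff₀ (by positivity) (by norm_num)]
      linarith
    linarith [s1 (h.fY n).fin.toFinset (T n) 0 N1 hN1p hTn,
      s1 (h.fY n).fin.toFinset (M n) 0 N2 hN2p (hMc n)]
  have hbad : MeasurableSet {ω | Y n ω ∉ T n} := (h.fY n).preimage {a | a ∉ T n}
  have hpt : ∀ ω, - Real.logb 2 (R (Y n ω) (X 0 ω))
      ≤ (1 + Real.logb 2 C + n * β) + n * chi {ω | Y n ω ∉ T n} ω := by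
    intro ω
    have lg : ∀ N : ℝ, 0 < N → 1 / (2 * N) ≤ R (Y n ω) (X 0 ω) →
        - Real.logb 2 (R (Y n ω) (X 0 ω)) ≤ 1 + Real.logb 2 N := by
      intro N hN hle
      have := Real.logb_le_logb_of_le (b := 2) (by norm_num) (by positivity) hle
      rw [one_div, Real.logb_inv, Real.logb_mul (by norm_num) hN.ne',
        Real.logb_self_eq_one (by norm_num)] at this
      linarith
    by_cases hω : Y n ω ∈ T n
    · have h1 : chi {ω | Y n ω ∉ T n} ω = 0 := by simp [chi, hω]
      rw [h1]
      have h2 := lg N1 hN1p (by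
        simp only [hR, if_pos hω, if_pos (hM n ω)]
        have : (0:ℝ) ≤ 1 / (2 * N2) := by positivity
        linarith)
      rw [hN1, Real.logb_mul (by positivity) (by positivity),
        Real.logb_rpow (by norm_num) (by norm_num)] at h2
      linarith
    · have h1 : chi {ω | Y n ω ∉ T n} ω = 1 := by simp [chi, hω]
      rw [h1]
      have h2 := lg N2 hN2p (hR2 ω)
      rw [hN2, Real.logb_mul (by positivity) (by positivity), Real.logb_pow,
        Real.logb_self_eq_one (by norm_num)] at h2
      have : 0 ≤ (n:ℝ) * β := by positivity
      linarith
  have hfR : FM (fun ω => - Real.logb 2 (R (Y n ω) (X 0 ω))) :=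
    ((h.fY n).comp2 (h.fX 0) (fun a b => - Real.logb 2 (R a b)))
  have hci : FM (chi (Ω := Ω) {ω | Y n ω ∉ T n}) := chi_fm hbad
  have hIntg : ∫ ω, (1:ℝ) * (- Real.logb 2 (R (Y n ω) (X 0 ω))) ∂P
      ≤ (1 + Real.logb 2 C + n * β) + n * ε := by
    simp only [one_mul]
    calc ∫ ω, (- Real.logb 2 (R (Y n ω) (X 0 ω))) ∂P
        ≤ ∫ ω, ((1 + Real.logb 2 C + n * β) + n * chi {ω | Y n ω ∉ T n} ω) ∂P :=
          integral_mono hfR.integrable ((FM.const _).add (hci.cmul _)).integrable hpt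
      _ = (1 + Real.logb 2 C + n * β) + n * P.real {ω | Y n ω ∉ T n} := by
          rw [integral_add (FM.const _).integrable (hci.cmul _).integrable, integral_const_mul,
            integral_chi hbad]
          simp
      _ ≤ _ := by gcongr
  have e1 : lgA P (fun x => (Y n x, X 0 x)) = Lg P X Y 0 n := by
    unfold Lg
    exact lgA_congr (fun a b hab => by simpa [Sv, and_comm] using hab)
      (fun a b hab => by simpa [Sv, and_comm] using hab)
  have e2 : ∫ ω, (1:ℝ) * (lgA P (X 0) ω - lgA P (fun x => (Y n x, X 0 x)) ω) ∂P
      = - H0 - eL P X Y 0 n := by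
    rw [e1]
    simp only [one_mul]
    rw [integral_sub (lgA_fm (h.fX 0)).integrable (h.fL 0 n).integrable, hH0, neg_neg]
    rfl
  rw [e2] at key
  have h4 := hn0 n (by omega)
  rw [div_le_iff₀ hnpos] at h4
  nlinarith

end UUED

/-! ### Planar dyadic cells -/

namespace UUED

/-- The planar dyadic cell of generation `k` with index `j`. -/
def cel (k : ℕ) (j : Fin 2 → ℤ) : Set (Fin 2 → ℝ) := {y | ∀ i, ⌊(2 : ℝ) ^ k * y i⌋ = j i}

/-- The index of the generation-`k` cell of a point. -/
def jx (k : ℕ) (x : Fin 2 → ℝ) : Fin 2 → ℤ := fun i => ⌊(2 : ℝ) ^ k * x i⌋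

theorem dcell_eq (k : ℕ) (x : Fin 2 → ℝ) : dcell k x = cel k (jx k x) := rfl

theorem mem_cel {k : ℕ} {j : Fin 2 → ℤ} {y : Fin 2 → ℝ} : y ∈ cel k j ↔ jx k y = j :=
  ⟨fun h => funext h, fun h i => congrFun h i⟩

theorem jx_meas (k : ℕ) : Measurable (jx k) := by
  refine measurable_pi_lambda _ fun i => ?_
  exact Int.measurable_floor.comp (measurable_const.mul (measurable_pi_apply i))

theorem cel_meas (k : ℕ) (j : Fin 2 → ℤ) : MeasurableSet (cel k j) := by
  have : cel k j = jx k ⁻¹' {j} := by ext y; exact mem_cel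
  rw [this]
  exact jx_meas k (measurableSet_singleton j)

theorem jx_succ {k : ℕ} {x y : Fin 2 → ℝ} (h : jx (k + 1) x = jx (k + 1) y) : jx k x = jx k y := by
  funext i
  exact fl_dep (fun z : Fin 2 → ℝ => z i) k x y (congrFun h i)

theorem jx_le {k k' : ℕ} (hk : k ≤ k') {x y : Fin 2 → ℝ} (h : jx k' x = jx k' y) :
    jx k x = jx k y := by
  induction hk with
  | refl => exact h
  | step _ ih => exact ih (jx_succ h)

theorem jx_close {k : ℕ} {x y : Fin 2 → ℝ} (h : jx k x = jx k y) : dist x y ≤ 1 / 2 ^ k := by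
  rw [dist_pi_le_iff (by positivity)]
  intro i
  have := fl_close (f := fun z : Fin 2 → ℝ => z i) (congrFun h i)
  rw [← mul_sub, abs_mul, abs_of_pos (by positivity)] at this
  rw [Real.dist_eq, le_div_iff₀ (by positivity), mul_comm]
  exact this.le

/-- A weak form of Lebesgue density for dyadic cells. -/
theorem exists_cell (μ : Measure (Fin 2 → ℝ)) [IsProbabilityMeasure μ] {E : Set (Fin 2 → ℝ)}
    (hE : MeasurableSet E) (hE0 : 0 < μ E) {ε : ℝ≥0∞} (hε : ε ≠ 0) :
    ∃ k j, 0 < μ (cel k j) ∧ μ (cel k j \ E) ≤ ε * μ (cel k j) := by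
  have hhalf : μ E / 2 ≠ 0 := (ENNReal.half_pos hE0.ne').ne'
  obtain ⟨O, hEO, hO, _, hOE⟩ := hE.exists_isOpen_sdiff_lt (μ := μ) (measure_ne_top μ E)
    (mul_ne_zero hε hhalf)
  set Ek : ℕ → Set (Fin 2 → ℝ) := fun k => {x ∈ E | cel k (jx k x) ⊆ O} with hEk
  have hmono : Monotone Ek := by
    refine monotone_nat_of_le_succ fun k x hx => ⟨hx.1, fun y hy => hx.2 ?_⟩
    rw [mem_cel] at hy ⊢
    exact jx_succ hy
  have hU : E ⊆ ⋃ k, Ek k := by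
    intro x hx
    obtain ⟨r, hr, hb⟩ := Metric.isOpen_iff.1 hO x (hEO hx)
    obtain ⟨k, hk⟩ := exists_pow_lt_of_lt_one hr (by norm_num : (1/2:ℝ) < 1)
    refine mem_iUnion.2 ⟨k, hx, fun y hy => hb ?_⟩
    rw [Metric.mem_ball]
    refine (jx_close (mem_cel.1 hy)).trans_lt ?_
    rw [one_div_pow] at hk
    exact hk
  have ht := tendsto_measure_iUnion_atTop (μ := μ) hmono
  have hlt : μ E / 2 < μ (⋃ k, Ek k) :=
    (ENNReal.half_lt_self hE0.ne' (measure_ne_top μ E)).trans_le (measure_mono hU)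
  obtain ⟨k, hk⟩ := (ht.eventually (lt_mem_nhds hlt)).exists
  by_contra hc
  push Not at hc
  have hall : ∀ j, ε * μ (cel k j) ≤ μ (cel k j \ E) := by
    intro j
    rcases eq_zero_or_pos (μ (cel k j)) with h0 | h0
    · rw [h0, mul_zero]; exact zero_le
    · exact (hc k j h0).le
  set J : Set (Fin 2 → ℤ) := {j | cel k j ⊆ O} with hJ
  have hdisj : Pairwise (Function.onFun Disjoint fun j : J => cel k j) := by
    intro a b hab
    refine Set.disjoint_left.2 fun y ha hb => hab (Subtype.ext ?_)
    rw [← mem_cel.1 ha, mem_cel.1 hb]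
  have h1 : ε * μ (Ek k) ≤ μ (O \ E) := by
    calc ε * μ (Ek k) ≤ ε * μ (⋃ j : J, cel k j) := by
          gcongr
          intro x hx
          exact mem_iUnion.2 ⟨⟨jx k x, hx.2⟩, mem_cel.2 rfl⟩
      _ = ∑' j : J, ε * μ (cel k j) := by
          rw [measure_iUnion hdisj (fun j => cel_meas k j), ENNReal.tsum_mul_left]
      _ ≤ ∑' j : J, μ (cel k j \ E) := ENNReal.tsum_le_tsum fun j => hall j
      _ = μ (⋃ j : J, (cel k j \ E)) := by
          rw [measure_iUnion (fun a b hab => (hdisj hab).mono sdiff_le sdiff_le)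
            (fun j => (cel_meas k j).diff hE)]
      _ ≤ μ (O \ E) := by
          apply measure_mono
          refine iUnion_subset fun j => sdiff_subset_sdiff_left j.2
  have h2 : ε * (μ E / 2) ≤ ε * μ (Ek k) := by gcongr; exact hk.le
  exact absurd (h2.trans h1) (not_le.2 hOE)

/-- Finite description of the conditional entropy of a finer variable on an atom. -/
theorem cE_lg_eq {Ω α β : Type*} [MeasurableSpace Ω] {P : Measure Ω} [IsProbabilityMeasure P]
    {A : Ω → α} {B : Ω → β} (hA : FM A) (hB : FM B) (h : Dep B A) {ω : Ω} (hω : 0 < pA P B ω) :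
    cE P B (fun x => lgA P B x - lgA P A x) ω
      = ∑ a ∈ hA.fin.toFinset, -((P.real (A ⁻¹' {a} ∩ B ⁻¹' {B ω}) / pA P B ω)
        * Real.logb 2 (P.real (A ⁻¹' {a} ∩ B ⁻¹' {B ω}) / pA P B ω)) := by
  have hf : FM (fun x => lgA P B x - lgA P A x) := (lgA_fm hB).sub (lgA_fm hA)
  have h1 : ∫ x in B ⁻¹' {B ω}, (lgA P B x - lgA P A x) ∂P
      = ∑ a ∈ hA.fin.toFinset, ∫ x in A ⁻¹' {a} ∩ B ⁻¹' {B ω}, (lgA P B x - lgA P A x) ∂P := by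
    rw [← integral_biUnion_finset]
    · congr 2
      ext x; simp
    · intro a _; exact (hA.meas a).inter (hB.meas _)
    · intro a _ b _ hab
      refine Set.disjoint_left.2 fun x hx hx' => hab ?_
      rw [← hx.1, hx'.1]
    · intro a _; exact hf.integrable.integrableOn
  unfold cE
  rw [h1, Finset.sum_div]
  refine Finset.sum_congr rfl fun a _ => ?_
  rcases Set.eq_empty_or_nonempty (A ⁻¹' {a} ∩ B ⁻¹' {B ω}) with he | ⟨x0, hx0, hx0'⟩
  · rw [he]; simp
  · have hsub : A ⁻¹' {a} ∩ B ⁻¹' {B ω} = A ⁻¹' {a} := by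
      refine inter_eq_left.2 fun x hx => ?_
      have : A x = A x0 := by rw [hx, hx0]
      exact (h x x0 this).trans hx0'
    have hc : ∀ x ∈ A ⁻¹' {a} ∩ B ⁻¹' {B ω}, lgA P B x - lgA P A x
        = Real.logb 2 (pA P B ω) - Real.logb 2 (P.real (A ⁻¹' {a})) := by
      intro x hx
      have e1 : A x = a := hx.1
      have e2 : B x = B ω := hx.2
      simp only [lgA, pA, e1, e2]
    rw [setIntegral_congr_fun ((hA.meas a).inter (hB.meas _)) hc, setIntegral_const, hsub,
      smul_eq_mul]
    rcases eq_or_lt_of_le (measureReal_nonneg (μ := P) (s := A ⁻¹' {a})) with h0 | h0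
    · rw [← h0]; simp
    · rw [Real.logb_div h0.ne' hω.ne']; ring

end UUED

/-! ### A random point of a cell with a random label -/

namespace UUED

/-- The law of a `μ|_D`-random point together with an independent uniform label in `{0,…,G-1}`. -/
def PP (μ : Measure (Fin 2 → ℝ)) (D : Set (Fin 2 → ℝ)) (G : ℕ) : Measure ((Fin 2 → ℝ) × Fin G) :=
  (ProbabilityTheory.cond μ D).prod ((G : ℝ≥0∞)⁻¹ • Measure.count)

/-- The `i`-th coordinate of the random point, clipped to `0` off `D` so as to be bounded. -/
def xc (D : Set (Fin 2 → ℝ)) {G : ℕ} (i : Fin 2) (ω : (Fin 2 → ℝ) × Fin G) : ℝ :=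
  D.indicator (fun p => p i) ω.1

/-- The random label. -/
def gc {G : ℕ} (ω : (Fin 2 → ℝ) × Fin G) : ℕ := ω.2

section
variable {μ : Measure (Fin 2 → ℝ)} [IsProbabilityMeasure μ] {D : Set (Fin 2 → ℝ)} {G : ℕ}

theorem unif_prob (hG : 0 < G) :
    IsProbabilityMeasure ((G : ℝ≥0∞)⁻¹ • (Measure.count : Measure (Fin G))) := by
  constructor
  rw [Measure.smul_apply, Measure.count_univ, smul_eq_mul]
  simp only [ENat.card_eq_coe_fintype_card, Fintype.card_fin]
  exact ENNReal.inv_mul_cancel (by simp; omega) (by simp)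

theorem PP_prob (hD : μ D ≠ 0) (hG : 0 < G) : IsProbabilityMeasure (PP μ D G) := by
  have := unif_prob hG
  have := ProbabilityTheory.cond_isProbabilityMeasure hD
  unfold PP; infer_instance

theorem PP_fst (hD : μ D ≠ 0) (hG : 0 < G) (A : Set (Fin 2 → ℝ)) :
    (PP μ D G).real (A ×ˢ univ) = (ProbabilityTheory.cond μ D).real A := by
  have := unif_prob hG
  have := ProbabilityTheory.cond_isProbabilityMeasure hD
  unfold PP
  rw [measureReal_prod_prod]; simp

theorem PP_prod (hD : μ D ≠ 0) (hG : 0 < G) (A : Set (Fin 2 → ℝ)) (g : Fin G) :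
    (PP μ D G).real (A ×ˢ {g}) = (ProbabilityTheory.cond μ D).real A / G := by
  have := unif_prob hG
  have := ProbabilityTheory.cond_isProbabilityMeasure hD
  unfold PP
  rw [measureReal_prod_prod, div_eq_mul_inv]
  congr 1
  simp [Measure.real]

theorem PP_ae (hD : μ D ≠ 0) (hG : 0 < G) (hDm : MeasurableSet D) :
    ∀ᵐ ω ∂(PP μ D G), ω.1 ∈ D := by
  have := unif_prob hG
  have := ProbabilityTheory.cond_isProbabilityMeasure hD
  have h : ∀ᵐ p ∂(ProbabilityTheory.cond μ D), p ∈ D := ProbabilityTheory.ae_cond_mem hDm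
  exact Measure.quasiMeasurePreserving_fst.ae h

theorem xc_of_mem {i : Fin 2} {ω : (Fin 2 → ℝ) × Fin G} (h : ω.1 ∈ D) : xc D i ω = ω.1 i :=
  indicator_of_mem h _

theorem xc_meas (hDm : MeasurableSet D) (i : Fin 2) :
    Measurable (xc D i : (Fin 2 → ℝ) × Fin G → ℝ) :=
  ((measurable_pi_apply i).indicator hDm).comp measurable_fst

theorem gc_meas : Measurable (gc : (Fin 2 → ℝ) × Fin G → ℕ) :=
  (measurable_from_top (f := fun g : Fin G => (g : ℕ))).comp measurable_snd

theorem gc_lt (ω : (Fin 2 → ℝ) × Fin G) : gc ω < G := ω.2.2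

theorem xc_bdd {k : ℕ} {j : Fin 2 → ℤ} : ∃ B : ℝ, 0 ≤ B ∧
    ∀ i, ∀ ω : (Fin 2 → ℝ) × Fin G, |xc (cel k j) i ω| ≤ B := by
  refine ⟨|(j 0 : ℝ)| + |(j 1 : ℝ)| + 1, by positivity, fun i ω => ?_⟩
  unfold xc
  by_cases h : ω.1 ∈ cel k j
  · rw [indicator_of_mem h]
    have hi : ⌊(2:ℝ) ^ k * ω.1 i⌋ = j i := h i
    have h1 : |(2:ℝ) ^ k * ω.1 i| ≤ |(j i : ℝ)| + 1 := by
      have a1 := Int.floor_le ((2:ℝ) ^ k * ω.1 i)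
      have a2 := Int.lt_floor_add_one ((2:ℝ) ^ k * ω.1 i)
      rw [hi] at a1 a2
      rw [abs_le]
      have := abs_le.1 (le_refl |(j i : ℝ)|)
      constructor <;> linarith [this.1, this.2]
    have h2 : |ω.1 i| ≤ |(2:ℝ) ^ k * ω.1 i| := by
      rw [abs_mul, abs_of_pos (by positivity : (0:ℝ) < 2 ^ k)]
      exact le_mul_of_one_le_left (abs_nonneg _) (one_le_pow₀ (by norm_num))
    have h3 : |(j i : ℝ)| ≤ |(j 0 : ℝ)| + |(j 1 : ℝ)| := by
      fin_cases i <;> simp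
    linarith
  · rw [indicator_of_notMem h, abs_zero]; positivity

/-- The system variable of the random point. -/
def Xp (D : Set (Fin 2 → ℝ)) (G : ℕ) (k : ℕ) (ω : (Fin 2 → ℝ) × Fin G) : ℤ × ℤ × ℕ :=
  Xc (xc D 0) (xc D 1) gc k ω

theorem Xp_eq {k : ℕ} {ω : (Fin 2 → ℝ) × Fin G} (h : ω.1 ∈ D) :
    Xp D G k ω = (jx k ω.1 0, jx k ω.1 1, (ω.2 : ℕ)) := by
  unfold Xp Xc fl
  rw [xc_of_mem h, xc_of_mem h]; rfl

theorem Xp_inter (hD : μ D ≠ 0) (hG : 0 < G) (hDm : MeasurableSet D) (k k' : ℕ) (j j' : Fin 2 → ℤ)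
    (g : Fin G) :
    (PP μ D G).real (Xp D G k ⁻¹' {(j 0, j 1, (g : ℕ))} ∩ Xp D G k' ⁻¹' {(j' 0, j' 1, (g : ℕ))})
      = (ProbabilityTheory.cond μ D).real (cel k j ∩ cel k' j') / G := by
  rw [← PP_prod hD hG]
  apply measureReal_congr
  filter_upwards [PP_ae hD hG hDm] with ω hω
  apply propext
  have e : ∀ (k : ℕ) (j : Fin 2 → ℤ), Xp D G k ω = (j 0, j 1, (g : ℕ)) ↔
      ω.1 ∈ cel k j ∧ ω.2 = g := by
    intro k j
    rw [Xp_eq hω, mem_cel, funext_iff, Fin.forall_fin_two]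
    simp only [Prod.mk.injEq, Fin.val_inj, and_assoc]
  change (Xp D G k ω = _ ∧ Xp D G k' ω = _) ↔ _
  rw [e, e]
  change _ ↔ (_ ∧ _) ∧ _
  simp only [mem_singleton_iff]
  tauto

theorem Xp_atom (hD : μ D ≠ 0) (hG : 0 < G) (hDm : MeasurableSet D) (k : ℕ) (j : Fin 2 → ℤ)
    (g : Fin G) :
    (PP μ D G).real (Xp D G k ⁻¹' {(j 0, j 1, (g : ℕ))})
      = (ProbabilityTheory.cond μ D).real (cel k j) / G := by
  have := Xp_inter hD hG hDm k k j j g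
  rwa [inter_self, inter_self] at this

theorem cond_cel (hDm : MeasurableSet D) {S : Set (Fin 2 → ℝ)} (h : S ⊆ D) :
    (ProbabilityTheory.cond μ D).real S = μ.real S / μ.real D := by
  rw [Measure.real, ProbabilityTheory.cond_apply hDm, inter_eq_right.2 h, ENNReal.toReal_mul,
    ENNReal.toReal_inv, div_eq_inv_mul]
  rfl

/-- Masses of dyadic cells under the rescaled component measure. -/
theorem component_cel (k l : ℕ) (p : Fin 2 → ℝ) (j : Fin 2 → ℤ) :
    (component μ k p (cel l j)).toReal
      = μ.real (cel (k + l) (fun i => j i + 2 ^ l * jx k p i) ∩ cel k (jx k p))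
        / μ.real (cel k (jx k p)) := by
  have hm : Measurable (dscale k p : (Fin 2 → ℝ) → Fin 2 → ℝ) := by
    unfold dscale
    refine measurable_pi_lambda _ fun i => ?_
    exact (measurable_const.mul (measurable_pi_apply i)).sub_const _
  have hpre : dscale k p ⁻¹' (cel l j) = cel (k + l) (fun i => j i + 2 ^ l * jx k p i) := by
    ext y
    refine forall_congr' fun i => ?_
    have e : (2:ℝ) ^ l * dscale k p y i = 2 ^ (k + l) * y i - ((2 ^ l * jx k p i : ℤ) : ℝ) := by
      unfold dscale jx; push_cast; ring
    rw [e, Int.floor_sub_intCast]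
    constructor <;> intro h <;> linarith
  unfold component
  rw [Measure.smul_apply, Measure.map_apply hm (cel_meas l j), hpre,
    Measure.restrict_apply (cel_meas _ _), smul_eq_mul, ENNReal.toReal_mul, ENNReal.toReal_inv,
    dcell_eq, div_eq_inv_mul]
  rfl

theorem cel_sub {k0 k : ℕ} (hk : k0 ≤ k) {j : Fin 2 → ℤ} {p : Fin 2 → ℝ} (hp : p ∈ cel k0 j) :
    cel k (jx k p) ⊆ cel k0 j := by
  intro y hy
  rw [mem_cel] at hy hp ⊢
  rw [← hp]; exact jx_le hk hy

theorem Xp_fm {k0 : ℕ} {j : Fin 2 → ℤ} (hG : 0 < G) (k : ℕ) : FM (Xp (cel k0 j) G k) := by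
  obtain ⟨B, _, hB⟩ := xc_bdd (G := G) (k := k0) (j := j)
  exact (isSys_core (xc_meas (cel_meas k0 j) 0) (xc_meas (cel_meas k0 j) 1) gc_meas (hB 0) (hB 1)
    gc_lt 0).fX k

theorem Xp_dep {k0 : ℕ} {j : Fin 2 → ℤ} (hG : 0 < G) (k l : ℕ) :
    Dep (Xp (cel k0 j) G k) (Xp (cel k0 j) G (k + l)) := by
  obtain ⟨B, _, hB⟩ := xc_bdd (G := G) (k := k0) (j := j)
  exact (isSys_core (xc_meas (cel_meas k0 j) 0) (xc_meas (cel_meas k0 j) 1) gc_meas (hB 0) (hB 1)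
    gc_lt 0).dXle (by omega)

/-- The conditional entropy of the system variable is the entropy of the component measure. -/
theorem cE_eq_entD {k0 : ℕ} {j0 : Fin 2 → ℤ} (hD : μ (cel k0 j0) ≠ 0) (hG : 0 < G) {k : ℕ}
    (hk : k0 ≤ k) (l : ℕ) {ω : (Fin 2 → ℝ) × Fin G} (hω : ω.1 ∈ cel k0 j0)
    (hpos : 0 < pA (PP μ (cel k0 j0) G) (Xp (cel k0 j0) G k) ω) :
    cE (PP μ (cel k0 j0) G) (Xp (cel k0 j0) G k)
      (fun x => lgA (PP μ (cel k0 j0) G) (Xp (cel k0 j0) G k) x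
        - lgA (PP μ (cel k0 j0) G) (Xp (cel k0 j0) G (k + l)) x) ω
      = entD (component μ k ω.1) l := by
  have := PP_prob hD hG
  set D := cel k0 j0 with hDdef
  have hDm : MeasurableSet D := cel_meas k0 j0
  set P := PP μ D G with hP
  rw [cE_lg_eq (Xp_fm hG _) (Xp_fm hG _) (Xp_dep hG k l) hpos]
  set q : ℤ × ℤ × ℕ → ℝ := fun t =>
    P.real (Xp D G (k + l) ⁻¹' {t} ∩ Xp D G k ⁻¹' {Xp D G k ω}) / pA P (Xp D G k) ω with hq
  have hq0 : ∀ t, Xp D G (k + l) ⁻¹' {t} ∩ Xp D G k ⁻¹' {Xp D G k ω} = ∅ → q t = 0 := by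
    intro t ht
    simp only [hq, ht, measureReal_empty, zero_div]
  have h1 : ∑ t ∈ (Xp_fm (G := G) (k0 := k0) (j := j0) hG (k + l)).fin.toFinset,
      -(q t * Real.logb 2 (q t)) = ∑' t, -(q t * Real.logb 2 (q t)) := by
    rw [tsum_eq_sum]
    intro t ht
    rw [hq0, zero_mul, neg_zero]
    refine Set.eq_empty_of_forall_notMem fun x hx => ht ?_
    rw [Set.Finite.mem_toFinset]
    exact ⟨x, hx.1⟩
  refine h1.trans ?_
  set e : (Fin 2 → ℤ) → ℤ × ℤ × ℕ := fun j =>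
    (j 0 + 2 ^ l * jx k ω.1 0, j 1 + 2 ^ l * jx k ω.1 1, (ω.2 : ℕ)) with he
  have hinj : Function.Injective e := by
    intro a b hab
    simp only [he, Prod.mk.injEq, add_left_inj, and_true] at hab
    funext i
    fin_cases i
    exacts [hab.1, hab.2]
  have hsupp : Function.support (fun t => -(q t * Real.logb 2 (q t))) ⊆ range e := by
    intro t ht
    obtain ⟨x, hx⟩ : (Xp D G (k + l) ⁻¹' {t} ∩ Xp D G k ⁻¹' {Xp D G k ω}).Nonempty := by
      by_contra hc
      rw [Set.not_nonempty_iff_eq_empty] at hc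
      exact ht (by simp [hq0 t hc])
    have e1 : Xp D G (k + l) x = t := hx.1
    have e2 : Xp D G k x = Xp D G k ω := hx.2
    have e3 : gc x = gc ω := congrArg (fun z => z.2.2) e2
    refine ⟨![t.1 - 2 ^ l * jx k ω.1 0, t.2.1 - 2 ^ l * jx k ω.1 1], ?_⟩
    have e4 : t.2.2 = gc x := by rw [← e1]; rfl
    simp only [he, Matrix.cons_val_zero, Matrix.cons_val_one, sub_add_cancel]
    ext
    · rfl
    · rfl
    · change gc ω = t.2.2
      rw [e4, e3]
  rw [← hinj.tsum_eq hsupp]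
  unfold entD
  refine tsum_congr fun j => ?_
  have hqj : q (e j) = (component μ k ω.1 (cel l j)).toReal := by
    rw [component_cel]
    simp only [hq]
    unfold pA
    rw [Xp_eq hω]
    rw [Xp_atom hD hG hDm k (jx k ω.1) ω.2]
    have := Xp_inter hD hG hDm (k + l) k (fun i => j i + 2 ^ l * jx k ω.1 i) (jx k ω.1) ω.2
    rw [hP]
    refine (congrArg (· / _) this).trans ?_
    rw [cond_cel hDm (cel_sub hk hω), cond_cel hDm (inter_subset_right.trans (cel_sub hk hω))]
    have a1 : (G:ℝ) ≠ 0 := by positivity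
    have a2 : μ.real D ≠ 0 := by
      rw [Measure.real, Ne, ENNReal.toReal_eq_zero_iff]
      simp [hD, measure_ne_top]
    by_cases hz : μ.real (cel k (jx k ω.1)) = 0
    · rw [hz]; simp
    · field_simp
  rw [hqj]; rfl

end
end UUED

/-! ### Grid avoidance and projection entropy -/

namespace UUED

section
variable {μ : Measure (Fin 2 → ℝ)} [IsProbabilityMeasure μ] {D : Set (Fin 2 → ℝ)} {G : ℕ}

/-- For odd `G`, the random translation by `g/G` puts the projection near the grid `2^{-u}ℤ` with
probability at most `1/G`: multiplication by `2^u` permutes the residues modulo `G`. -/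
theorem NM_le (hD : μ D ≠ 0) (hDm : MeasurableSet D) (hG : Odd G) (θ : ℝ) (u : ℕ) :
    (PP μ D G).real (NM (yt (xc D 0) (xc D 1) gc G θ) G u) ≤ 1 / G := by
  have hG0 : 0 < G := hG.pos
  have hGr : (0:ℝ) < G := by exact_mod_cast hG0
  have := unif_prob hG0
  have := ProbabilityTheory.cond_isProbabilityMeasure hD
  have hm : MeasurableSet (NM (yt (xc (G := G) D 0) (xc D 1) gc G θ) G u) :=
    NM_meas (yt_meas (xc_meas hDm 0) (xc_meas hDm 1) gc_meas G θ) G u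
  have hsl : ∀ p : Fin 2 → ℝ, ((G : ℝ≥0∞)⁻¹ • (Measure.count : Measure (Fin G)))
      (Prod.mk p ⁻¹' NM (yt (xc D 0) (xc D 1) gc G θ) G u) ≤ (G : ℝ≥0∞)⁻¹ := by
    intro p
    rw [Measure.smul_apply, smul_eq_mul]
    have hs : (Prod.mk p ⁻¹' NM (yt (xc (G := G) D 0) (xc D 1) gc G θ) G u).Subsingleton := by
      rintro g ⟨n, hn⟩ g' ⟨n', hn'⟩
      simp only [yt] at hn hn'
      set z := xc D 0 (p, g) * Real.cos θ + xc D 1 (p, g) * Real.sin θ with hz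
      change |(2:ℝ) ^ u * (z + (g : ℕ) / G) - n| < _ at hn
      change |2 ^ u * (z + (g' : ℕ) / G) - n'| < _ at hn'
      have h1 : |(2:ℝ) ^ u * (z + (g : ℕ) / G) - n - (2 ^ u * (z + (g' : ℕ) / G) - n')| < 1 / G := by
        refine (abs_sub _ _).trans_lt ?_
        have e : (1:ℝ) / G = 1 / (2 * G) + 1 / (2 * G) := by field_simp; norm_num
        rw [e]; linarith
      have h2 : |((2 ^ u * ((g : ℕ) - (g' : ℕ) : ℤ) - G * (n - n') : ℤ) : ℝ)| < 1 := by
        have e : ((2 ^ u * ((g : ℕ) - (g' : ℕ) : ℤ) - G * (n - n') : ℤ) : ℝ)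
            = G * ((2:ℝ) ^ u * (z + (g : ℕ) / G) - n - (2 ^ u * (z + (g' : ℕ) / G) - n')) := by
          push_cast; field_simp; ring
        rw [e, abs_mul, abs_of_pos hGr]
        rw [lt_div_iff₀ hGr] at h1
        linarith
      rw [← Int.cast_abs, ← Int.cast_one, Int.cast_lt, Int.abs_lt_one_iff] at h2
      have hdvd : (G : ℤ) ∣ 2 ^ u * ((g : ℕ) - (g' : ℕ) : ℤ) := ⟨n - n', by linarith⟩
      have hcop : IsCoprime (G : ℤ) (2 ^ u) := by
        have : Nat.Coprime G (2 ^ u) := Nat.Coprime.pow_right u hG.coprime_two_right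
        exact_mod_cast this.isCoprime
      have hd2 := hcop.dvd_of_dvd_mul_left hdvd
      have hlt : |((g : ℕ) - (g' : ℕ) : ℤ)| < G := by
        rw [abs_lt]
        have a := g.2
        have b := g'.2
        constructor <;> omega
      have h0 := Int.eq_zero_of_abs_lt_dvd hd2 hlt
      exact Fin.ext (by omega)
    have hc : (Measure.count : Measure (Fin G))
        (Prod.mk p ⁻¹' NM (yt (xc D 0) (xc D 1) gc G θ) G u) ≤ 1 := by
      rw [Measure.count_apply (Set.toFinite _).measurableSet]
      exact_mod_cast Set.encard_le_one_iff_subsingleton.2 hs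
    calc _ ≤ (G : ℝ≥0∞)⁻¹ * 1 := by gcongr
      _ = _ := mul_one _
  have h : PP μ D G (NM (yt (xc D 0) (xc D 1) gc G θ) G u) ≤ (G : ℝ≥0∞)⁻¹ := by
    unfold PP
    rw [Measure.prod_apply hm]
    calc _ ≤ ∫⁻ p, (G : ℝ≥0∞)⁻¹ ∂(ProbabilityTheory.cond μ D) := lintegral_mono hsl
      _ = _ := by simp
  have := ENNReal.toReal_mono (by simp; omega) h
  simpa [Measure.real] using this

theorem floor_near {a b : ℝ} (h : |a - b| ≤ 1) : ∃ i ∈ Finset.Icc (-1:ℤ) 1, ⌊b⌋ + i = ⌊a⌋ := by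
  rw [abs_le] at h
  refine ⟨⌊a⌋ - ⌊b⌋, ?_, by ring⟩
  have h1 : ⌊a⌋ ≤ ⌊b + 1⌋ := Int.floor_le_floor (by linarith)
  have h2 : ⌊b⌋ ≤ ⌊a + 1⌋ := Int.floor_le_floor (by linarith)
  rw [Int.floor_add_one] at h1 h2
  rw [Finset.mem_Icc]; omega

/-- If most of the mass of `D` projects to a set of small covering numbers, then the entropies of
the projection grow slowly. -/
theorem eL_of_cov {k0 : ℕ} {j0 : Fin 2 → ℤ} (hD : μ (cel k0 j0) ≠ 0) (hG : 0 < G) {θ β ε : ℝ}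
    (hβ : 0 ≤ β) (hε : 0 < ε) {K : Set ℝ} (hK : MeasurableSet K)
    (hcov : ∀ᶠ n : ℕ in atTop, CovBy K β n)
    (hKD : μ.real (cel k0 j0 \ projDir θ ⁻¹' K) ≤ ε * μ.real (cel k0 j0)) :
    ∀ᶠ n : ℕ in atTop, - eL (PP μ (cel k0 j0) G) (Xc (xc (cel k0 j0) 0) (xc (cel k0 j0) 1) gc)
      (fl (yt (xc (cel k0 j0) 0) (xc (cel k0 j0) 1) gc G θ)) 0 n ≤ (β + 2 * ε) * n := by
  have := PP_prob hD hG
  obtain ⟨B, hB0, hB⟩ := xc_bdd (G := G) (k := k0) (j := j0)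
  set D := cel k0 j0 with hDdef
  have hDm : MeasurableSet D := cel_meas k0 j0
  have hsys := isSys_core (G := G) (xc_meas hDm 0) (xc_meas hDm 1) gc_meas (hB 0) (hB 1) gc_lt θ
  set R : ℝ := B + B + 1 with hR
  choose T0 hT0 using fun n : {n : ℕ // CovBy K β n} => n.2
  set T : ℕ → Finset ℤ := fun n => if h : CovBy K β n then
    (T0 ⟨n, h⟩ ×ˢ Finset.range G ×ˢ Finset.Icc (-1:ℤ) 1).image
      (fun t => ⌊(2:ℝ) ^ n * (t.1 + (t.2.1 : ℝ) / G)⌋ + t.2.2) else ∅ with hT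
  set M : ℕ → Finset ℤ := fun n => Finset.Icc ⌊-((2:ℝ) ^ n * R)⌋ ⌊(2:ℝ) ^ n * R⌋ with hM
  refine hsys.eL_bound (C := 3 * G + 2 * R + 2) hβ hε (by rw [hR]; nlinarith [(Nat.cast_nonneg G : (0:ℝ) ≤ G)])
    T M ?_ ?_ ?_ ?_
  · filter_upwards [hcov] with n hn
    simp only [hT, dif_pos hn]
    have h1 : (((T0 ⟨n, hn⟩ ×ˢ Finset.range G ×ˢ Finset.Icc (-1:ℤ) 1).image
      (fun t => ⌊(2:ℝ) ^ n * (t.1 + (t.2.1 : ℝ) / G)⌋ + t.2.2)).card : ℝ)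
        ≤ (T0 ⟨n, hn⟩).card * (G * 3) := by
      have := Finset.card_image_le (s := T0 ⟨n, hn⟩ ×ˢ Finset.range G ×ˢ Finset.Icc (-1:ℤ) 1)
        (f := fun t => ⌊(2:ℝ) ^ n * (t.1 + (t.2.1 : ℝ) / G)⌋ + t.2.2)
      rw [Finset.card_product, Finset.card_product, Finset.card_range] at this
      exact_mod_cast this
    have h2 := (hT0 ⟨n, hn⟩).1
    have h3 : (0:ℝ) ≤ 2 ^ ((n:ℝ) * β) := by positivity
    have h4 : (0:ℝ) ≤ G := Nat.cast_nonneg G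
    have h5 : 0 ≤ R := by rw [hR]; linarith
    calc _ ≤ _ := h1
      _ ≤ 2 ^ ((n:ℝ) * β) * (G * 3) := by gcongr
      _ ≤ _ := by nlinarith
  · filter_upwards [hcov] with n hn
    have hsub : (PP μ D G).real {ω | fl (yt (xc D 0) (xc D 1) gc G θ) n ω ∉ T n}
        ≤ (PP μ D G).real ((projDir θ ⁻¹' K)ᶜ ×ˢ univ) := by
      refine ENNReal.toReal_mono (measure_ne_top _ _) (measure_mono_ae ?_)
      filter_upwards [PP_ae hD hG hDm] with ω hω hbad
      refine ⟨fun hin => hbad ?_, mem_univ _⟩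
      simp only [hT, dif_pos hn]
      obtain ⟨p, hp, hpz⟩ := (hT0 ⟨n, hn⟩).2 _ hin
      have hy : yt (xc D 0) (xc D 1) gc G θ ω = projDir θ ω.1 + (gc ω : ℝ) / G := by
        unfold yt projDir
        rw [xc_of_mem hω, xc_of_mem hω]
      obtain ⟨i, hi, hfl⟩ := floor_near
        (a := (2:ℝ) ^ n * (projDir θ ω.1 + (gc ω : ℝ) / G)) (b := (2:ℝ) ^ n * (p + (gc ω : ℝ) / G)) (by
          rw [← mul_sub, add_sub_add_right_eq_sub, abs_mul, abs_of_pos (by positivity)]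
          exact hpz)
      rw [Finset.mem_image]
      refine ⟨(p, gc ω, i), ?_, ?_⟩
      · rw [Finset.mem_product, Finset.mem_product, Finset.mem_range]
        exact ⟨hp, gc_lt ω, hi⟩
      · unfold fl; rw [hy]; exact hfl
    refine hsub.trans ?_
    rw [PP_fst hD hG, Measure.real, ProbabilityTheory.cond_apply hDm, ENNReal.toReal_mul,
      ENNReal.toReal_inv, ← sdiff_eq]
    have hpos : 0 < μ.real D := by
      rw [measureReal_def]; exact ENNReal.toReal_pos hD (measure_ne_top _ _)
    change (μ.real D)⁻¹ * μ.real _ ≤ ε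
    rw [inv_mul_le_iff₀ hpos]
    linarith
  · intro n ω
    have h := abs_le.1 (yt_bdd (hB 0) (hB 1) gc_lt θ ω)
    have h2 : (0:ℝ) < 2 ^ n := by positivity
    simp only [hM, Finset.mem_Icc, fl]
    constructor
    · exact Int.floor_le_floor (by nlinarith)
    · exact Int.floor_le_floor (by nlinarith)
  · intro n
    have h2 : (1:ℝ) ≤ 2 ^ n := one_le_pow₀ (by norm_num)
    have hR0 : 0 ≤ R := by rw [hR]; linarith
    have e1 := Int.floor_le ((2:ℝ) ^ n * R)
    have e2 := Int.lt_floor_add_one (-((2:ℝ) ^ n * R))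
    have e3 : ⌊-((2:ℝ) ^ n * R)⌋ ≤ ⌊(2:ℝ) ^ n * R⌋ := Int.floor_le_floor (by nlinarith)
    simp only [hM, Int.card_Icc]
    have e4 : (((⌊(2:ℝ) ^ n * R⌋ + 1 - ⌊-((2:ℝ) ^ n * R)⌋).toNat : ℤ) : ℝ)
        = ⌊(2:ℝ) ^ n * R⌋ + 1 - ⌊-((2:ℝ) ^ n * R)⌋ := by
      rw [Int.toNat_of_nonneg (by omega)]; push_cast; ring
    rw [Int.cast_natCast] at e4
    rw [e4]
    nlinarith [(Nat.cast_nonneg G : (0:ℝ) ≤ G)]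

end
end UUED

/-! ### From upper uniform entropy dimension to countability -/

namespace UUED

section
variable {μ : Measure (Fin 2 → ℝ)} [IsProbabilityMeasure μ] {G : ℕ} {U : Ultrafilter ℕ}

theorem component_congr {k : ℕ} {p p' : Fin 2 → ℝ} (h : jx k p = jx k p') :
    component μ k p = component μ k p' := by
  have e : dscale k p = dscale k p' := by
    funext y i
    have := congrFun h i
    unfold jx at this
    unfold dscale
    rw [this]
  unfold component
  rw [dcell_eq, dcell_eq, h, e]

theorem meas_of_jx {k : ℕ} {S : Set (Fin 2 → ℝ)}
    (h : ∀ p p', jx k p = jx k p' → p ∈ S → p' ∈ S) : MeasurableSet S := by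
  have e : S = jx k ⁻¹' (jx k '' S) := by
    refine (subset_preimage_image _ _).antisymm ?_
    rintro p' ⟨p, hp, hpp⟩
    exact h p p' hpp hp
  rw [e]
  exact jx_meas k (Set.to_countable _).measurableSet

/-- The points whose generation-`k` component has normalized entropy far from `a`. -/
def bad (μ : Measure (Fin 2 → ℝ)) (a ε : ℝ) (l k : ℕ) : Set (Fin 2 → ℝ) :=
  {p | ¬ |entD (component μ k p) l - (l : ℝ) * a| ≤ (l : ℝ) * ε}

theorem bad_meas (a ε : ℝ) (l k : ℕ) : MeasurableSet (bad μ a ε l k) := by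
  refine meas_of_jx (k := k) fun p p' h hp => ?_
  unfold bad at hp ⊢
  rw [mem_ofPred_eq] at hp ⊢
  rwa [← component_congr h]

theorem good_meas (a ε : ℝ) (l n : ℕ) : MeasurableSet (uuedGood μ a ε l n) := by
  refine meas_of_jx (k := n) fun p p' h hp => ?_
  unfold uuedGood at hp ⊢
  rw [mem_ofPred_eq] at hp ⊢
  refine hp.trans (le_of_eq ?_)
  congr 2
  refine Finset.filter_congr fun k hk => ?_
  rw [component_congr (jx_le (Finset.mem_Icc.1 hk).2 h)]

/-- Averaging over the scales (Markov/Fubini). -/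
theorem sum_bad_le (a : ℝ) {ε τ : ℝ} {l n : ℕ} (hε : 0 ≤ ε)
    (h : 1 - τ ≤ μ.real (uuedGood μ a ε l n)) :
    ∑ k ∈ Finset.Icc 1 n, μ.real (bad μ a ε l k) ≤ n * (ε + τ) := by
  have hpt : ∀ p, ∑ k ∈ Finset.Icc 1 n, (bad μ a ε l k).indicator (fun _ => (1:ℝ)) p
      ≤ n * ε + n * (uuedGood μ a ε l n)ᶜ.indicator (fun _ => (1:ℝ)) p := by
    intro p
    have e : ∑ k ∈ Finset.Icc 1 n, (bad μ a ε l k).indicator (fun _ => (1:ℝ)) p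
        = (((Finset.Icc 1 n).filter fun k =>
            ¬ |entD (component μ k p) l - (l : ℝ) * a| ≤ (l : ℝ) * ε).card : ℝ) := by
      rw [← Finset.sum_boole]
      refine Finset.sum_congr rfl fun k _ => ?_
      rw [indicator_apply]; exact if_congr Iff.rfl rfl rfl
    have hc := Finset.card_filter_add_card_filter_not (s := Finset.Icc 1 n)
      (fun k => |entD (component μ k p) l - (l : ℝ) * a| ≤ (l : ℝ) * ε)
    rw [Nat.card_Icc, Nat.add_sub_cancel] at hc
    have hc' : (((Finset.Icc 1 n).filter fun k =>
            |entD (component μ k p) l - (l : ℝ) * a| ≤ (l : ℝ) * ε).card : ℝ) +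
        (((Finset.Icc 1 n).filter fun k =>
            ¬ |entD (component μ k p) l - (l : ℝ) * a| ≤ (l : ℝ) * ε).card : ℝ) = n := by
      exact_mod_cast hc
    rw [e]
    by_cases hp : p ∈ uuedGood μ a ε l n
    · rw [indicator_of_notMem (by simpa using hp)]
      have : (n : ℝ) * (1 - ε) ≤ _ := hp
      linarith
    · rw [indicator_of_mem (by simpa using hp)]
      have h1 : (0:ℝ) ≤ (((Finset.Icc 1 n).filter fun k =>
            |entD (component μ k p) l - (l : ℝ) * a| ≤ (l : ℝ) * ε).card : ℝ) := Nat.cast_nonneg _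
      have h2 : (0:ℝ) ≤ n * ε := by positivity
      linarith
  have hIntg : ∀ S : Set (Fin 2 → ℝ), MeasurableSet S →
      Integrable (S.indicator (fun _ => (1:ℝ))) μ := fun S hS => (integrable_const 1).indicator hS
  have hgc := (good_meas (μ := μ) a ε l n).compl
  have e1 : ∫ p, ∑ k ∈ Finset.Icc 1 n, (bad μ a ε l k).indicator (fun _ => (1:ℝ)) p ∂μ
      = ∑ k ∈ Finset.Icc 1 n, μ.real (bad μ a ε l k) := by
    rw [integral_finsetSum _ (fun k _ => hIntg _ (bad_meas (μ := μ) a ε l k))]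
    refine Finset.sum_congr rfl fun k _ => ?_
    rw [integral_indicator_const _ (bad_meas (μ := μ) a ε l k), smul_eq_mul, mul_one]
  have e2 : ∫ p, (n * ε + n * (uuedGood μ a ε l n)ᶜ.indicator (fun _ => (1:ℝ)) p) ∂μ
      = n * ε + n * (1 - μ.real (uuedGood μ a ε l n)) := by
    rw [integral_add (integrable_const _) ((hIntg _ hgc).const_mul (n:ℝ)), integral_const_mul,
      integral_const_mul,
      integral_indicator_const _ hgc, smul_eq_mul, mul_one,
      probReal_compl_eq_one_sub (good_meas a ε l n)]
    simp
  have h1 : ∑ k ∈ Finset.Icc 1 n, μ.real (bad μ a ε l k)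
      ≤ n * ε + n * (1 - μ.real (uuedGood μ a ε l n)) := by
    rw [← e1, ← e2]
    exact integral_mono
      (integrable_finsetSum (Finset.Icc 1 n) fun k _ => hIntg _ (bad_meas (μ := μ) a ε l k))
      ((integrable_const (n * ε)).add ((hIntg _ hgc).const_mul (n:ℝ))) hpt
  refine h1.trans ?_
  have : (0:ℝ) ≤ n := Nat.cast_nonneg n
  nlinarith

/-- Along an ultrafilter on which most points are good, bad components are rare on average over the
scales. -/
theorem lam_bad_le (hU : (U : Filter ℕ) ≤ atTop) (a : ℝ) {ε τ : ℝ} {l : ℕ} (hε : 0 ≤ ε)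
    (h : ∀ᶠ n in (U : Filter ℕ), 1 - τ ≤ μ.real (uuedGood μ a ε l n)) :
    lam U (fun k => μ.real (bad μ a ε l k)) ≤ ε + τ := by
  have hbd : Bd (fun k => μ.real (bad μ a ε l k)) := bd_prob _
  rw [← lam_shift hU hbd 1]
  refine lam_le (hbd.shift 1) ?_
  filter_upwards [h, hU (eventually_gt_atTop 0)] with n hn hn0
  unfold avg
  rw [div_le_iff₀ (by exact_mod_cast hn0)]
  have e : ∑ k ∈ Finset.range n, μ.real (bad μ a ε l (k + 1))
      = ∑ k ∈ Finset.Icc 1 n, μ.real (bad μ a ε l k) := by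
    rw [Finset.range_eq_Ico, Finset.sum_Ico_add' (fun k => μ.real (bad μ a ε l k)) 0 n 1]
    refine Finset.sum_congr ?_ fun _ _ => rfl
    ext k; simp only [Finset.mem_Ico, Finset.mem_Icc]; omega
  rw [e]
  linarith [sum_bad_le a hε hn]

/-- The bad points of the system attached to a cell have bad components. -/
theorem badX_le {k0 : ℕ} {j0 : Fin 2 → ℤ} (hD : μ (cel k0 j0) ≠ 0) (hG : 0 < G) {a a' ε : ℝ}
    (ha : a' ≤ a - ε) (l : ℕ) {k : ℕ} (hk : k0 ≤ k) :
    (PP μ (cel k0 j0) G).real (badX (PP μ (cel k0 j0) G)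
      (Xc (xc (cel k0 j0) 0) (xc (cel k0 j0) 1) gc) l a' k)
      ≤ (1 / μ.real (cel k0 j0)) * μ.real (bad μ a ε l k) := by
  have := PP_prob hD hG
  have hDm := cel_meas k0 j0
  calc _ ≤ (PP μ (cel k0 j0) G).real (bad μ a ε l k ×ˢ univ) := by
        refine ENNReal.toReal_mono (measure_ne_top _ _) (measure_mono_ae ?_)
        filter_upwards [PP_ae hD hG hDm, pA_pos_ae (Xp_fm (k0 := k0) (j := j0) hG k)]
          with ω hω hpos hb
        refine ⟨fun hgood => ?_, mem_univ _⟩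
        have hb' : cE (PP μ (cel k0 j0) G) (Xp (cel k0 j0) G k)
            (fun x => lgA (PP μ (cel k0 j0) G) (Xp (cel k0 j0) G k) x
              - lgA (PP μ (cel k0 j0) G) (Xp (cel k0 j0) G (k + l)) x) ω < l * a' := hb
        rw [cE_eq_entD hD hG hk l hω hpos] at hb'
        have h1 := (abs_le.1 hgood).1
        have h2 : (l:ℝ) * a' ≤ l * (a - ε) := by gcongr
        linarith
    _ = (ProbabilityTheory.cond μ (cel k0 j0)).real (bad μ a ε l k) := PP_fst hD hG _
    _ ≤ _ := by
        rw [Measure.real, ProbabilityTheory.cond_apply hDm, ENNReal.toReal_mul, ENNReal.toReal_inv,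
          one_div]
        change (μ.real (cel k0 j0))⁻¹ * μ.real _ ≤ _
        exact mul_le_mul_of_nonneg_left (measureReal_mono inter_subset_right) (by positivity)

theorem lam_badX_le {k0 : ℕ} {j0 : Fin 2 → ℤ} (hD : μ (cel k0 j0) ≠ 0) (hG : 0 < G)
    (hU : (U : Filter ℕ) ≤ atTop) {a a' ε τ : ℝ} {l : ℕ} (hε : 0 ≤ ε) (ha : a' ≤ a - ε)
    (h : ∀ᶠ n in (U : Filter ℕ), 1 - τ ≤ μ.real (uuedGood μ a ε l n)) :
    lam U (fun k => (PP μ (cel k0 j0) G).real (badX (PP μ (cel k0 j0) G)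
      (Xc (xc (cel k0 j0) 0) (xc (cel k0 j0) 1) gc) l a' k)) ≤ (ε + τ) / μ.real (cel k0 j0) := by
  have := PP_prob hD hG
  have hb1 : Bd (fun k => (PP μ (cel k0 j0) G).real (badX (PP μ (cel k0 j0) G)
      (Xc (xc (cel k0 j0) 0) (xc (cel k0 j0) 1) gc) l a' k)) := bd_prob _
  have hb2 : Bd (fun k => μ.real (bad μ a ε l k)) := bd_prob _
  rw [← lam_shift hU hb1 k0]
  calc _ ≤ lam U (fun k => (1 / μ.real (cel k0 j0)) * μ.real (bad μ a ε l (k + k0))) :=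
        lam_mono (hb1.shift k0) ((hb2.shift k0).cmul _)
          (fun k => badX_le hD hG ha l (Nat.le_add_left k0 k))
    _ = (1 / μ.real (cel k0 j0)) * lam U (fun k => μ.real (bad μ a ε l k)) := by
        rw [lam_cmul (hb2.shift k0), lam_shift hU hb2 k0]
    _ ≤ (1 / μ.real (cel k0 j0)) * (ε + τ) := by
        gcongr
        exact lam_bad_le hU a hε h
    _ = _ := by ring

/-- Unwinding the iterated limits in the definition of the upper uniform entropy dimension. -/
theorem extract {a : ℝ} (h : Filter.liminf (fun ε : ℝ =>
        Filter.limsup (fun l : ℕ =>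
            Filter.limsup (fun n : ℕ => (μ (uuedGood μ a ε l n)).toReal) Filter.atTop)
          Filter.atTop)
      (nhdsWithin 0 (Set.Ioi 0)) = 1) {τ : ℝ} (hτ : 0 < τ) (N : ℕ) :
    ∃ ε, 0 < ε ∧ ε < τ ∧ ∃ l, N ≤ l ∧
      ∃ᶠ n in atTop, 1 - τ < μ.real (uuedGood μ a ε l n) := by
  have b1 : ∀ ε l n, 0 ≤ (μ (uuedGood μ a ε l n)).toReal ∧ (μ (uuedGood μ a ε l n)).toReal ≤ 1 :=
    fun ε l n => ⟨ENNReal.toReal_nonneg, measureReal_le_one⟩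
  have key : ∀ u : ℕ → ℝ, (∀ n, 0 ≤ u n ∧ u n ≤ 1) → 0 ≤ limsup u atTop ∧ limsup u atTop ≤ 1 := by
    intro u hu
    have hb : IsBoundedUnder (· ≤ ·) atTop u := isBoundedUnder_of ⟨1, fun n => (hu n).2⟩
    have hb' : IsBoundedUnder (· ≥ ·) atTop u := isBoundedUnder_of ⟨0, fun n => (hu n).1⟩
    exact ⟨le_limsup_of_frequently_le (Frequently.of_forall fun n => (hu n).1) hb,
      limsup_le_of_le hb'.isCoboundedUnder_le (Eventually.of_forall fun n => (hu n).2)⟩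
  have cob : ∀ u : ℕ → ℝ, (∀ n, 0 ≤ u n ∧ u n ≤ 1) → IsCoboundedUnder (· ≤ ·) atTop u := by
    intro u hu
    have hb' : IsBoundedUnder (· ≥ ·) atTop u := isBoundedUnder_of ⟨0, fun n => (hu n).1⟩
    exact hb'.isCoboundedUnder_le
  have b2 := fun ε l => key _ (b1 ε l)
  have b3 := fun ε => key _ (b2 ε)
  have h1 : ∀ᶠ ε in nhdsWithin (0:ℝ) (Ioi 0), 1 - τ < limsup (fun l : ℕ =>
      limsup (fun n : ℕ => (μ (uuedGood μ a ε l n)).toReal) atTop) atTop :=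
    eventually_lt_of_lt_liminf (by rw [h]; linarith)
      (isBoundedUnder_of ⟨0, fun ε => (b3 ε).1⟩)
  have h2 : ∀ᶠ ε in nhdsWithin (0:ℝ) (Ioi 0), ε ∈ Ioo 0 τ := Ioo_mem_nhdsGT hτ
  obtain ⟨ε, hε1, hε2⟩ := (h1.and h2).exists
  refine ⟨ε, hε2.1, hε2.2, ?_⟩
  have h3 := frequently_lt_of_lt_limsup (cob _ (b2 ε)) hε1
  obtain ⟨l, hl1, hl2⟩ := (h3.and_eventually (eventually_ge_atTop N)).exists
  exact ⟨l, hl2, frequently_lt_of_lt_limsup (cob _ (b1 ε l)) hl1⟩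

/-- Countability of the directions in which a fixed cell has a small projection. -/
theorem cell_countable {k0 : ℕ} {j0 : Fin 2 → ℤ} (hD : μ (cel k0 j0) ≠ 0) {a β : ℝ} (ha : 0 ≤ a)
    (h : Filter.liminf (fun ε : ℝ =>
        Filter.limsup (fun l : ℕ =>
            Filter.limsup (fun n : ℕ => (μ (uuedGood μ a ε l n)).toReal) Filter.atTop)
          Filter.atTop)
      (nhdsWithin 0 (Set.Ioi 0)) = 1) (hβ : 0 ≤ β) (hβa : β < min 1 a) :
    {θ : ℝ | ∃ K : Set ℝ, MeasurableSet K ∧ (∀ᶠ n : ℕ in atTop, CovBy K β n) ∧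
      μ.real (cel k0 j0 \ projDir θ ⁻¹' K)
        ≤ (min 1 a - β) / 8 * μ.real (cel k0 j0)}.Countable := by
  set Δ := min 1 a - β with hΔ
  have hΔ0 : 0 < Δ := by rw [hΔ]; linarith
  have hΔ1 : Δ ≤ 1 := by rw [hΔ]; linarith [min_le_left 1 a]
  have hμD : 0 < μ.real (cel k0 j0) := by
    rw [measureReal_def]; exact ENNReal.toReal_pos hD (measure_ne_top _ _)
  set δ := Δ / 2 with hδ
  have hδ0 : 0 < δ := by positivity
  obtain ⟨N, hN⟩ := exists_large 1 ((δ ^ 2 / 80) ^ 2) (by positivity)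
  set G : ℕ := 2 * N + 1 with hGdef
  have hGodd : Odd G := ⟨N, rfl⟩
  have hG : 0 < G := hGodd.pos
  set τ : ℝ := min (Δ / 4) (δ / 12 * μ.real (cel k0 j0)) with hτ
  have hτ0 : 0 < τ := lt_min (by positivity) (by positivity)
  obtain ⟨ε, hε0, hετ, l0, hl0, hfreq⟩ := extract h hτ0 (4 * G)
  have hne : (atTop ⊓ 𝓟 {n : ℕ | 1 - τ < μ.real (uuedGood μ a ε l0 n)}).NeBot :=
    frequently_iff_neBot.1 hfreq
  set U : Ultrafilter ℕ := Ultrafilter.of (atTop ⊓ 𝓟 {n : ℕ | 1 - τ < μ.real (uuedGood μ a ε l0 n)})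
  have hUle := Ultrafilter.of_le (atTop ⊓ 𝓟 {n : ℕ | 1 - τ < μ.real (uuedGood μ a ε l0 n)})
  have hU : (U : Filter ℕ) ≤ atTop := hUle.trans inf_le_left
  have hUg : ∀ᶠ n in (U : Filter ℕ), 1 - τ ≤ μ.real (uuedGood μ a ε l0 n) := by
    have : ∀ᶠ n in (U : Filter ℕ), 1 - τ < μ.real (uuedGood μ a ε l0 n) :=
      (hUle.trans inf_le_right) (mem_principal_self _)
    filter_upwards [this] with n hn using hn.le
  have hε4 : ε ≤ Δ / 4 := hετ.le.trans (min_le_left _ _)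
  set a' := min 1 a - Δ / 4 with ha'
  have ha'1 : a' ≤ a - ε := by rw [ha']; linarith [min_le_right 1 a]
  have := PP_prob (G := G) hD hG
  obtain ⟨B, _, hB⟩ := xc_bdd (G := G) (k := k0) (j := j0)
  have hDm := cel_meas k0 j0
  have hG4 : 4 * (G : ℝ) ≤ 2 ^ l0 := by
    have : l0 < 2 ^ l0 := Nat.lt_two_pow_self
    have h4 : 4 * G ≤ 2 ^ l0 := by omega
    exact_mod_cast h4
  refine core (P := PP μ (cel k0 j0) G) (U := U) (xc_meas hDm 0) (xc_meas hDm 1) gc_meas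
    (hB 0) (hB 1) gc_lt hG hU (a := a') (b := β + 2 * (Δ / 8)) (δ := δ) ?_ ?_ hδ0 ?_ ?_ ?_
    (l0 := l0) (by omega) hG4 ?_ (fun θ u => NM_le hD hDm hGodd θ u) ?_
  · rw [ha']; linarith
  · rw [ha']; linarith [min_le_left 1 a]
  · rw [hδ]; linarith
  · rw [ha', hδ]; linarith
  · exact hN G (by omega)
  · refine (lam_badX_le hD hG hU hε0.le ha'1 hUg).trans ?_
    rw [div_le_iff₀ hμD]
    have : τ ≤ δ / 12 * μ.real (cel k0 j0) := min_le_right _ _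
    linarith
  · rintro θ ⟨K, hK, hcov, hKD⟩
    exact eL_of_cov hD hG hβ (by positivity) hK hcov hKD

theorem projDir_meas (θ : ℝ) : Measurable (projDir θ) := by
  unfold projDir; fun_prop

/-- Union over rational `β` and dyadic cells of the countable sets given by `cell_countable`. -/
theorem main (μ : Measure (Fin 2 → ℝ)) [IsProbabilityMeasure μ] (α : ℝ) (h : HasUUED μ α) :
    {θ : ℝ | packingDimMeas (μ.map (projDir θ)) < min 1 α}.Countable := by
  set S : Set ℝ := {a : ℝ | 0 ≤ a ∧
    Filter.liminf (fun ε : ℝ =>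
        Filter.limsup (fun l : ℕ =>
            Filter.limsup (fun n : ℕ => (μ (uuedGood μ a ε l n)).toReal) Filter.atTop)
          Filter.atTop)
      (nhdsWithin 0 (Set.Ioi 0)) = 1} with hS
  have hα : α = sSup S := h
  choose a haS hqa using fun q : {q : ℚ // 0 ≤ q ∧ ∃ a ∈ S, (q : ℝ) < min 1 a} => q.2.2
  set Θ : {q : ℚ // 0 ≤ q ∧ ∃ a ∈ S, (q : ℝ) < min 1 a} → ℕ → (Fin 2 → ℤ) → Set ℝ := fun q k j =>
    {θ : ℝ | μ (cel k j) ≠ 0 ∧ ∃ K : Set ℝ, MeasurableSet K ∧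
      (∀ᶠ n : ℕ in atTop, CovBy K (q.1 : ℝ) n) ∧ μ.real (cel k j \ projDir θ ⁻¹' K)
        ≤ (min 1 (a q) - (q.1 : ℝ)) / 8 * μ.real (cel k j)} with hΘ
  have hcount : (⋃ q, ⋃ k, ⋃ j, Θ q k j).Countable := by
    refine countable_iUnion fun q => countable_iUnion fun k => countable_iUnion fun j => ?_
    by_cases hD : μ (cel k j) = 0
    · refine Set.Countable.mono (s₂ := ∅) ?_ countable_empty
      rintro θ ⟨h0, _⟩
      exact h0 hD
    · refine (cell_countable (β := (q.1 : ℝ)) hD (haS q).1 (haS q).2 ?_ (hqa q)).mono ?_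
      · exact_mod_cast q.2.1
      · rintro θ ⟨_, hθ⟩
        exact hθ
  refine hcount.mono fun θ hθ => ?_
  have hm := projDir_meas θ
  have : IsProbabilityMeasure (μ.map (projDir θ)) := Measure.isProbabilityMeasure_map hm.aemeasurable
  have h0 := packingDimMeas_nonneg (μ.map (projDir θ))
  obtain ⟨β, hβ1, hβ2⟩ := exists_rat_btwn (show packingDimMeas (μ.map (projDir θ)) < min 1 α from hθ)
  have hβ0 : (0:ℝ) ≤ (β : ℝ) := h0.trans hβ1.le
  have hβα : (β : ℝ) < α := hβ2.trans_le (min_le_right _ _)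
  have hne : S.Nonempty := by
    by_contra hc
    rw [Set.not_nonempty_iff_eq_empty] at hc
    rw [hα, hc, Real.sSup_empty] at hβα
    linarith
  obtain ⟨a0, ha0, hβa0⟩ := exists_lt_of_lt_csSup hne (hα ▸ hβα)
  set q : {q : ℚ // 0 ≤ q ∧ ∃ a ∈ S, (q : ℝ) < min 1 a} :=
    ⟨β, by exact_mod_cast hβ0, a0, ha0, lt_min (hβ2.trans_le (min_le_left _ _)) hβa0⟩ with hq
  obtain ⟨K, hKc, hK0, hcov⟩ := exists_cov hβ1
  have hKm := hKc.measurableSet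
  rw [Measure.map_apply hm hKm] at hK0
  have hc0 : 0 < (min 1 (a q) - (q.1 : ℝ)) / 8 := by have := hqa q; linarith
  obtain ⟨k, j, hpos, hle⟩ := exists_cell μ (hm hKm) hK0
    (ε := ENNReal.ofReal ((min 1 (a q) - (q.1 : ℝ)) / 8)) (by simpa using hc0)
  refine mem_iUnion.2 ⟨q, mem_iUnion.2 ⟨k, mem_iUnion.2 ⟨j, hpos.ne', K, hKm, hcov, ?_⟩⟩⟩
  have := ENNReal.toReal_mono (ENNReal.mul_ne_top ENNReal.ofReal_ne_top (measure_ne_top _ _)) hle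
  rwa [ENNReal.toReal_mul, ENNReal.toReal_ofReal hc0.le] at this

end
end UUED

/-- for a planar probability measure with upper uniform entropy dimension `α`,
the set of directions where the packing dimension of the projection drops below `min(1, α)`
is at most countable. -/
theorem stmt4 (μ : Measure (Fin 2 → ℝ)) (hμ : IsProbabilityMeasure μ)
    (α : ℝ) (h : HasUUED μ α) :
    {θ : ℝ | packingDimMeas (μ.map (projDir θ)) < min 1 α}.Countable := by
  exact UUED.main μ α h

end
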